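/- arXiv:1006.0590 — 3 statements merged into one kernel-verified Lean document; each statement's English description precedes it below -/
import Mathlib

section
/- For every α > 0 there exists an integer n₀ = n₀(α) such that every oriented graph G of order n ≥ n₀ satisfying d⁺(x) + d⁻(y) ≥ (3/4 + α)n for every ordered pair of distinct vertices x, y for which G contains no edge from x to y, contains a Hamilton cycle. -/
/-- The outdegree of a vertex `x` in the digraph with adjacency relation `G`. -/
noncomputable def outDeg {V : Type*} (G : V → V → Prop) (x : V) : ℕ :=
  Nat.card {y : V // G x y}

/-- The indegree of a vertex `x` in the digraph with adjacency relation `G`. -/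
noncomputable def inDeg {V : Type*} (G : V → V → Prop) (x : V) : ℕ :=
  Nat.card {y : V // G y x}

/-- An oriented graph: no loops and no 2-cycles. -/
def IsOriented {V : Type*} (G : V → V → Prop) : Prop :=
  ∀ x y : V, G x y → ¬ G y x

/-- `f` is a Hamilton cycle of the digraph `G`. -/
def IsHamCycle {V : Type*} [Fintype V] (G : V → V → Prop)
    (f : ZMod (Fintype.card V) → V) : Prop :=
  Function.Bijective f ∧ ∀ i, G (f i) (f (i + 1))

/-!
The Ore condition makes `G` a robust outexpander in both directions: if the robust neighbourhood
`R` of `S` were not larger than `S`, then counting the non-edges between a large part of `S` and a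
large part of the complement of `R` would contradict it. In a robust outexpander any two vertices
are joined by many short paths, so one can set aside a short path able to absorb any small set of
vertices, together with a small random-like reservoir through which any few pairs of vertices can
be linked. What remains still contains a nearly spanning regular subdigraph; balanced colourings
of the vertices turn it into a cover of almost all vertices by few long paths. Linking these paths
through the reservoir closes a cycle containing the absorbing path, which then swallows everything
missed.
-/

/-- `DiPath G a b X`: some directed path of `G` from `a` to `b` has vertex set `X`. The order of the
vertices is forgotten, since only the ends and the vertex set of a path matter for joining paths. -/
inductive DiPath {V : Type*} (G : V → V → Prop) : V → V → Finset V → Prop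
  | single (a : V) : DiPath G a a {a}
  | cons {a a' b : V} {X : Finset V} (h : a ∉ X) :
      G a a' → DiPath G a' b X → DiPath G a b (Finset.cons a X h)

namespace DiPath

open Finset
open scoped Classical

variable {V : Type*} {G : V → V → Prop} {a b c d : V} {X Y : Finset V}

theorem start_mem (h : DiPath G a b X) : a ∈ X := by
  cases h <;> simp

theorem append (h : DiPath G a b X) (h' : DiPath G c d Y) (hbc : G b c) (hXY : Disjoint X Y) :
    DiPath G a d (X ∪ Y) := by
  induction h with
  | single a =>
    have ha : a ∉ Y := by simpa using hXY
    simpa only [cons_eq_insert, ← insert_eq] using DiPath.cons ha hbc h'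
  | @cons a a' b X ha hG _ ih =>
    rw [cons_eq_insert, disjoint_insert_left] at hXY
    have haXY : a ∉ X ∪ Y := by simp [ha, hXY.1]
    simpa only [cons_eq_insert, insert_union] using DiPath.cons haXY hG (ih hbc hXY.2)

theorem exists_succ (h : DiPath G a b X) {x : V} (hx : x ∈ X) (hxb : x ≠ b) : ∃ y, G x y := by
  induction h with
  | single => simp_all
  | cons _ hG _ ih =>
    rcases mem_cons.1 hx with rfl | hx
    · exact ⟨_, hG⟩
    · exact ih hx hxb

theorem exists_pred (h : DiPath G a b X) {x : V} (hx : x ∈ X) (hxa : x ≠ a) : ∃ y, G y x := by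
  induction h with
  | single => simp_all
  | @cons a a' _ X _ hG _ ih =>
    rcases mem_cons.1 hx with rfl | hx
    · exact absurd rfl hxa
    · by_cases hxa' : x = a'
      · exact ⟨a, hxa' ▸ hG⟩
      · exact ih hx hxa'

theorem mono {G' : V → V → Prop} (hG : ∀ x y, G x y → G' x y) (h : DiPath G a b X) :
    DiPath G' a b X := by
  induction h with
  | single a => exact .single a
  | cons ha haa' _ ih => exact .cons ha (hG _ _ haa') ih

theorem map {W : Type*} {G' : W → W → Prop} (f : V ↪ W) (hG : ∀ x y, G x y → G' (f x) (f y))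
    (h : DiPath G a b X) : DiPath G' (f a) (f b) (X.map f) := by
  induction h with
  | single a => simpa using DiPath.single (f a)
  | cons _ haa' _ ih =>
    rw [map_cons]
    exact .cons _ (hG _ _ haa') ih

theorem monotone_of_edge_lt {f : V → ℕ} (hf : ∀ x y, G x y → f x < f y) (h : DiPath G a b X) :
    f a ≤ f b := by
  induction h with
  | single => rfl
  | cons _ hG _ ih => exact (hf _ _ hG).le.trans ih

theorem exists_enum (h : DiPath G a b X) : ∃ g : ℕ → V, g 0 = a ∧ g (#X - 1) = b ∧
    Set.InjOn g {i | i < #X} ∧ (∀ i < #X, g i ∈ X) ∧ ∀ i, i + 1 < #X → G (g i) (g (i + 1)) := by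
  induction h with
  | single a => exact ⟨fun _ => a, by simp [Set.InjOn]⟩
  | @cons a a' b X ha hG hp ih =>
    obtain ⟨g, hg_zero, hg_last, hinj, hmem, hstep⟩ := ih
    obtain ⟨k, hk⟩ := Nat.exists_eq_add_one.2 (card_pos.2 ⟨_, hp.start_mem⟩)
    have hne : ∀ i < #X, g i ≠ a := fun i hi h => ha (h ▸ hmem i hi)
    simp only [card_cons]
    refine ⟨fun i => Nat.casesOn i a g, rfl, ?_, ?_, ?_, ?_⟩
    · simpa [hk] using hg_last
    · rintro (_ | i) hi (_ | j) hj hij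
      · rfl
      · exact absurd hij.symm (hne j (Nat.succ_lt_succ_iff.1 hj))
      · exact absurd hij (hne i (Nat.succ_lt_succ_iff.1 hi))
      · rw [hinj (Nat.succ_lt_succ_iff.1 hi) (Nat.succ_lt_succ_iff.1 hj) hij]
    · rintro (_ | i) hi
      · simp
      · simp [hmem i (Nat.succ_lt_succ_iff.1 hi)]
    · rintro (_ | i) hi
      · simpa [hg_zero] using hG
      · exact hstep i (Nat.succ_lt_succ_iff.1 hi)

theorem exists_isHamCycle [Fintype V] (h : DiPath G a b univ) (hba : G b a) :
    ∃ f : ZMod (Fintype.card V) → V, IsHamCycle G f := by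
  obtain ⟨g, hg_zero, hg_last, hinj, -, hstep⟩ := h.exists_enum
  simp only [card_univ] at hg_last hinj hstep
  have hpos : 0 < Fintype.card V := Fintype.card_pos_iff.2 ⟨a⟩
  have : NeZero (Fintype.card V) := ⟨hpos.ne'⟩
  refine ⟨fun i => g i.val, ?_, fun i => ?_⟩
  · rw [Fintype.bijective_iff_injective_and_card]
    exact ⟨fun i j hij => ZMod.val_injective _ (hinj (ZMod.val_lt i) (ZMod.val_lt j) hij),
      ZMod.card _⟩
  · obtain ⟨k, hk, rfl⟩ : ∃ k < Fintype.card V, (k : ZMod (Fintype.card V)) = i :=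
      ⟨i.val, ZMod.val_lt i, ZMod.natCast_zmod_val i⟩
    beta_reduce
    rw [ZMod.val_cast_of_lt hk, ← Nat.cast_add_one]
    rcases (Nat.succ_le_of_lt hk).lt_or_eq with hk' | hk'
    · rw [ZMod.val_cast_of_lt hk']
      exact hstep k hk'
    · rw [← Nat.succ_eq_add_one, hk', ZMod.natCast_self, ZMod.val_zero, hg_zero,
        show k = Fintype.card V - 1 by omega, hg_last]
      exact hba

end DiPath

section RobustExpanders

open Finset
open scoped Classical

variable {V : Type*} {G : V → V → Prop}

/-- The edge relation of `G`, or of its reverse when `s = false`. -/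
def dirEdge (G : V → V → Prop) (s : Bool) (x y : V) : Prop :=
  if s then G x y else G y x

theorem dirEdge_not {s : Bool} {x y : V} : dirEdge G (!s) x y ↔ dirEdge G s y x := by
  cases s <;> simp [dirEdge]

variable [Fintype V]

/-- The outneighbourhood of `x` in `G`, or its inneighbourhood when `s = false`. -/
noncomputable def nhd (G : V → V → Prop) (s : Bool) (x : V) : Finset V :=
  {y | dirEdge G s x y}

@[simp]
theorem mem_nhd {s : Bool} {x y : V} : y ∈ nhd G s x ↔ dirEdge G s x y := by
  simp [nhd]

theorem mem_nhd_not_comm {s : Bool} {x y : V} : y ∈ nhd G (!s) x ↔ x ∈ nhd G s y := by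
  simp [dirEdge_not]

theorem outDeg_eq_card_nhd (x : V) : outDeg G x = #(nhd G true x) := by
  simp [outDeg, nhd, dirEdge, Fintype.card_subtype]

theorem inDeg_eq_card_nhd (x : V) : inDeg G x = #(nhd G false x) := by
  simp [inDeg, nhd, dirEdge, Fintype.card_subtype]

/-- The robust `s`-neighbourhood of `S`: the vertices reached from at least `ν * |V|` vertices
of `S` by an edge in direction `s`. -/
noncomputable def robustNhd (G : V → V → Prop) (s : Bool) (ν : ℝ) (S : Finset V) : Finset V :=
  {y | ν * Fintype.card V ≤ #(S ∩ nhd G (!s) y)}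

theorem mem_robustNhd {s : Bool} {ν : ℝ} {S : Finset V} {y : V} :
    y ∈ robustNhd G s ν S ↔ ν * Fintype.card V ≤ #(S ∩ nhd G (!s) y) := by
  simp [robustNhd]

/-- A robust `(ν, τ)`-expander in the sense of Kühn and Osthus, for both directions, with minimum
semidegree at least `δ * |V|`. The inequality `ν + τ ≤ δ` makes sets with more than
`(1 - τ) * |V|` vertices reach every vertex robustly. -/
structure IsRobustExpander (G : V → V → Prop) (ν τ δ : ℝ) : Prop where
  nonneg : 0 ≤ τ
  add_le : ν + τ ≤ δ
  degree (s : Bool) (x : V) : δ * Fintype.card V ≤ #(nhd G s x)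
  expand (s : Bool) (S : Finset V) : τ * Fintype.card V ≤ #S → #S ≤ (1 - τ) * Fintype.card V →
    #S + ν * Fintype.card V ≤ #(robustNhd G s ν S)

theorem card_add_card_le_card_inter_add (S T : Finset V) :
    (#S + #T : ℝ) ≤ #(S ∩ T) + Fintype.card V := by
  rw [← Nat.cast_add, ← card_inter_add_card_union]
  exact_mod_cast Nat.add_le_add_left (card_le_univ _) _

theorem card_subtype_notMem_add_card (S : Finset V) :
    (Fintype.card {x // x ∉ S} : ℝ) + #S = Fintype.card V := by
  rw [Fintype.card_subtype_compl, Fintype.card_coe, Nat.cast_sub (card_le_univ S)]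
  ring

theorem map_subtype_nhd {S : Finset V} (s : Bool) (x : {x // x ∉ S}) :
    (nhd (fun x y : {x // x ∉ S} => G x y) s x).map (.subtype _) = nhd G s x \ S := by
  ext y
  simp [dirEdge, and_comm]

theorem robustNhd_map_subtype_sdiff_subset {ν ν' : ℝ} (hν : 0 ≤ ν) (hν' : ν' ≤ ν) {s : Bool}
    {S : Finset V} {T : Finset {x // x ∉ S}} :
    robustNhd G s ν (T.map (.subtype _)) \ S ⊆
      (robustNhd (fun x y : {x // x ∉ S} => G x y) s ν' T).map (.subtype _) := by
  intro y hy
  obtain ⟨hy, hyS⟩ := mem_sdiff.1 hy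
  refine mem_map.2 ⟨⟨y, hyS⟩, mem_robustNhd.2 ?_, rfl⟩
  have hcard : (Fintype.card {x // x ∉ S} : ℝ) ≤ Fintype.card V := by
    exact_mod_cast Fintype.card_subtype_le _
  have hinter : T.map (.subtype _) ∩ nhd G (!s) y =
      (T ∩ nhd (fun x y : {x // x ∉ S} => G x y) (!s) ⟨y, hyS⟩).map (.subtype _) := by
    rw [map_inter, map_subtype_nhd]
    ext x
    simp +contextual
  calc ν' * Fintype.card {x // x ∉ S} ≤ ν * Fintype.card V := by gcongr
    _ ≤ #(T.map (.subtype _) ∩ nhd G (!s) y) := mem_robustNhd.1 hy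
    _ = _ := by rw [hinter, card_map]; congr!

namespace IsRobustExpander

variable {ν τ δ : ℝ}

theorem le_one [Nonempty V] (hG : IsRobustExpander G ν τ δ) : δ ≤ 1 := by
  obtain ⟨x⟩ := ‹Nonempty V›
  have hpos : (0 : ℝ) < Fintype.card V := by exact_mod_cast Fintype.card_pos_iff.2 ⟨x⟩
  have hcard : (#(nhd G true x) : ℝ) ≤ Fintype.card V := by exact_mod_cast card_le_univ _
  exact le_of_mul_le_mul_right (((hG.degree true x).trans hcard).trans_eq (one_mul _).symm) hpos

theorem robustNhd_eq_univ (hG : IsRobustExpander G ν τ δ) (s : Bool) {S : Finset V}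
    (hS : (1 - τ) * Fintype.card V ≤ #S) : robustNhd G s ν S = univ := by
  refine eq_univ_of_forall fun y => mem_robustNhd.2 ?_
  have hy := hG.degree (!s) y
  have hcap := card_add_card_le_card_inter_add S (nhd G (!s) y)
  have hadd := mul_le_mul_of_nonneg_right hG.add_le (Nat.cast_nonneg (α := ℝ) (Fintype.card V))
  linarith

theorem induce [Nonempty V] (hν : 0 < ν) (hG : IsRobustExpander G ν τ δ) {S : Finset V}
    (hS : #S ≤ ν / 4 * Fintype.card V) :
    IsRobustExpander (fun x y : {x // x ∉ S} => G x y) (ν / 2) (τ + ν / 4) (δ - ν / 4) := by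
  have hadd := hG.add_le
  have hτ := hG.nonneg
  have hδ := hG.le_one
  have hcard := card_subtype_notMem_add_card S
  have : (Fintype.card {x // x ∉ S} : ℝ) ≤ Fintype.card V := by
    linarith [Nat.cast_nonneg (α := ℝ) #S]
  have card_le_sdiff (T : Finset V) : (#T : ℝ) ≤ #(T \ S) + ν / 4 * Fintype.card V := by
    have hT : (#T : ℝ) ≤ #(T \ S) + #S := by exact_mod_cast card_le_card_sdiff_add_card
    linarith
  refine ⟨by linarith, by linarith, fun s x => ?_, fun s T hT hT' => ?_⟩
  · have hdeg := (hG.degree s x).trans (card_le_sdiff _)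
    rw [← map_subtype_nhd, card_map] at hdeg
    nlinarith
  · have hT_ge : τ * Fintype.card V ≤ #T := by nlinarith
    have hT_le : #T ≤ (1 - τ) * Fintype.card V := by nlinarith
    have hexp := hG.expand s (T.map (.subtype _)) (by simpa using hT_ge) (by simpa using hT_le)
    have hsub := card_le_card (robustNhd_map_subtype_sdiff_subset (G := G) (s := s) (T := T)
      hν.le (half_le_self hν.le))
    rw [card_map] at hexp hsub
    have hsub' : (#(robustNhd G s ν (T.map (.subtype _)) \ S) : ℝ) ≤ _ := Nat.cast_le.2 hsub
    nlinarith [card_le_sdiff (robustNhd G s ν (T.map (.subtype _)))]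

end IsRobustExpander

end RobustExpanders

section Walks

open Finset
open scoped Classical

variable {V : Type*} [Fintype V] {G : V → V → Prop} {ν τ δ : ℝ} {s : ℕ → Bool} {u y : V} {j : ℕ}
  {l : List V}

/-- The walks from `u` to `y` with `j + 1` steps, the `i`-th step being forward if `s i = true` and
backward otherwise. A walk is recorded as the list of its interior vertices, in reverse order. -/
noncomputable def walks (G : V → V → Prop) (s : ℕ → Bool) (u : V) : ℕ → V → Finset (List V)
  | 0, y => if dirEdge G (s 0) u y then {[]} else ∅
  | j + 1, y => (nhd G (!s (j + 1)) y).biUnion fun z => (walks G s u j z).image (List.cons z)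

theorem mem_walks_zero : l ∈ walks G s u 0 y ↔ l = [] ∧ dirEdge G (s 0) u y := by
  by_cases h : dirEdge G (s 0) u y <;> simp [walks, h]

theorem mem_walks_succ : l ∈ walks G s u (j + 1) y ↔
    ∃ z l', l = z :: l' ∧ dirEdge G (s (j + 1)) z y ∧ l' ∈ walks G s u j z := by
  simp only [walks, mem_biUnion, mem_nhd, dirEdge_not, mem_image]
  constructor
  · rintro ⟨z, hz, l', hl', rfl⟩
    exact ⟨z, l', rfl, hz, hl'⟩
  · rintro ⟨z, l', rfl, hz, hl'⟩
    exact ⟨z, hz, l', hl', rfl⟩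

theorem length_of_mem_walks (h : l ∈ walks G s u j y) : l.length = j := by
  induction j generalizing l y with
  | zero => simp [(mem_walks_zero.1 h).1]
  | succ j ih =>
    obtain ⟨z, l', rfl, -, hl'⟩ := mem_walks_succ.1 h
    simp [ih hl']

theorem card_walks_succ :
    #(walks G s u (j + 1) y) = ∑ z ∈ nhd G (!s (j + 1)) y, #(walks G s u j z) := by
  rw [walks, card_biUnion]
  · exact sum_congr rfl fun z _ => card_image_of_injective _ List.cons_injective
  · intro z _ z' _ hzz'
    simp only [Function.onFun, disjoint_left, mem_image]
    rintro _ ⟨l, -, rfl⟩ ⟨l', -, hl'⟩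
    exact hzz' (List.cons.inj hl').1.symm

theorem mul_le_card_walks_succ {A : Finset V} {b m : ℝ} (hm : 0 ≤ m)
    (hA : ∀ z ∈ A, m ≤ #(walks G s u j z)) (hb : b ≤ #(A ∩ nhd G (!s (j + 1)) y)) :
    b * m ≤ #(walks G s u (j + 1) y) := by
  rw [card_walks_succ, Nat.cast_sum]
  calc b * m ≤ #(A ∩ nhd G (!s (j + 1)) y) * m := by gcongr
    _ = ∑ _z ∈ A ∩ nhd G (!s (j + 1)) y, m := by simp
    _ ≤ ∑ z ∈ A ∩ nhd G (!s (j + 1)) y, (#(walks G s u j z) : ℝ) :=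
      sum_le_sum fun z hz => hA z (mem_inter.1 hz).1
    _ ≤ _ := sum_le_sum_of_subset_of_nonneg inter_subset_right fun _ _ _ => by positivity

/-- The endpoints of at least `(ν * |V|) ^ j` walks of length `j + 1` from `u`. -/
noncomputable def richEndpoints (G : V → V → Prop) (ν : ℝ) (s : ℕ → Bool) (u : V) (j : ℕ) :
    Finset V :=
  {y | (ν * Fintype.card V) ^ j ≤ (#(walks G s u j y) : ℝ)}

theorem mem_richEndpoints :
    y ∈ richEndpoints G ν s u j ↔ (ν * Fintype.card V) ^ j ≤ (#(walks G s u j y) : ℝ) := by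
  simp [richEndpoints]

theorem nhd_subset_richEndpoints_zero : nhd G (s 0) u ⊆ richEndpoints G ν s u 0 := by
  intro y hy
  simp [mem_richEndpoints, walks, mem_nhd.1 hy]

theorem robustNhd_richEndpoints_subset (hν : 0 ≤ ν) :
    robustNhd G (s (j + 1)) ν (richEndpoints G ν s u j) ⊆ richEndpoints G ν s u (j + 1) := by
  intro y hy
  rw [mem_richEndpoints, pow_succ']
  exact mul_le_card_walks_succ (by positivity) (fun z hz => mem_richEndpoints.1 hz)
    (mem_robustNhd.1 hy)

namespace IsRobustExpander

theorem card_richEndpoints_ge (hν : 0 ≤ ν) (hG : IsRobustExpander G ν τ δ) (s : ℕ → Bool) (u : V)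
    (j : ℕ) : min (δ * Fintype.card V + j * (ν * Fintype.card V)) ((1 - τ) * Fintype.card V) ≤
      #(richEndpoints G ν s u j) := by
  have hτ := hG.nonneg
  have hτδ : τ ≤ δ := by linarith [hG.add_le]
  induction j with
  | zero =>
    refine (min_le_left _ _).trans ?_
    rw [Nat.cast_zero, zero_mul, add_zero]
    exact (hG.degree (s 0) u).trans (Nat.cast_le.2 (card_le_card nhd_subset_richEndpoints_zero))
  | succ j ih =>
    have hsub : (#(robustNhd G (s (j + 1)) ν (richEndpoints G ν s u j)) : ℝ) ≤ _ :=
      Nat.cast_le.2 (card_le_card (robustNhd_richEndpoints_subset hν))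
    refine le_trans ?_ hsub
    rcases le_or_gt ((1 - τ) * Fintype.card V) (#(richEndpoints G ν s u j) : ℝ) with hlarge | hsmall
    · rw [hG.robustNhd_eq_univ _ hlarge, card_univ]
      refine (min_le_right _ _).trans (mul_le_of_le_one_left (Nat.cast_nonneg _) (by linarith))
    · have hrich := (min_le_iff.1 ih).resolve_right hsmall.not_ge
      have hrich_ge : τ * Fintype.card V ≤ #(richEndpoints G ν s u j) :=
        calc τ * Fintype.card V ≤ δ * Fintype.card V := by gcongr
          _ ≤ δ * Fintype.card V + j * (ν * Fintype.card V) :=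
            le_add_of_nonneg_right (by positivity)
          _ ≤ _ := hrich
      refine (min_le_left _ _).trans (le_trans ?_ (hG.expand (s (j + 1)) _ hrich_ge hsmall.le))
      push_cast
      linarith

theorem card_walks_ge (hν : 0 ≤ ν) (hG : IsRobustExpander G ν τ δ) (s : ℕ → Bool) (u v : V) {j : ℕ}
    (hj : 1 ≤ j * ν) : (ν * Fintype.card V) ^ (j + 1) ≤ (#(walks G s u (j + 1) v) : ℝ) := by
  have hτ := hG.nonneg
  have hδ : 0 ≤ δ := by linarith [hG.add_le]
  have hlarge : (1 - τ) * Fintype.card V ≤ #(richEndpoints G ν s u j) := by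
    refine le_trans (le_min ?_ le_rfl) (hG.card_richEndpoints_ge hν s u j)
    calc (1 - τ) * Fintype.card V ≤ (δ + j * ν) * Fintype.card V := by gcongr; linarith
      _ = _ := by ring
  have hv : v ∈ robustNhd G (s (j + 1)) ν (richEndpoints G ν s u j) := by
    simp [hG.robustNhd_eq_univ _ hlarge]
  exact mem_richEndpoints.1 (robustNhd_richEndpoints_subset hν hv)

end IsRobustExpander

end Walks

section Packings

open Finset Filter
open scoped Classical

universe u v

/-- A list without repetitions that avoids the vertices in `F`. -/
def IsFresh {V : Type*} (F : Finset V) (l : List V) : Prop :=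
  l.Nodup ∧ Disjoint l.toFinset F

/-- A family of pairwise disjoint lists, each without repetitions and avoiding `F`. -/
structure IsPacking {V : Type*} (F : Finset V) (T : Finset (List V)) : Prop where
  isFresh : ∀ l ∈ T, IsFresh F l
  disjoint : (T : Set (List V)).PairwiseDisjoint List.toFinset

section Fresh

variable {V : Type*} {F : Finset V}

theorem isFresh_nil : IsFresh F [] := by
  simp [IsFresh]

theorem isFresh_cons {x : V} {l : List V} :
    IsFresh F (x :: l) ↔ x ∉ F ∧ IsFresh (insert x F) l := by
  simp only [IsFresh, List.nodup_cons, List.toFinset_cons, disjoint_insert_left,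
    disjoint_insert_right, List.mem_toFinset]
  tauto

theorem isFresh_append {l l' : List V} :
    IsFresh F (l ++ l') ↔ IsFresh F l ∧ IsFresh (F ∪ l.toFinset) l' := by
  simp only [IsFresh, List.nodup_append', List.toFinset_append, disjoint_union_left,
    disjoint_union_right, List.disjoint_toFinset_iff_disjoint, List.disjoint_comm (l₁ := l')]
  tauto

theorem IsPacking.insert {T : Finset (List V)} {l : List V} (hT : IsPacking F T)
    (hl : IsFresh (F ∪ T.biUnion List.toFinset) l) : IsPacking F (insert l T) := by
  obtain ⟨hnodup, hdisj⟩ := hl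
  rw [disjoint_union_right, disjoint_biUnion_right] at hdisj
  constructor
  · rw [forall_mem_insert]
    exact ⟨⟨hnodup, hdisj.1⟩, hT.isFresh⟩
  · rw [coe_insert]
    exact hT.disjoint.insert fun l' hl' _ => hdisj.2 l' hl'

theorem IsPacking.of_insert {T : Finset (List V)} {l : List V} (hl : l ∉ T)
    (h : IsPacking F (Insert.insert l T)) : IsFresh F l ∧ IsPacking (F ∪ l.toFinset) T := by
  obtain ⟨hfresh, hdisj⟩ := h
  rw [forall_mem_insert] at hfresh
  rw [coe_insert, Set.pairwiseDisjoint_insert_of_notMem (by exact_mod_cast hl)] at hdisj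
  exact ⟨hfresh.1, fun l' hl' => ⟨(hfresh.2 l' hl').1,
    disjoint_union_right.2 ⟨(hfresh.2 l' hl').2, (hdisj.2 l' hl').symm⟩⟩, hdisj.1⟩

theorem IsFresh.notMem {T : Finset (List V)} {l : List V} (hl : l ≠ [])
    (hfresh : IsFresh (F ∪ T.biUnion List.toFinset) l) : l ∉ T := by
  intro hlT
  have hsub : l.toFinset ⊆ F ∪ T.biUnion List.toFinset :=
    (subset_biUnion_of_mem List.toFinset hlT).trans subset_union_right
  exact hl (List.toFinset_eq_empty_iff _ |>.1 (disjoint_self.1 (hfresh.2.mono_right hsub)))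

end Fresh

section Counting

variable {V : Type*} [Fintype V] {K : ℕ} {F : Finset V} {D : Finset (List V)}

theorem card_le_pow_of_length_eq (hD : ∀ l ∈ D, l.length = K) : #D ≤ Fintype.card V ^ K := by
  rw [← card_vector K, ← Fintype.card_coe]
  exact Fintype.card_le_of_injective (fun l => (⟨l.1, hD l.1 l.2⟩ : List.Vector V K))
    fun l l' h => Subtype.ext (congrArg List.Vector.toList h)

theorem le_one_of_mul_pow_le_card {c : ℝ} (hV : 0 < Fintype.card V) (hD : ∀ l ∈ D, l.length = K)
    (hcard : c * (Fintype.card V : ℝ) ^ K ≤ #D) : c ≤ 1 := by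
  have hpos : (0 : ℝ) < (Fintype.card V : ℝ) ^ K := by positivity
  have hle : (#D : ℝ) ≤ 1 * (Fintype.card V : ℝ) ^ K := by
    rw [one_mul]
    exact_mod_cast card_le_pow_of_length_eq hD
  exact le_of_mul_le_mul_right (hcard.trans hle) hpos

theorem card_le_sum_card_preimage_cons (hD : ∀ l ∈ D, l ≠ []) :
    #D ≤ ∑ x, #(D.preimage (List.cons x) List.cons_injective.injOn) := by
  have hsub : D ⊆ univ.biUnion fun x =>
      (D.preimage (List.cons x) List.cons_injective.injOn).image (List.cons x) := by
    intro l hl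
    obtain ⟨x, l, rfl⟩ := List.exists_cons_of_ne_nil (hD l hl)
    simpa using hl
  exact (card_le_card hsub).trans (card_biUnion_le.trans (sum_le_sum fun x _ => card_image_le))

theorem card_mul_card_le_of_not_isFresh (hD : ∀ l ∈ D, l.length = K)
    (hbad : ∀ l ∈ D, ¬ IsFresh F l) :
    #D * Fintype.card V ≤ K * (#F + K) * Fintype.card V ^ K := by
  induction K generalizing F D with
  | zero =>
    have : D = ∅ := eq_empty_of_forall_notMem fun l hl =>
      hbad l hl (List.length_eq_zero_iff.1 (hD l hl) ▸ isFresh_nil)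
    simp [this]
  | succ K ih =>
    set n := Fintype.card V
    let E (x : V) : Finset (List V) := D.preimage (List.cons x) List.cons_injective.injOn
    have mem_E {x : V} {l : List V} : l ∈ E x ↔ x :: l ∈ D := mem_preimage
    have length_E (x : V) : ∀ l ∈ E x, l.length = K := fun l hl => by
      simpa using hD _ (mem_E.1 hl)
    have card_E (x : V) :
        #(E x) * n ≤ (if x ∈ F then n ^ (K + 1) else 0) + K * (#F + 1 + K) * n ^ K := by
      split_ifs with hx
      · exact (Nat.mul_le_mul_right n (card_le_pow_of_length_eq (length_E x))).trans
          (Nat.le_add_right _ _)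
      · rw [zero_add, ← card_insert_of_notMem hx]
        exact ih (length_E x) fun l hl hfresh =>
          hbad _ (mem_E.1 hl) (isFresh_cons.2 ⟨hx, hfresh⟩)
    have hcard : #D ≤ ∑ x, #(E x) :=
      card_le_sum_card_preimage_cons fun l hl => by
        rintro rfl
        simpa using hD _ hl
    calc #D * n ≤ ∑ x, #(E x) * n := by
          rw [← sum_mul]
          exact Nat.mul_le_mul_right n hcard
      _ ≤ ∑ x, ((if x ∈ F then n ^ (K + 1) else 0) + K * (#F + 1 + K) * n ^ K) :=
          sum_le_sum fun x _ => card_E x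
      _ = #F * n ^ (K + 1) + n * (K * (#F + 1 + K) * n ^ K) := by
          rw [sum_add_distrib, ← sum_filter]
          simp [n]
      _ = (#F + K * (#F + (K + 1))) * n ^ (K + 1) := by ring
      _ ≤ (K + 1) * (#F + (K + 1)) * n ^ (K + 1) := by
          gcongr
          linarith

theorem card_filter_isFresh_ge {c : ℝ} (hK : 1 ≤ K) (hV : 0 < Fintype.card V)
    (hD : ∀ l ∈ D, l.length = K) (hcard : c * (Fintype.card V : ℝ) ^ K ≤ #D)
    (hF : #F + K ≤ c / (2 * K) * Fintype.card V) :
    c / 2 * (Fintype.card V : ℝ) ^ K ≤ #{l ∈ D | IsFresh F l} := by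
  have hn : (0 : ℝ) < Fintype.card V := by exact_mod_cast hV
  have : (0 : ℝ) < K := by exact_mod_cast hK
  have hsplit : (#{l ∈ D | IsFresh F l} : ℝ) + #{l ∈ D | ¬ IsFresh F l} = #D := by
    exact_mod_cast card_filter_add_card_filter_not (IsFresh F)
  have hbad : (#{l ∈ D | ¬ IsFresh F l} : ℝ) * Fintype.card V ≤
      K * (#F + K) * (Fintype.card V : ℝ) ^ K := by
    exact_mod_cast card_mul_card_le_of_not_isFresh (fun l hl => hD l (mem_filter.1 hl).1)
      fun l hl => (mem_filter.1 hl).2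
  have hbad' : (#{l ∈ D | ¬ IsFresh F l} : ℝ) ≤ c / 2 * (Fintype.card V : ℝ) ^ K := by
    refine le_of_mul_le_mul_right (hbad.trans ?_) hn
    calc (K : ℝ) * (#F + K) * (Fintype.card V : ℝ) ^ K
        ≤ K * (c / (2 * K) * Fintype.card V) * (Fintype.card V : ℝ) ^ K := by gcongr
      _ = c / 2 * (Fintype.card V : ℝ) ^ K * Fintype.card V := by field_simp
  linarith

end Counting

section Greedy

variable {ι : Type*} [Fintype ι]

theorem exists_mul_sum_le_sum_of_mem {β : Type*} [DecidableEq β] {E : ι → Finset β} {w : ι → ℝ}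
    {p M : ℝ} (hw : ∀ i, 0 ≤ w i) (hp : 0 ≤ p) (hE : ∀ i, p * M ≤ #(E i))
    (hM : #(univ.biUnion E) ≤ M) (hne : (univ.biUnion E).Nonempty) :
    ∃ l ∈ univ.biUnion E, p * ∑ i, w i ≤ ∑ i with l ∈ E i, w i := by
  refine exists_le_of_sum_le hne ?_
  have hsum : 0 ≤ ∑ i, w i := sum_nonneg fun i _ => hw i
  calc ∑ _l ∈ univ.biUnion E, p * ∑ i, w i = #(univ.biUnion E) * (p * ∑ i, w i) := by
        rw [sum_const, nsmul_eq_mul]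
    _ ≤ M * (p * ∑ i, w i) := by gcongr
    _ = ∑ i, p * M * w i := by rw [← mul_sum]; ring
    _ ≤ ∑ i, #(E i) * w i := sum_le_sum fun i _ => mul_le_mul_of_nonneg_right (hE i) (hw i)
    _ = ∑ i, ∑ l ∈ univ.biUnion E with l ∈ E i, w i := by
        refine sum_congr rfl fun i _ => ?_
        rw [filter_mem_eq_inter, inter_eq_right.2 (subset_biUnion_of_mem E (mem_univ i)), sum_const,
          nsmul_eq_mul]
    _ = _ := by simp only [sum_filter]; exact sum_comm

/-- The potential of the greedy selection: `T` meets every `D i` often once it is small. -/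
noncomputable def hitPotential {β : Type*} [DecidableEq β] (D : ι → Finset β) (T : Finset β) : ℝ :=
  ∑ i, (1 / 2 : ℝ) ^ #(T ∩ D i)

theorem hitPotential_empty {β : Type*} [DecidableEq β] (D : ι → Finset β) :
    hitPotential D ∅ = Fintype.card ι := by
  simp [hitPotential]

theorem hitPotential_insert {β : Type*} [DecidableEq β] {D : ι → Finset β} {T : Finset β} {l : β}
    (hl : l ∉ T) :
    hitPotential D (insert l T) =
      hitPotential D T - 1 / 2 * ∑ i with l ∈ D i, (1 / 2 : ℝ) ^ #(T ∩ D i) := by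
  rw [hitPotential, hitPotential, mul_sum, sum_filter, ← sum_sub_distrib]
  refine sum_congr rfl fun i _ => ?_
  by_cases hi : l ∈ D i
  · rw [insert_inter_of_mem hi, card_insert_of_notMem fun h => hl (mem_inter.1 h).1, if_pos hi,
      pow_succ]
    ring
  · rw [insert_inter_of_notMem hi, if_neg hi, sub_zero]

variable {V : Type*} [Fintype V] {K : ℕ} {c : ℝ} {D : ι → Finset (List V)} {F : Finset V}

theorem exists_isFresh_hitPotential_insert_le [Nonempty ι] (hc : 0 < c) (hK : 1 ≤ K)
    (hV : 0 < Fintype.card V) (hD : ∀ i, ∀ l ∈ D i, l.length = K)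
    (hcard : ∀ i, c * (Fintype.card V : ℝ) ^ K ≤ #(D i)) (T : Finset (List V))
    (hF : #(F ∪ T.biUnion List.toFinset) + K ≤ c / (2 * K) * Fintype.card V) :
    ∃ l ∈ univ.biUnion D, IsFresh (F ∪ T.biUnion List.toFinset) l ∧ l ∉ T ∧
      hitPotential D (insert l T) ≤ (1 - c / 4) * hitPotential D T := by
  set F' := F ∪ T.biUnion List.toFinset
  set E : ι → Finset (List V) := fun i => {l ∈ D i | IsFresh F' l} with hE
  have : (0 : ℝ) < Fintype.card V := by exact_mod_cast hV
  have card_E (i : ι) : c / 2 * (Fintype.card V : ℝ) ^ K ≤ #(E i) :=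
    card_filter_isFresh_ge hK hV (hD i) (hcard i) hF
  have mem_E {l : List V} (hl : l ∈ univ.biUnion E) : ∃ i, l ∈ D i ∧ IsFresh F' l := by
    simpa [hE] using hl
  have card_biUnion_E : (#(univ.biUnion E) : ℝ) ≤ (Fintype.card V : ℝ) ^ K := by
    exact_mod_cast card_le_pow_of_length_eq fun l hl =>
      let ⟨i, hi, _⟩ := mem_E hl
      hD i l hi
  have hne : (univ.biUnion E).Nonempty := by
    obtain ⟨i⟩ := ‹Nonempty ι›
    have : (0 : ℝ) < #(E i) := lt_of_lt_of_le (by positivity) (card_E i)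
    exact (card_pos.1 (Nat.cast_pos.1 this)).mono (subset_biUnion_of_mem E (mem_univ i))
  obtain ⟨l, hl, hle⟩ := exists_mul_sum_le_sum_of_mem (w := fun i => (1 / 2 : ℝ) ^ #(T ∩ D i))
    (fun i => by positivity) (by positivity) card_E card_biUnion_E hne
  obtain ⟨i, hli, hfresh⟩ := mem_E hl
  have hlT : l ∉ T := hfresh.notMem fun hnil => by simp [← hD i l hli, hnil] at hK
  refine ⟨l, mem_biUnion.2 ⟨i, mem_univ i, hli⟩, hfresh, hlT, ?_⟩
  have hle' : c / 2 * hitPotential D T ≤ ∑ i with l ∈ D i, (1 / 2 : ℝ) ^ #(T ∩ D i) := by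
    simpa only [hitPotential, hE, mem_filter, hfresh, and_true] using hle
  rw [hitPotential_insert hlT]
  calc hitPotential D T - 1 / 2 * ∑ i with l ∈ D i, (1 / 2 : ℝ) ^ #(T ∩ D i)
      ≤ hitPotential D T - 1 / 2 * (c / 2 * hitPotential D T) := by gcongr
    _ = (1 - c / 4) * hitPotential D T := by ring

theorem exists_isPacking_hitPotential_le (hc : 0 < c) (hK : 1 ≤ K)
    (hD : ∀ i, ∀ l ∈ D i, l.length = K) (hcard : ∀ i, c * (Fintype.card V : ℝ) ^ K ≤ #(D i))
    (m : ℕ) (hF : #F + m * K ≤ c / (2 * K) * Fintype.card V) :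
    ∃ T ⊆ univ.biUnion D, #T ≤ m ∧ IsPacking F T ∧
      hitPotential D T ≤ (1 - c / 4) ^ m * Fintype.card ι := by
  rcases isEmpty_or_nonempty ι with hι | hι
  · exact ⟨∅, empty_subset _, Nat.zero_le _, ⟨by simp, by simp⟩, by simp [hitPotential]⟩
  induction m with
  | zero => exact ⟨∅, empty_subset _, le_rfl, ⟨by simp, by simp⟩, by simp [hitPotential_empty]⟩
  | succ m ih =>
    rw [Nat.cast_add_one, add_one_mul, ← add_assoc] at hF
    have hK' : (0 : ℝ) < K := by exact_mod_cast hK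
    obtain ⟨T, hTD, hTm, hT, hpot⟩ := ih ((le_add_of_nonneg_right hK'.le).trans hF)
    have hV : 0 < Fintype.card V := by
      by_contra! hV
      rw [Nat.le_zero.1 hV, Nat.cast_zero, mul_zero] at hF
      exact absurd hF (not_le.2 (by positivity))
    have hc1 : c ≤ 1 := le_one_of_mul_pow_le_card hV (hD hι.some) (hcard hι.some)
    have hused : #(F ∪ T.biUnion List.toFinset) ≤ #F + m * K := by
      refine (card_union_le _ _).trans (Nat.add_le_add_left ?_ _)
      refine (card_biUnion_le_card_mul _ _ K fun l hl => ?_).trans (Nat.mul_le_mul_right K hTm)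
      obtain ⟨i, -, hi⟩ := mem_biUnion.1 (hTD hl)
      exact (List.toFinset_card_le l).trans (hD i l hi).le
    have hused' : (#(F ∪ T.biUnion List.toFinset) : ℝ) ≤ #F + m * K := by exact_mod_cast hused
    obtain ⟨l, hlD, hfresh, hlT, hl⟩ :=
      exists_isFresh_hitPotential_insert_le hc hK hV hD hcard T
        ((add_le_add_left hused' _).trans hF)
    refine ⟨insert l T, insert_subset hlD hTD, ?_, hT.insert hfresh, hl.trans ?_⟩
    · rw [card_insert_of_notMem hlT]
      exact Nat.succ_le_succ hTm
    · rw [pow_succ', mul_assoc]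
      gcongr
      linarith

end Greedy

theorem eventually_mul_pow_mul_exp_lt_one (C : ℝ) (r : ℕ) {γ : ℝ} (hγ : 0 < γ) :
    ∀ᶠ n : ℕ in atTop, C * (n : ℝ) ^ r * Real.exp (-(γ * n)) < 1 := by
  have htend : Tendsto (fun n : ℕ => C / γ ^ r * ((γ * n) ^ r * Real.exp (-(γ * n)))) atTop
      (nhds (C / γ ^ r * 0)) :=
    ((Real.tendsto_pow_mul_exp_neg_atTop_nhds_zero r).comp
      (tendsto_natCast_atTop_atTop.const_mul_atTop hγ)).const_mul _
  rw [mul_zero] at htend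
  filter_upwards [htend.eventually_lt_const one_pos] with n hn
  calc C * (n : ℝ) ^ r * Real.exp (-(γ * n))
      = C / γ ^ r * ((γ * n) ^ r * Real.exp (-(γ * n))) := by rw [mul_pow]; field_simp
    _ < 1 := hn

theorem exp_neg_le_half_pow {x : ℝ} {k : ℕ} (hk : k ≤ x) : Real.exp (-x) ≤ (1 / 2 : ℝ) ^ k :=
  calc Real.exp (-x) ≤ Real.exp (k * (-1)) := by gcongr; linarith
    _ = Real.exp (-1) ^ k := Real.exp_nat_mul _ _
    _ ≤ _ := by
      gcongr
      exact Real.exp_neg_one_lt_d9.le.trans (by norm_num)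

theorem one_sub_pow_floor_le_exp {p x : ℝ} (hp : 0 ≤ p) (hp' : p ≤ 1) :
    (1 - p) ^ ⌊x⌋₊ ≤ Real.exp (p - p * x) :=
  calc (1 - p) ^ ⌊x⌋₊ ≤ Real.exp (-p) ^ ⌊x⌋₊ :=
        pow_le_pow_left₀ (by linarith) (Real.one_sub_le_exp_neg p) _
    _ = Real.exp (⌊x⌋₊ * (-p)) := by rw [Real.exp_nat_mul]
    _ ≤ Real.exp (p - p * x) := by
      gcongr
      nlinarith [Nat.lt_floor_add_one x]

/-- The greedy decrease of `hitPotential` derandomizes a choice of `β * n` random lists. -/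
theorem exists_isPacking {c β : ℝ} {K : ℕ} (r : ℕ) (hc : 0 < c) (hβ : 0 < β) (hK : 1 ≤ K)
    (hβK : β * K ≤ c / (4 * K)) :
    ∀ᶠ n : ℕ in atTop, ∀ (V : Type u) [Fintype V], Fintype.card V = n →
      ∀ (ι : Type v) [Fintype ι] (D : ι → Finset (List V)) (F : Finset V),
        Fintype.card ι ≤ n ^ r → (∀ i, ∀ l ∈ D i, l.length = K) →
        (∀ i, c * (n : ℝ) ^ K ≤ #(D i)) → #F ≤ c / (4 * K) * n →
        ∃ T ⊆ univ.biUnion D, #T ≤ β * n ∧ IsPacking F T ∧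
          ∀ i, c * β / 8 * n ≤ #(T ∩ D i) := by
  have : (0 : ℝ) < K := by exact_mod_cast hK
  filter_upwards [eventually_mul_pow_mul_exp_lt_one (Real.exp (c / 4)) r
    (show 0 < c * β / 8 by positivity), eventually_gt_atTop 0]
    with n hexp hn V _ hV ι _ D F hι hD hcard hF
  subst hV
  set n : ℝ := (Fintype.card V : ℝ)
  have hm : (⌊β * n⌋₊ : ℝ) ≤ β * n := Nat.floor_le (by positivity)
  obtain ⟨T, hTD, hTm, hT, hpot⟩ := exists_isPacking_hitPotential_le hc hK hD hcard ⌊β * n⌋₊ (by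
    calc (#F : ℝ) + ⌊β * n⌋₊ * K ≤ c / (4 * K) * n + β * n * K := by gcongr
      _ = c / (4 * K) * n + β * K * n := by ring
      _ ≤ c / (4 * K) * n + c / (4 * K) * n := by gcongr
      _ = c / (2 * K) * n := by field_simp; ring)
  refine ⟨T, hTD, (Nat.cast_le.2 hTm).trans hm, hT, fun i => ?_⟩
  by_contra! hlt
  refine hexp.not_ge ?_
  have hc1 : c ≤ 1 := le_one_of_mul_pow_le_card hn (hD i) (hcard i)
  have hlower : Real.exp (-(c * β / 8 * n)) ≤ (1 / 2 : ℝ) ^ #(T ∩ D i) :=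
    exp_neg_le_half_pow hlt.le
  have hupper : (1 / 2 : ℝ) ^ #(T ∩ D i) ≤ (1 - c / 4) ^ ⌊β * n⌋₊ * Fintype.card ι :=
    le_trans (single_le_sum (f := fun i => (1 / 2 : ℝ) ^ #(T ∩ D i)) (fun i _ => by positivity)
      (mem_univ i)) hpot
  have hι' : (Fintype.card ι : ℝ) ≤ n ^ r := (Nat.cast_le.2 hι).trans_eq (Nat.cast_pow _ _)
  refine le_of_mul_le_mul_right ?_ (Real.exp_pos (-(c * β / 8 * n)))
  calc 1 * Real.exp (-(c * β / 8 * n)) ≤ (1 - c / 4) ^ ⌊β * n⌋₊ * Fintype.card ι :=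
        (one_mul _).trans_le (hlower.trans hupper)
    _ ≤ Real.exp (c / 4 - c / 4 * (β * n)) * n ^ r := by
        gcongr
        exact one_sub_pow_floor_le_exp (by positivity) (by linarith)
    _ = Real.exp (c / 4) * n ^ r * Real.exp (-(c * β / 8 * n)) * Real.exp (-(c * β / 8 * n)) := by
        rw [show c / 4 - c / 4 * (β * n) = c / 4 + -(c * β / 8 * n) + -(c * β / 8 * n) by ring,
          Real.exp_add, Real.exp_add]
        ring

end Packings

section Connectors

open Finset
open scoped Classical

variable {V : Type*} {G : V → V → Prop} {R : Finset V} {B K : ℕ}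

/-- `C` is the vertex set of a path that leads from an outneighbour of `u` to an inneighbour of
`v`. -/
def IsConnector (G : V → V → Prop) (u v : V) (C : Finset V) : Prop :=
  ∃ a b, DiPath G a b C ∧ G u a ∧ G b v

/-- Whenever at most `B` vertices have been used, any two vertices are joined by a connector
consisting of at most `K` unused vertices, all from `R`. -/
def HasConnectors (G : V → V → Prop) (R : Finset V) (B K : ℕ) : Prop :=
  ∀ F : Finset V, #F ≤ B → ∀ u v, ∃ C, IsConnector G u v C ∧ C ⊆ R ∧ Disjoint C F ∧ #C ≤ K

theorem DiPath.append_connector {a d u v : V} {X C Y : Finset V} (h : DiPath G a u X)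
    (hC : IsConnector G u v C) (h' : DiPath G v d Y) (hXC : Disjoint X C) (hXY : Disjoint X Y)
    (hCY : Disjoint C Y) : DiPath G a d (X ∪ C ∪ Y) := by
  obtain ⟨p, q, hpq, hup, hqv⟩ := hC
  exact (h.append hpq hup hXC).append h' hqv (disjoint_union_left.2 ⟨hXY, hCY⟩)

theorem HasConnectors.exists_path (hR : HasConnectors G R B K) {T : Finset (Finset V)}
    (hT : T.Nonempty) (hpath : ∀ P ∈ T, ∃ a b, DiPath G a b P)
    (hdisj : (T : Set (Finset V)).PairwiseDisjoint id) (hTR : ∀ P ∈ T, Disjoint P R)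
    (hB : #T * K ≤ B) : ∃ a b C, DiPath G a b (T.biUnion id ∪ C) ∧ C ⊆ R ∧ #C ≤ #T * K := by
  induction hT using Finset.Nonempty.cons_induction with
  | singleton P =>
    obtain ⟨a, b, hab⟩ := hpath P (mem_singleton_self _)
    exact ⟨a, b, ∅, by simpa using hab, by simp, by simp⟩
  | cons P T hP _ ih =>
    rw [card_cons, add_mul, one_mul] at hB
    rw [coe_cons, Set.pairwiseDisjoint_insert_of_notMem (by exact_mod_cast hP)] at hdisj
    rw [forall_mem_cons] at hpath hTR
    obtain ⟨a, b, C, hab, hCR, hcard⟩ := ih hpath.2 hdisj.1 hTR.2 (by omega)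
    obtain ⟨c, d, hcd⟩ := hpath.1
    obtain ⟨C', hC', hC'R, hC'C, hcard'⟩ := hR C (by omega) b c
    have hTR' : Disjoint (T.biUnion id) R := (disjoint_biUnion_left _ _ _).2 hTR.2
    have hTP : Disjoint (T.biUnion id) P :=
      (disjoint_biUnion_left _ _ _).2 fun Q hQ => (hdisj.2 Q hQ).symm
    have hlong := hab.append_connector hC' hcd
      (disjoint_union_left.2 ⟨hTR'.mono_right hC'R, hC'C.symm⟩)
      (disjoint_union_left.2 ⟨hTP, (hTR.1.mono_right hCR).symm⟩) (hTR.1.mono_right hC'R).symm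
    refine ⟨a, d, C ∪ C', ?_, union_subset hCR hC'R, ?_⟩
    · convert hlong using 1
      rw [cons_eq_insert, biUnion_insert, id]
      ac_rfl
    · rw [card_cons, add_mul, one_mul]
      exact (card_union_le _ _).trans (by omega)

theorem IsPacking.exists_disjoint {F U : Finset V} {T T' : Finset (List V)} (hT : IsPacking F T)
    (hT' : T' ⊆ T) (hU : #U < #T') : ∃ l ∈ T', Disjoint l.toFinset U := by
  by_contra! hmeet
  obtain ⟨l₀, hl₀⟩ := card_pos.1 (Nat.zero_lt_of_lt hU)
  simp only [not_disjoint_iff] at hmeet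
  have : Nonempty V := let ⟨x, _⟩ := hmeet l₀ hl₀; ⟨x⟩
  choose! f hf using hmeet
  obtain ⟨l, hl, l', hl', hne, heq⟩ := exists_ne_map_eq_of_card_lt_of_maps_to hU
    fun l hl => (hf l hl).2
  exact disjoint_left.1 (hT.disjoint (hT' hl) (hT' hl') hne) (hf l hl).1 (heq ▸ (hf l' hl').1)

variable [Fintype V] {ν τ δ : ℝ} {j : ℕ}

theorem isConnector_of_mem_walks {u v : V} {l : List V}
    (hl : l ∈ walks G (fun _ => true) u (j + 1) v) (hnodup : l.Nodup) :
    IsConnector G u v l.toFinset := by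
  induction j generalizing v l with
  | zero =>
    obtain ⟨z, l', rfl, hz, hl'⟩ := mem_walks_succ.1 hl
    obtain ⟨rfl, hu⟩ := mem_walks_zero.1 hl'
    exact ⟨z, z, by simpa using DiPath.single z, hu, hz⟩
  | succ j ih =>
    obtain ⟨z, l', rfl, hz, hl'⟩ := mem_walks_succ.1 hl
    rw [List.nodup_cons] at hnodup
    obtain ⟨a, b, hab, hua, hbz⟩ := ih hl' hnodup.2
    refine ⟨a, z, ?_, hua, hz⟩
    rw [List.toFinset_cons, insert_eq, union_comm]
    exact hab.append (.single z) hbz (by simpa using hnodup.1)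

theorem IsRobustExpander.hasConnectors (hν : 0 < ν) (hG : IsRobustExpander G ν τ δ)
    (hj : 1 ≤ j * ν)
    (hB : (B + (j + 1 : ℕ) : ℝ) ≤ ν ^ (j + 1) / (2 * (j + 1 : ℕ)) * Fintype.card V) :
    HasConnectors G univ B (j + 1) := by
  intro F hF u v
  have hV : 0 < Fintype.card V := Fintype.card_pos_iff.2 ⟨u⟩
  have hfresh := card_filter_isFresh_ge (F := F) (by omega) hV
    (fun l hl => length_of_mem_walks hl)
    ((mul_pow _ _ _).symm.trans_le (hG.card_walks_ge hν.le (fun _ => true) u v hj))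
    (le_trans (by gcongr) hB)
  have hpos : (0 : ℝ) < ν ^ (j + 1) / 2 * (Fintype.card V : ℝ) ^ (j + 1) := by positivity
  obtain ⟨l, hl⟩ := card_pos.1 (Nat.cast_pos.1 (hpos.trans_le hfresh))
  obtain ⟨hl, hnodup, hlF⟩ := mem_filter.1 hl
  exact ⟨l.toFinset, isConnector_of_mem_walks hl hnodup, subset_univ _, hlF,
    (List.toFinset_card_le l).trans (length_of_mem_walks hl).le⟩

theorem IsPacking.hasConnectors {F : Finset V} {T : Finset (List V)} (hT : IsPacking F T)
    (hB : ∀ u v, B < #(T ∩ walks G (fun _ => true) u (j + 1) v)) :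
    HasConnectors G (T.biUnion List.toFinset) B (j + 1) := by
  intro U hU u v
  obtain ⟨l, hl, hlU⟩ := hT.exists_disjoint inter_subset_left (hU.trans_lt (hB u v))
  obtain ⟨hlT, hl⟩ := mem_inter.1 hl
  exact ⟨l.toFinset, isConnector_of_mem_walks hl (hT.isFresh l hlT).1,
    subset_biUnion_of_mem List.toFinset hlT, hlU,
    (List.toFinset_card_le l).trans (length_of_mem_walks hl).le⟩

end Connectors

section Absorbers

open Finset
open scoped Classical

variable {V : Type*} {G : V → V → Prop} {a b x x' : V} {E O : Finset V}

/-- A path from `a` to `x'` that splits into a path from `a` to `x` and a path from `b` to `x'`, not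
necessarily by deleting one of its edges. Hence a vertex `w` with edges from `x` to `w` and from `w`
to `b` can be added to the path. -/
structure IsGadget (G : V → V → Prop) (a x b x' : V) (E O : Finset V) : Prop where
  path : DiPath G a x' (E ∪ O)
  left : DiPath G a x E
  right : DiPath G b x' O
  disjoint : Disjoint E O

theorem IsGadget.insert (h : IsGadget G a x b x' E O) {w : V} (hw : w ∉ E ∪ O) (hxw : G x w)
    (hwb : G w b) : DiPath G a x' (insert w (E ∪ O)) := by
  rw [mem_union, not_or] at hw
  rw [← insert_union, insert_eq, union_comm {w}]
  exact (h.left.append (.single w) hxw (by simpa using hw.1)).append h.right hwb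
    (disjoint_union_left.2 ⟨h.disjoint, by simpa using hw.2⟩)

theorem IsGadget.extend (h : IsGadget G a x b x' E O) {c p q y r : V} {P M : Finset V}
    (hP : DiPath G c p P) (hM : DiPath G q y M) (hx'c : G x' c) (hpq : G p q) (hyr : G y r)
    (hxq : G x q) (hpr : G p r) (hEOP : Disjoint (E ∪ O) P) (hEOPM : Disjoint (E ∪ O ∪ P) M)
    (hr : r ∉ E ∪ O ∪ P ∪ M) : IsGadget G a y b r (E ∪ M) (O ∪ P ∪ {r}) := by
  have hpath := ((h.path.append hP hx'c hEOP).append hM hpq hEOPM).append (.single r) hyr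
    (by simpa using hr)
  simp only [disjoint_union_left] at hEOP hEOPM
  simp only [mem_union, not_or] at hr
  obtain ⟨⟨⟨hrE, hrO⟩, hrP⟩, hrM⟩ := hr
  obtain ⟨⟨hEM, hOM⟩, hPM⟩ := hEOPM
  refine ⟨?_, h.left.append hM hxq hEM,
    (h.right.append hP hx'c hEOP.2).append (.single r) hpr (by simp [hrO, hrP]), ?_⟩
  · convert hpath using 1
    ac_rfl
  · simp only [disjoint_union_left, disjoint_union_right, disjoint_singleton_right]
    exact ⟨⟨⟨h.disjoint, hOM.symm⟩, hEOP.1, hPM.symm⟩, by simp [hrE, hrM]⟩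

variable [Fintype V] {B K k : ℕ} {F : Finset V} {l : List V}

/-- The direction pattern of walks that alternate between forward and backward steps, starting with
a forward one. -/
def alternating (i : ℕ) : Bool := i % 2 == 0

theorem edges_of_mem_walks_alternating_two {v y : V} (h : l ∈ walks G alternating v 2 y) :
    ∃ z₂ z₁, l = [z₂, z₁] ∧ G z₂ y ∧ G z₂ z₁ ∧ G v z₁ := by
  obtain ⟨z₂, _, rfl, h₂, h⟩ := mem_walks_succ.1 h
  obtain ⟨z₁, _, rfl, h₁, h⟩ := mem_walks_succ.1 h
  obtain ⟨rfl, h₀⟩ := mem_walks_zero.1 h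
  exact ⟨z₂, z₁, rfl, h₂, h₁, h₀⟩

theorem edges_of_mem_walks_alternating_add_six {v y : V} {j : ℕ}
    (h : l ∈ walks G alternating v (4 * j + 6) y) :
    ∃ x₃ x₃' x₂ x₂' l', l = [x₃, x₃', x₂, x₂'] ++ l' ∧ G x₃ y ∧ G x₃ x₃' ∧ G x₂ x₃' ∧
      G x₂ x₂' ∧ l' ∈ walks G alternating v (4 * j + 2) x₂' := by
  have heven : alternating (4 * j + 6) = true ∧ alternating (4 * j + 4) = true := by
    constructor <;> simp [alternating] <;> omega
  have hodd : alternating (4 * j + 5) = false ∧ alternating (4 * j + 3) = false := by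
    constructor <;> simp [alternating] <;> omega
  obtain ⟨x₃, _, rfl, h₃, h⟩ := mem_walks_succ.1 h
  obtain ⟨x₃', _, rfl, h₃', h⟩ := mem_walks_succ.1 h
  obtain ⟨x₂, _, rfl, h₂, h⟩ := mem_walks_succ.1 h
  obtain ⟨x₂', l', rfl, h₂', h⟩ := mem_walks_succ.1 h
  refine ⟨x₃, x₃', x₂, x₂', l', rfl, ?_, ?_, ?_, ?_, h⟩
  · simpa [heven.1, dirEdge] using h₃
  · simpa [hodd.1, dirEdge] using h₃'
  · simpa [heven.2, dirEdge] using h₂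
  · simpa [hodd.2, dirEdge] using h₂'

theorem HasConnectors.exists_isGadget_extend (hC : HasConnectors G univ B K)
    (h : IsGadget G a x b x' E O) {p q y r : V} (hxq : G x q) (hpq : G p q) (hpr : G p r)
    (hyr : G y r) (hnew : IsFresh (E ∪ O ∪ F) [y, r, p, q]) (hEOF : Disjoint (E ∪ O) F)
    (hB : #(E ∪ O) + #F + 4 + K ≤ B) :
    ∃ E' O', IsGadget G a y b r E' O' ∧ Disjoint (E' ∪ O') F ∧
      #(E' ∪ O') ≤ #(E ∪ O) + 4 + 2 * K := by
  set N := E ∪ O ∪ F ∪ {y, r, p, q} with hN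
  have card_N : #N ≤ #(E ∪ O) + #F + 4 :=
    (card_union_le _ _).trans (add_le_add (card_union_le _ _) card_le_four)
  obtain ⟨C, ⟨c, d, hcd, hx'c, hdp⟩, -, hCN, hC_card⟩ := hC N (by omega) x' p
  obtain ⟨C', hC', -, hC'N, hC'_card⟩ := hC (N ∪ C) ((card_union_le _ _).trans (by omega)) q y
  simp only [isFresh_cons] at hnew
  rw [disjoint_left] at hEOF hCN hC'N
  have hP : DiPath G c p (C ∪ {p}) := hcd.append (.single p) hdp (by grind [disjoint_left])
  have hM : DiPath G q y ({q} ∪ C' ∪ {y}) :=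
    (DiPath.single q).append_connector hC' (.single y) (by grind [disjoint_left])
      (by grind [disjoint_left]) (by grind [disjoint_left])
  refine ⟨_, _, h.extend hP hM hx'c hpq hyr hxq hpr (by grind [disjoint_left])
    (by grind [disjoint_left]) (by grind), ?_, ?_⟩
  · rw [disjoint_left]
    grind
  · have hunion : E ∪ ({q} ∪ C' ∪ {y}) ∪ (O ∪ (C ∪ {p}) ∪ {r}) =
        E ∪ O ∪ {y, r, p, q} ∪ C ∪ C' := by
      simp only [insert_eq]
      ac_rfl
    have hEON := card_union_le (E ∪ O) {y, r, p, q}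
    have hfour : #({y, r, p, q} : Finset V) ≤ 4 := card_le_four
    have hEONC := card_union_le (E ∪ O ∪ {y, r, p, q}) C
    have hall := card_union_le (E ∪ O ∪ {y, r, p, q} ∪ C) C'
    rw [hunion]
    omega

theorem HasConnectors.exists_isGadget (hC : HasConnectors G univ B K) (j : ℕ)
    (hl : IsFresh F l) (hwalk : ∃ v y, l ∈ walks G alternating v (4 * j + 2) y)
    (hF : #F + (4 * j + 2 + 2 * j * K) ≤ B) :
    ∃ a x b x' E O, IsGadget G a x b x' E O ∧ Disjoint (E ∪ O) F ∧
      #(E ∪ O) ≤ 4 * j + 2 + 2 * j * K ∧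
      ∀ v y, l ∈ walks G alternating v (4 * j + 2) y → G v b ∧ G x y := by
  induction j generalizing l F with
  | zero =>
    obtain ⟨v, y, h⟩ := hwalk
    obtain ⟨z₂, z₁, rfl, -, hz, -⟩ := edges_of_mem_walks_alternating_two h
    have hne : Disjoint ({z₂} : Finset V) {z₁} := by simpa using hl.1
    refine ⟨z₂, z₂, z₁, z₁, {z₂}, {z₁},
      ⟨(DiPath.single z₂).append (.single z₁) hz hne, .single _, .single _, hne⟩,
      by simpa using hl.2, (card_union_le _ _).trans (by simp), fun v y h => ?_⟩
    obtain ⟨_, _, heq, hy, -, hv⟩ := edges_of_mem_walks_alternating_two h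
    simp only [List.cons.injEq, and_true] at heq
    obtain ⟨rfl, rfl⟩ := heq
    exact ⟨hv, hy⟩
  | succ j ih =>
    obtain ⟨v, y, h⟩ := hwalk
    obtain ⟨x₃, x₃', x₂, x₂', l', rfl, -, h₃₃, h₂₃, h₂₂, hwalk⟩ :=
      edges_of_mem_walks_alternating_add_six h
    have hbound : 2 * (j + 1) * K = 2 * j * K + 2 * K := by ring
    rw [hbound] at hF ⊢
    obtain ⟨hnew, hl'⟩ := isFresh_append.1 hl
    have card_F : #(F ∪ [x₃, x₃', x₂, x₂'].toFinset) ≤ #F + 4 :=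
      (card_union_le _ _).trans (Nat.add_le_add_left (List.toFinset_card_le _) _)
    obtain ⟨a, x, b, x', E, O, hgad, hEOF, hcard, hends⟩ := ih hl' ⟨v, x₂', hwalk⟩ (by omega)
    rw [disjoint_union_right] at hEOF
    obtain ⟨E', O', hgad', hEOF', hcard'⟩ := hC.exists_isGadget_extend hgad
      (hends v x₂' hwalk).2 h₂₂ h₂₃ h₃₃ ⟨hnew.1, disjoint_union_right.2 ⟨hEOF.2.symm, hnew.2⟩⟩
      hEOF.1 (by omega)
    refine ⟨a, x₃, b, x₃', E', O', hgad', hEOF', by omega, fun v y h => ?_⟩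
    obtain ⟨_, _, _, _, _, heq, hy, -, -, -, h⟩ := edges_of_mem_walks_alternating_add_six h
    simp only [List.cons_append, List.nil_append, List.cons.injEq] at heq
    obtain ⟨rfl, rfl, rfl, rfl, rfl⟩ := heq
    exact ⟨(hends v _ h).1, hy⟩

/-- A path with vertex set `X` from `u` to `v` that absorbs every set `W` of further vertices that
can be assigned injectively to lists in `A`, each vertex to the interior of a closed alternating
walk of `k + 1` steps through it. -/
def IsAbsorber (G : V → V → Prop) (k : ℕ) (A : Finset (List V)) (u v : V) (X : Finset V) : Prop :=
  ∀ (W : Finset V) (φ : V → List V), Disjoint X W → Set.InjOn φ W →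
    (∀ w ∈ W, φ w ∈ A ∧ φ w ∈ walks G alternating w k w) → DiPath G u v (X ∪ W)

theorem DiPath.isAbsorber_empty {u v : V} {X : Finset V} (h : DiPath G u v X) :
    IsAbsorber G k ∅ u v X := by
  intro W φ _ _ hφ
  have hW : W = ∅ := eq_empty_of_forall_notMem fun w hw => notMem_empty _ (hφ w hw).1
  simpa [hW] using h

theorem IsGadget.isAbsorber (h : IsGadget G a x b x' E O)
    (hl : ∀ v, l ∈ walks G alternating v k v → G v b ∧ G x v) :
    IsAbsorber G k {l} a x' (E ∪ O) := by
  intro W φ hW hφ hφl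
  simp only [mem_singleton] at hφl
  obtain rfl | ⟨w, hw⟩ := W.eq_empty_or_nonempty
  · simpa using h.path
  · have hWw : W = {w} := eq_singleton_iff_unique_mem.2
      ⟨hw, fun w' hw' => hφ hw' hw ((hφl w' hw').1.trans (hφl w hw).1.symm)⟩
    obtain ⟨hwb, hxw⟩ := hl w ((hφl w hw).1 ▸ (hφl w hw).2)
    rw [hWw, union_comm, ← insert_eq]
    exact h.insert (disjoint_right.1 hW hw) hxw hwb

theorem IsAbsorber.append_connector {A A' : Finset (List V)} {u v u' v' : V} {X C Y : Finset V}
    (h : IsAbsorber G k A u v X) (hC : IsConnector G v u' C) (h' : IsAbsorber G k A' u' v' Y)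
    (hXC : Disjoint X C) (hXY : Disjoint X Y) (hCY : Disjoint C Y) :
    IsAbsorber G k (A ∪ A') u v' (X ∪ C ∪ Y) := by
  intro W φ hW hφ hφA
  simp only [disjoint_union_left] at hW
  obtain ⟨⟨hXW, hCW⟩, hYW⟩ := hW
  have hsub := filter_subset (φ · ∈ A) W
  have hsub' := filter_subset (φ · ∉ A) W
  have hX := h {w ∈ W | φ w ∈ A} φ (hXW.mono_right hsub) (hφ.mono (by exact_mod_cast hsub))
    fun w hw => ⟨(mem_filter.1 hw).2, (hφA w (hsub hw)).2⟩
  have hY := h' {w ∈ W | φ w ∉ A} φ (hYW.mono_right hsub') (hφ.mono (by exact_mod_cast hsub'))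
    fun w hw => ⟨(mem_union.1 (hφA w (hsub' hw)).1).resolve_left (mem_filter.1 hw).2,
      (hφA w (hsub' hw)).2⟩
  have hsplit := filter_union_filter_not_eq (φ · ∈ A) W
  have hlong := hX.append_connector hC hY
    (disjoint_union_left.2 ⟨hXC, (hCW.mono_right hsub).symm⟩)
    (by
      simp only [disjoint_union_left, disjoint_union_right]
      exact ⟨⟨hXY, (hYW.mono_right hsub).symm⟩, hXW.mono_right hsub',
        disjoint_filter_filter_not _ _ _⟩)
    (disjoint_union_right.2 ⟨hCY, hCW.mono_right hsub'⟩)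
  convert hlong using 1
  nth_rw 1 [← hsplit]
  ac_rfl

theorem HasConnectors.exists_isAbsorber [Nonempty V] (hC : HasConnectors G univ B K) {j m : ℕ}
    (hm : 2 * (4 * j + 2) + 2 * j * K + K ≤ m) {A : Finset (List V)} (hA : IsPacking F A)
    (hwalk : ∀ l ∈ A, ∃ v, l ∈ walks G alternating v (4 * j + 2) v)
    (hB : #F + #A * m + K ≤ B) :
    ∃ u v X, IsAbsorber G (4 * j + 2) A u v X ∧ Disjoint X F ∧ #X ≤ #A * m + K := by
  induction A using Finset.induction_on generalizing F with
  | empty =>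
    obtain ⟨z⟩ := ‹Nonempty V›
    obtain ⟨C, ⟨a, b, hab, -⟩, -, hCF, hcard⟩ := hC F (by omega) z z
    exact ⟨a, b, C, hab.isAbsorber_empty, hCF, by simpa using hcard⟩
  | insert l A hlA ih =>
    rw [card_insert_of_notMem hlA, add_mul, one_mul] at hB ⊢
    rw [forall_mem_insert] at hwalk
    obtain ⟨⟨v₀, hv₀⟩, hwalk⟩ := hwalk
    obtain ⟨hl, hA⟩ := hA.of_insert hlA
    have card_l : #l.toFinset ≤ 4 * j + 2 :=
      (List.toFinset_card_le l).trans (length_of_mem_walks hv₀).le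
    have card_Fl := card_union_le F l.toFinset
    obtain ⟨u, v, X, hX, hXF, card_X⟩ := ih hA hwalk (by omega)
    have card_FX := card_union_le F X
    rw [disjoint_union_right] at hXF
    obtain ⟨a, x, b, x', E, O, hgad, hEOF, card_EO, hends⟩ := hC.exists_isGadget (F := F ∪ X) j
      ⟨hl.1, disjoint_union_right.2 ⟨hl.2, hXF.2.symm⟩⟩ ⟨v₀, v₀, hv₀⟩ (by omega)
    obtain ⟨C, hvCa, -, hCU, card_C⟩ := hC (E ∪ O ∪ (F ∪ X))
      ((card_union_le _ _).trans (by omega)) v a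
    rw [disjoint_union_right] at hEOF
    simp only [disjoint_union_right (u := F ∪ X), disjoint_union_right (u := X)] at hCU
    refine ⟨u, x', X ∪ C ∪ (E ∪ O), ?_, ?_, ?_⟩
    · rw [insert_eq, union_comm]
      exact hX.append_connector hvCa (hgad.isAbsorber fun v hv => hends v v hv) hCU.2.2.symm
        hEOF.2.symm hCU.1
    · exact disjoint_union_left.2 ⟨disjoint_union_left.2 ⟨hXF.1, hCU.2.1⟩, hEOF.1⟩
    · have hXC := card_union_le X C
      have hall := card_union_le (X ∪ C) (E ∪ O)
      omega

end Absorbers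

section PathCovers

open Finset
open scoped Classical

variable {V W : Type*} {G : V → V → Prop} {U P Q : Finset V} {T : Finset (Finset V)}

/-- `T` partitions `U` into the vertex sets of directed paths of `G`. -/
structure IsPathCover (G : V → V → Prop) (U : Finset V) (T : Finset (Finset V)) : Prop where
  path : ∀ P ∈ T, ∃ a b, DiPath G a b P
  disjoint : (T : Set (Finset V)).PairwiseDisjoint id
  biUnion_eq : T.biUnion id = U

namespace IsPathCover

theorem mono {G' : V → V → Prop} (hG : ∀ x y, G x y → G' x y) (hT : IsPathCover G U T) :
    IsPathCover G' U T :=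
  ⟨fun P hP => let ⟨a, b, hab⟩ := hT.path P hP; ⟨a, b, hab.mono hG⟩, hT.disjoint, hT.biUnion_eq⟩

theorem map {G' : W → W → Prop} (f : V ↪ W) (hG : ∀ x y, G x y → G' (f x) (f y))
    (hT : IsPathCover G U T) :
    IsPathCover G' (U.map f) (T.map (mapEmbedding f).toEmbedding) := by
  refine ⟨forall_mem_map.2 fun P hP => ?_, ?_, ?_⟩
  · obtain ⟨a, b, hab⟩ := hT.path P hP
    exact ⟨f a, f b, hab.map f hG⟩
  · rw [coe_map]
    rintro _ ⟨P, hP, rfl⟩ _ ⟨Q, hQ, rfl⟩ hPQ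
    exact (disjoint_map f).2 (hT.disjoint hP hQ fun h => hPQ (h ▸ rfl))
  · ext y
    simp only [← hT.biUnion_eq, mem_biUnion, mem_map, id]
    aesop

theorem exists_mem (hT : IsPathCover G U T) {x : V} (hx : x ∈ U) : ∃ P ∈ T, x ∈ P := by
  simpa [← hT.biUnion_eq] using hx

theorem singletons (G : V → V → Prop) (U : Finset V) : IsPathCover G U (U.image singleton) := by
  refine ⟨by simpa using fun x _ => ⟨x, x, .single x⟩, ?_, by simp [image_biUnion]⟩
  rw [coe_image]
  rintro _ ⟨x, -, rfl⟩ _ ⟨y, -, rfl⟩ hxy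
  exact disjoint_singleton.2 fun h => hxy (h ▸ rfl)

theorem exists_merge (hT : IsPathCover G U T) (hP : P ∈ T) (hQ : Q ∈ T) (hPQ : P ≠ Q) {a b : V}
    (hab : DiPath G a b (P ∪ Q)) : ∃ T', IsPathCover G U T' ∧ #T' + 1 = #T := by
  have hQ' : Q ∈ T.erase P := mem_erase.2 ⟨hPQ.symm, hQ⟩
  have hdisj : ∀ R ∈ (T.erase P).erase Q, Disjoint (P ∪ Q) R := fun R hR => by
    simp only [mem_erase] at hR
    exact disjoint_union_left.2
      ⟨hT.disjoint hP hR.2.2 hR.2.1.symm, hT.disjoint hQ hR.2.2 hR.1.symm⟩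
  have hnew : P ∪ Q ∉ (T.erase P).erase Q := fun h =>
    disjoint_left.1 (hdisj _ h) hab.start_mem hab.start_mem
  refine ⟨insert (P ∪ Q) ((T.erase P).erase Q), ⟨?_, ?_, ?_⟩, ?_⟩
  · exact forall_mem_insert .. |>.2
      ⟨⟨a, b, hab⟩, fun R hR => hT.path R (mem_of_mem_erase (mem_of_mem_erase hR))⟩
  · rw [coe_insert, Set.pairwiseDisjoint_insert_of_notMem (by exact_mod_cast hnew)]
    exact ⟨hT.disjoint.subset fun R hR => mem_of_mem_erase (mem_of_mem_erase (mem_coe.1 hR)),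
      hdisj⟩
  · conv_rhs => rw [← hT.biUnion_eq, ← insert_erase hP, ← insert_erase hQ']
    simp [union_assoc]
  · rw [card_insert_of_notMem hnew, card_erase_add_one hQ', card_erase_add_one hP]

theorem exists_add_edge (hT : IsPathCover G U T) {f : V → ℕ} (hf : ∀ x y, G x y → f x < f y)
    {x y : V} (hxU : x ∈ U) (hyU : y ∈ U) (hx : ∀ z, ¬ G x z) (hy : ∀ z, ¬ G z y)
    (hxy : f x < f y) :
    ∃ T', IsPathCover (fun u v => G u v ∨ u = x ∧ v = y) U T' ∧ #T' + 1 = #T := by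
  obtain ⟨P, hP, hxP⟩ := hT.exists_mem hxU
  obtain ⟨Q, hQ, hyQ⟩ := hT.exists_mem hyU
  obtain ⟨a, b, hab⟩ := hT.path P hP
  obtain ⟨c, d, hcd⟩ := hT.path Q hQ
  have hend : x = b := by_contra fun h => let ⟨z, hz⟩ := hab.exists_succ hxP h; hx z hz
  have hstart : y = c := by_contra fun h => let ⟨z, hz⟩ := hcd.exists_pred hyQ h; hy z hz
  have hPQ : P ≠ Q := by
    rintro rfl
    have hya : y = a := by_contra fun h => let ⟨z, hz⟩ := hab.exists_pred hyQ h; hy z hz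
    exact hxy.not_ge (by simpa [hya, hend] using hab.monotone_of_edge_lt hf)
  have hG : ∀ u v, G u v → G u v ∨ u = x ∧ v = y := fun u v => .inl
  exact (hT.mono hG).exists_merge hP hQ hPQ
    ((hab.mono hG).append (hcd.mono hG) (.inr ⟨hend.symm, hstart.symm⟩) (hT.disjoint hP hQ hPQ))

end IsPathCover

variable [Fintype V]

theorem exists_isPathCover_of_injOn {f : V → ℕ} {g : V → V} {Y : Finset V} (hg : Set.InjOn g Y)
    (hf : ∀ x ∈ Y, f x < f (g x)) :
    ∃ T, IsPathCover (fun x y => x ∈ Y ∧ g x = y) univ T ∧ #T + #Y = Fintype.card V := by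
  induction Y using Finset.induction_on with
  | empty => exact ⟨_, .singletons _ _, by simp [card_image_of_injective _ singleton_injective]⟩
  | insert x Y hx ih =>
    rw [coe_insert, Set.injOn_insert (by exact_mod_cast hx)] at hg
    obtain ⟨T, hT, hcard⟩ := ih hg.1 fun y hy => hf y (mem_insert_of_mem hy)
    obtain ⟨T', hT', hcard'⟩ := hT.exists_add_edge (f := f) (x := x) (y := g x)
      (fun y z h => h.2 ▸ hf y (mem_insert_of_mem h.1)) (mem_univ _) (mem_univ _)
      (fun z h => hx h.1) (fun z h => hg.2 ⟨z, h⟩) (hf x (mem_insert_self _ _))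
    refine ⟨T', hT'.mono ?_, by rw [card_insert_of_notMem hx]; omega⟩
    rintro u v (⟨hu, rfl⟩ | ⟨rfl, rfl⟩) <;> simp [*]

theorem exists_injOn_of_card_le_card_biUnion_add {ι α : Type*} [Fintype ι] [Nonempty α]
    {t : ι → Finset α} {d : ℕ} (ht : ∀ S : Finset ι, #S ≤ #(S.biUnion t) + d) :
    ∃ (Y : Finset ι) (g : ι → α), Set.InjOn g Y ∧ (∀ i ∈ Y, g i ∈ t i) ∧
      Fintype.card ι ≤ #Y + d := by
  obtain ⟨g, hg, hgt⟩ := (all_card_le_biUnion_card_iff_exists_injective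
    fun i => (t i).disjSum (univ : Finset (Fin d))).1 fun S => by
      rcases S.eq_empty_or_nonempty with rfl | hS
      · simp
      suffices hS' : S.biUnion (fun i => (t i).disjSum (univ : Finset (Fin d))) =
          (S.biUnion t).disjSum univ by simpa [hS'] using ht S
      ext (a | i) <;> simp [hS.exists_mem]
  obtain ⟨a₀⟩ := ‹Nonempty α›
  refine ⟨({i | (g i).isLeft} : Finset ι), fun i => (g i).elim id fun _ => a₀, ?_, ?_, ?_⟩
  · intro i hi j hj hij
    simp only [mem_coe, mem_filter_univ, Sum.isLeft_iff] at hi hj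
    obtain ⟨⟨a, hi⟩, b, hj⟩ := hi, hj
    exact hg (by simp_all)
  · intro i hi
    obtain ⟨a, ha⟩ := Sum.isLeft_iff.1 (mem_filter.1 hi).2
    simpa [ha] using hgt i
  · have hright : #({i | ¬ (g i).isLeft} : Finset ι) ≤ #((univ : Finset (Fin d)).map .inr) :=
      card_le_card_of_injOn g (fun i hi => by
        obtain ⟨b, hb⟩ := Sum.isRight_iff.1 (by simpa using hi)
        simp [hb]) hg.injOn
    rw [card_map, card_fin] at hright
    rw [← card_univ, ← card_filter_add_card_filter_not fun i => (g i).isLeft]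
    omega

end PathCovers

section RegularSubdigraphs

open Finset
open scoped Classical

variable {V : Type*} [Fintype V] {G H : V → V → Prop} {ν τ δ : ℝ} {k : ℕ}

theorem IsRobustExpander.card_le_card_biUnion_sdiff (hG : IsRobustExpander G ν τ δ)
    (hH : ∀ s x, #(nhd H s x) = k) (hk : k < ν * Fintype.card V) (S : Finset V) :
    #S ≤ #(S.biUnion fun x => nhd G true x \ nhd H true x) := by
  have hrobust : robustNhd G true ν S ⊆ S.biUnion fun x => nhd G true x \ nhd H true x := by
    intro y hy
    have hlt : #(nhd H false y) < #(S ∩ nhd G false y) := by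
      rw [hH]
      exact_mod_cast hk.trans_le (mem_robustNhd.1 hy)
    obtain ⟨x, hxG, hxH⟩ := exists_mem_notMem_of_card_lt_card hlt
    rw [mem_inter, ← Bool.not_true, mem_nhd_not_comm] at hxG
    rw [← Bool.not_true, mem_nhd_not_comm] at hxH
    exact mem_biUnion.2 ⟨x, hxG.1, mem_sdiff.2 ⟨hxG.2, hxH⟩⟩
  rcases S.eq_empty_or_nonempty with rfl | ⟨x, hx⟩
  · simp
  rcases lt_or_ge (#S : ℝ) (τ * Fintype.card V) with hS | hS
  · have hsub := card_le_card (subset_biUnion_of_mem (fun x => nhd G true x \ nhd H true x) hx)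
    have hdeg : (#(nhd G true x) : ℝ) ≤ #(nhd G true x \ nhd H true x) + k := by
      rw [← hH true x]
      exact_mod_cast card_le_card_sdiff_add_card
    have hadd := mul_le_mul_of_nonneg_right hG.add_le (Nat.cast_nonneg (α := ℝ) (Fintype.card V))
    have hlt : (#S : ℝ) < #(nhd G true x \ nhd H true x) := by
      linarith [hG.degree true x]
    exact (Nat.cast_le.1 hlt.le).trans hsub
  rcases le_total (#S : ℝ) ((1 - τ) * Fintype.card V) with hS' | hS'
  · have hexp := hG.expand true S hS hS'
    have hle : (#S : ℝ) ≤ #(robustNhd G true ν S) := by linarith [Nat.cast_nonneg (α := ℝ) k]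
    exact (Nat.cast_le.1 hle).trans (card_le_card hrobust)
  · rw [hG.robustNhd_eq_univ true hS', univ_subset_iff] at hrobust
    rw [hrobust]
    exact card_le_univ S

theorem card_nhd_or_eq {g : V → V} (hg : Function.Bijective g) (hH : ∀ x, ¬ H x (g x))
    (s : Bool) (x : V) : #(nhd (fun x y => H x y ∨ g x = y) s x) = #(nhd H s x) + 1 := by
  cases s
  · obtain ⟨z, rfl⟩ := hg.surjective x
    rw [← card_insert_of_notMem (a := z) (by simpa [dirEdge] using hH z)]
    congr 1
    ext y
    simp [dirEdge, hg.injective.eq_iff, or_comm]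
  · rw [← card_insert_of_notMem (a := g x) (by simpa [dirEdge] using hH x)]
    congr 1
    ext y
    simp [dirEdge, or_comm, eq_comm]

theorem IsRobustExpander.exists_regular (hG : IsRobustExpander G ν τ δ)
    (hk : k ≤ ν * Fintype.card V) :
    ∃ H : V → V → Prop, (∀ x y, H x y → G x y) ∧ ∀ s x, #(nhd H s x) = k := by
  induction k with
  | zero => exact ⟨fun _ _ => False, by simp, by simp [nhd, dirEdge]⟩
  | succ k ih =>
    have hk' : k < ν * Fintype.card V := lt_of_lt_of_le (by simp) hk
    obtain ⟨H, hHG, hH⟩ := ih hk'.le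
    obtain ⟨g, hg, hgN⟩ := (all_card_le_biUnion_card_iff_exists_injective _).1
      (hG.card_le_card_biUnion_sdiff hH hk')
    have hgGH : ∀ x, G x (g x) ∧ ¬ H x (g x) := fun x => by simpa [dirEdge] using hgN x
    refine ⟨fun x y => H x y ∨ g x = y, ?_, fun s x => ?_⟩
    · rintro x y (h | rfl)
      exacts [hHG x y h, (hgGH x).1]
    · rw [card_nhd_or_eq (Finite.injective_iff_bijective.1 hg) fun x => (hgGH x).2, hH]

end RegularSubdigraphs

section BalancedColorings

open Finset
open scoped Classical

variable {V J κ : Type*} [Fintype κ] [DecidableEq κ]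

/-- The indicator of the colour `i`, centred so that its values sum to zero over all colours. -/
noncomputable def centeredIndicator (i c : κ) : ℝ :=
  (if c = i then 1 else 0) - 1 / Fintype.card κ

theorem sum_centeredIndicator_mul (c : κ) (e : κ → ℝ) :
    ∑ i, centeredIndicator i c * e i = e c - 1 / Fintype.card κ * ∑ i, e i := by
  simp [centeredIndicator, sub_mul, sum_sub_distrib, mul_sum]

theorem sum_centeredIndicator (c : κ) : ∑ i, centeredIndicator i c = 0 := by
  have : Nonempty κ := ⟨c⟩
  simpa using sum_centeredIndicator_mul c fun _ => 1

theorem sum_centeredIndicator_sq_le_one (c : κ) : ∑ i, centeredIndicator i c ^ 2 ≤ 1 := by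
  simp only [sq]
  rw [sum_centeredIndicator_mul, sum_centeredIndicator, centeredIndicator]
  simp

theorem sum_sum_add_centeredIndicator_sq_le [Fintype J] {e : J → κ → ℝ} (he : ∀ j, ∑ i, e j i = 0)
    {a : J → ℝ} {c : κ} (hc : ∑ j, a j * e j c ≤ 0) :
    ∑ j, ∑ i, (a j * centeredIndicator i c + e j i) ^ 2 ≤
      ∑ j, a j ^ 2 + ∑ j, ∑ i, e j i ^ 2 := by
  have hexpand (j : J) : ∑ i, (a j * centeredIndicator i c + e j i) ^ 2 =
      a j ^ 2 * ∑ i, centeredIndicator i c ^ 2 + 2 * (a j * e j c) + ∑ i, e j i ^ 2 := by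
    rw [show e j c = ∑ i, centeredIndicator i c * e j i by simp [sum_centeredIndicator_mul, he],
      mul_sum, mul_sum, mul_sum, ← sum_add_distrib, ← sum_add_distrib]
    exact sum_congr rfl fun i _ => by ring
  calc ∑ j, ∑ i, (a j * centeredIndicator i c + e j i) ^ 2
      ≤ ∑ j, (a j ^ 2 * 1 + 2 * (a j * e j c) + ∑ i, e j i ^ 2) := by
        gcongr with j
        rw [hexpand]
        gcongr
        exact sum_centeredIndicator_sq_le_one c
    _ = ∑ j, a j ^ 2 + 2 * ∑ j, a j * e j c + ∑ j, ∑ i, e j i ^ 2 := by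
        simp only [mul_one, sum_add_distrib, ← mul_sum]
    _ ≤ _ := by linarith

-- The vertices are coloured one by one, never increasing the cross terms of the square deviations;
-- this is possible since the deviations sum to zero over all colours.
theorem exists_sum_sum_centeredIndicator_sq_le [Fintype J] [Nonempty κ] (w : J → V → ℝ)
    (U : Finset V) :
    ∃ f : V → κ, ∑ j, ∑ i, (∑ x ∈ U, w j x * centeredIndicator i (f x)) ^ 2 ≤
      ∑ j, ∑ x ∈ U, w j x ^ 2 := by
  induction U using Finset.induction_on with
  | empty => exact ⟨fun _ => Classical.arbitrary κ, by simp⟩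
  | insert v U hv ih =>
    obtain ⟨f, hf⟩ := ih
    have hsum (j : J) : ∑ i, ∑ x ∈ U, w j x * centeredIndicator i (f x) = 0 := by
      rw [sum_comm]
      exact sum_eq_zero fun x _ => by rw [← mul_sum, sum_centeredIndicator, mul_zero]
    obtain ⟨c, -, hc⟩ : ∃ c ∈ (univ : Finset κ),
        ∑ j, w j v * ∑ x ∈ U, w j x * centeredIndicator c (f x) ≤ 0 := by
      refine exists_le_of_sum_le univ_nonempty ?_
      rw [sum_comm, sum_const_zero]
      exact (sum_eq_zero fun j _ => by rw [← mul_sum, hsum, mul_zero]).le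
    have hupdate (j : J) (i : κ) :
        ∑ x ∈ insert v U, w j x * centeredIndicator i (Function.update f v c x) =
          w j v * centeredIndicator i c + ∑ x ∈ U, w j x * centeredIndicator i (f x) := by
      rw [sum_insert hv, Function.update_self]
      congr 1
      exact sum_congr rfl fun x hx => by rw [Function.update_of_ne (ne_of_mem_of_not_mem hx hv)]
    refine ⟨Function.update f v c, ?_⟩
    simp only [hupdate, sum_insert hv, sum_add_distrib]
    exact (sum_sum_add_centeredIndicator_sq_le hsum hc).trans (add_le_add_right hf _)

theorem exists_sum_sum_card_sub_sq_le [Finite V] [Fintype J] [Nonempty κ] (N : J → Finset V) :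
    ∃ f : V → κ, ∑ j, ∑ c, ((#{x ∈ N j | f x = c} : ℝ) - #(N j) / Fintype.card κ) ^ 2 ≤
      ∑ j, (#(N j) : ℝ) := by
  cases nonempty_fintype V
  obtain ⟨f, hf⟩ := exists_sum_sum_centeredIndicator_sq_le (κ := κ)
    (fun j x => if x ∈ N j then 1 else 0) univ
  have hdev (j : J) (c : κ) :
      ∑ x, (if x ∈ N j then 1 else 0) * centeredIndicator c (f x) =
        (#{x ∈ N j | f x = c} : ℝ) - #(N j) / Fintype.card κ := by
    simp only [ite_mul, one_mul, zero_mul, sum_ite_mem, univ_inter, centeredIndicator,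
      sum_sub_distrib, sum_const, nsmul_eq_mul, sum_boole]
    ring
  simp only [hdev] at hf
  exact ⟨f, by simpa using hf⟩

variable [Fintype V] {H : V → V → Prop} {f : V → κ} {η : ℝ} {k : ℕ}

/-- The colouring `f` splits the neighbourhoods of `H` evenly: if one colour `i v` is tested at each
vertex `v`, then the total deviation of its frequencies in the neighbourhoods is at most `η`. -/
def IsBalancedColoring (H : V → V → Prop) (f : V → κ) (η : ℝ) : Prop :=
  ∀ (s : Bool) (i : V → κ),
    ∑ v, |(#{x ∈ nhd H s v | f x = i v} : ℝ) - #(nhd H s v) / Fintype.card κ| ≤ η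

theorem exists_isBalancedColoring [Nonempty κ] (H : V → V → Prop) {δ : ℝ} (hδ : 0 ≤ δ)
    (hn : 2 ≤ δ ^ 2 * Fintype.card V) :
    ∃ f : V → κ, IsBalancedColoring H f (δ * (Fintype.card V : ℝ) ^ 2) := by
  obtain ⟨f, hf⟩ := exists_sum_sum_card_sub_sq_le (κ := κ) fun j : Bool × V => nhd H j.1 j.2
  refine ⟨f, fun s i => ?_⟩
  set n := (Fintype.card V : ℝ) with hn_def
  let dev (s : Bool) (v : V) (c : κ) : ℝ :=
    #{x ∈ nhd H s v | f x = c} - #(nhd H s v) / Fintype.card κ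
  have hsq : ∑ v, |dev s v (i v)| ^ 2 ≤ 2 * n ^ 2 := by
    calc ∑ v, |dev s v (i v)| ^ 2 ≤ ∑ v, ∑ c, dev s v c ^ 2 := sum_le_sum fun v _ => by
          rw [sq_abs]
          exact single_le_sum (f := fun c => dev s v c ^ 2) (fun _ _ => sq_nonneg _) (mem_univ _)
      _ ≤ ∑ s, ∑ v, ∑ c, dev s v c ^ 2 :=
          single_le_sum (f := fun s => ∑ v, ∑ c, dev s v c ^ 2)
            (fun _ _ => sum_nonneg fun _ _ => sum_nonneg fun _ _ => sq_nonneg _) (mem_univ s)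
      _ ≤ ∑ j : Bool × V, (#(nhd H j.1 j.2) : ℝ) := by rwa [Fintype.sum_prod_type] at hf
      _ ≤ ∑ _j : Bool × V, n := sum_le_sum fun j _ => Nat.cast_le.2 (card_le_univ _)
      _ = 2 * n ^ 2 := by simp [hn_def]; ring
  refine (le_abs_self _).trans (abs_le_of_sq_le_sq ?_ (by positivity))
  calc (∑ v, |dev s v (i v)|) ^ 2 ≤ n * ∑ v, |dev s v (i v)| ^ 2 := sq_sum_le_card_mul_sum_sq
    _ ≤ n * (2 * n ^ 2) := by gcongr
    _ ≤ n * (δ ^ 2 * n * n ^ 2) := by gcongr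
    _ = (δ * n ^ 2) ^ 2 := by ring

namespace IsBalancedColoring

theorem abs_sum_sub_le (hf : IsBalancedColoring H f η) (hH : ∀ s x, #(nhd H s x) = k) (s : Bool)
    (i : V → κ) (S : Finset V) :
    |(∑ v ∈ S, #{x ∈ nhd H s v | f x = i v} : ℝ) - #S * (k / Fintype.card κ)| ≤ η := by
  have hS : (#S * (k / Fintype.card κ) : ℝ) = ∑ v ∈ S, (#(nhd H s v) / Fintype.card κ : ℝ) := by
    simp [hH]
  rw [hS, ← sum_sub_distrib]
  exact (abs_sum_le_sum_abs _ _).trans ((sum_le_univ_sum_of_nonneg fun _ => abs_nonneg _).trans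
    (hf s i))

theorem card_le_card_biUnion_add (hf : IsBalancedColoring H f η) (hH : ∀ s x, #(nhd H s x) = k)
    (hk : 0 < k) [Nonempty κ] (σ : Equiv.Perm κ) (S : Finset V) :
    (#S : ℝ) ≤ #(S.biUnion fun x => {y ∈ nhd H true x | f y = σ (f x)}) +
      2 * (η * Fintype.card κ / k) := by
  set N := S.biUnion fun x => {y ∈ nhd H true x | f y = σ (f x)} with hN
  have hcount : ∑ x ∈ S, #{y ∈ nhd H true x | f y = σ (f x)} ≤
      ∑ y ∈ N, #{x ∈ nhd H false y | f x = σ.symm (f y)} := by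
    calc _ = ∑ x ∈ S, #(bipartiteAbove (fun x y => H x y ∧ f y = σ (f x)) N x) := by
          refine sum_congr rfl fun x hx => congrArg card (ext fun y => ?_)
          simp only [mem_filter, mem_nhd, dirEdge, mem_bipartiteAbove, hN, mem_biUnion]
          aesop
      _ = ∑ y ∈ N, #(bipartiteBelow (fun x y => H x y ∧ f y = σ (f x)) S y) :=
          sum_card_bipartiteAbove_eq_sum_card_bipartiteBelow _
      _ ≤ _ := sum_le_sum fun y _ => card_le_card fun x hx => by
          simp_all [bipartiteBelow, dirEdge]
  have hout := abs_le.1 (hf.abs_sum_sub_le hH true (fun x => σ (f x)) S)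
  have hin := abs_le.1 (hf.abs_sum_sub_le hH false (fun y => σ.symm (f y)) N)
  have hcount' := Nat.cast_le (α := ℝ).2 hcount
  push_cast at hcount'
  have hκ : (0 : ℝ) < Fintype.card κ := Nat.cast_pos.2 Fintype.card_pos
  have hk' : (0 : ℝ) < k := Nat.cast_pos.2 hk
  refine le_of_mul_le_mul_right ?_ (div_pos hk' hκ)
  rw [add_mul, show 2 * (η * Fintype.card κ / k) * (k / Fintype.card κ : ℝ) = 2 * η by field_simp]
  linarith

theorem card_color_le (hf : IsBalancedColoring H f η) (hH : ∀ s x, #(nhd H s x) = k)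
    (hk : 0 < k) (c : κ) : #{x | f x = c} ≤ (Fintype.card V / Fintype.card κ + η / k : ℝ) := by
  have hcount : ∑ v, #{x ∈ nhd H true v | f x = c} = k * #{x | f x = c} := by
    calc _ = ∑ v, #(bipartiteAbove H {x | f x = c} v) :=
          sum_congr rfl fun v _ => congrArg card (by ext; simp [dirEdge, and_comm])
      _ = ∑ x with f x = c, #(bipartiteBelow H univ x) :=
          sum_card_bipartiteAbove_eq_sum_card_bipartiteBelow _
      _ = ∑ x with f x = c, #(nhd H false x) :=
          sum_congr rfl fun v _ => congrArg card (by ext; simp [bipartiteBelow, dirEdge])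
      _ = _ := by simp [hH, mul_comm]
  have hdev := abs_le.1 (hf.abs_sum_sub_le hH true (fun _ => c) univ)
  rw [← Nat.cast_sum, hcount, card_univ] at hdev
  push_cast at hdev
  have hk' : (0 : ℝ) < k := Nat.cast_pos.2 hk
  refine le_of_mul_le_mul_left ?_ hk'
  rw [mul_add, mul_div_cancel₀ _ hk'.ne', mul_div_left_comm]
  linarith

end IsBalancedColoring

end BalancedColorings

section PathCoversOfRobustExpanders

open Finset Filter
open scoped Classical

universe u

theorem IsBalancedColoring.exists_isPathCover {V : Type*} [Fintype V] [Nonempty V]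
    {H : V → V → Prop} {η : ℝ} {k t : ℕ} {f : V → Fin (t + 1)} (hf : IsBalancedColoring H f η)
    (hH : ∀ s x, #(nhd H s x) = k) (hη : 0 ≤ η) (hk : 0 < k) :
    ∃ T, IsPathCover H univ T ∧
      #T ≤ (Fintype.card V / (t + 1) + η / k + 2 * (η * (t + 1) / k) : ℝ) := by
  set d := ⌊2 * (η * (t + 1) / k)⌋₊
  have hd : (d : ℝ) ≤ 2 * (η * (t + 1) / k) := Nat.floor_le (by positivity)
  obtain ⟨Y, g, hg, hgY, hY⟩ := exists_injOn_of_card_le_card_biUnion_add (d := d)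
    (t := fun x => {y ∈ nhd H true x | f y = finRotate (t + 1) (f x)}) fun S => by
      rw [add_comm, ← Nat.floor_add_natCast (by positivity), add_comm]
      refine Nat.le_floor ?_
      simpa using hf.card_le_card_biUnion_add hH hk (finRotate (t + 1)) S
  simp only [mem_filter, mem_nhd] at hgY
  obtain ⟨T, hT, hTY⟩ := exists_isPathCover_of_injOn (f := fun x => (f x : ℕ)) (g := g)
    (Y := {x ∈ Y | f x ≠ Fin.last t}) (hg.mono (by exact_mod_cast filter_subset _ _))
    fun x hx => by
      rw [(hgY x (mem_filter.1 hx).1).2]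
      exact (lt_finRotate_iff_ne_last _).2 (mem_filter.1 hx).2
  refine ⟨T, hT.mono ?_, ?_⟩
  · rintro x _ ⟨hx, rfl⟩
    simpa [dirEdge] using (hgY x (mem_filter.1 hx).1).1
  · have hlast := hf.card_color_le hH hk (Fin.last t)
    rw [Fintype.card_fin, Nat.cast_succ] at hlast
    have hYT : #T ≤ d + #{x | f x = Fin.last t} := by
      have hY' := card_filter_add_card_filter_not (s := Y) fun x => f x = Fin.last t
      have hYlast := card_le_card (filter_subset_filter (fun x => f x = Fin.last t) (subset_univ Y))
      simp only [ne_eq] at hTY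
      omega
    have hYT' : (#T : ℝ) ≤ d + #{x | f x = Fin.last t} := by exact_mod_cast hYT
    linarith

theorem eventually_le_mul_natCast {γ : ℝ} (hγ : 0 < γ) (C : ℝ) :
    ∀ᶠ n : ℕ in atTop, C ≤ γ * n :=
  (tendsto_natCast_atTop_atTop.const_mul_atTop hγ).eventually_ge_atTop C

variable {ν τ δ ε : ℝ}

theorem exists_isPathCover_of_isRobustExpander (hν : 0 < ν) (hε : 0 < ε) :
    ∀ᶠ n : ℕ in atTop, ∀ (V : Type u) [Fintype V] (G : V → V → Prop), Fintype.card V = n →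
      IsRobustExpander G ν τ δ → ∃ T, IsPathCover G univ T ∧ #T ≤ ε * n := by
  obtain ⟨t, ht⟩ := exists_nat_one_div_lt (half_pos hε)
  set ρ := ε * ν / (12 * (t + 1)) with hρ_def
  have hρ : 0 < ρ := by positivity
  filter_upwards [eventually_le_mul_natCast hν 2, eventually_le_mul_natCast (sq_pos_of_pos hρ) 2,
    eventually_gt_atTop 0] with n hνn hρn hn V _ G hV hG
  subst hV
  have : Nonempty V := Fintype.card_pos_iff.1 hn
  set n := Fintype.card V
  set k := ⌊ν * n⌋₊
  have hk_ge : ν * n / 2 ≤ k := by linarith [Nat.lt_floor_add_one (ν * n)]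
  have hk : 0 < k := Nat.cast_pos.1 (show (0 : ℝ) < k by linarith)
  obtain ⟨H, hHG, hH⟩ := hG.exists_regular (Nat.floor_le (by positivity))
  obtain ⟨f, hf⟩ := exists_isBalancedColoring (κ := Fin (t + 1)) H hρ.le hρn
  obtain ⟨T, hT, hTcard⟩ := hf.exists_isPathCover hH (by positivity) hk
  refine ⟨T, hT.mono hHG, hTcard.trans ?_⟩
  have ht_one : (1 : ℝ) ≤ t + 1 := by simp
  calc (n : ℝ) / (t + 1) + ρ * n ^ 2 / k + 2 * (ρ * n ^ 2 * (t + 1) / k)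
      = n * (1 / (t + 1)) + ρ * n ^ 2 * 1 / k + 2 * (ρ * n ^ 2 * (t + 1) / k) := by ring
    _ ≤ n * (ε / 2) + ρ * n ^ 2 * (t + 1) / (ν * n / 2) +
          2 * (ρ * n ^ 2 * (t + 1) / (ν * n / 2)) := by gcongr
    _ = ε * n := by
        rw [hρ_def]
        field_simp
        ring

theorem exists_isPathCover_compl_of_isRobustExpander (hν : 0 < ν) (hε : 0 < ε) :
    ∀ᶠ n : ℕ in atTop, ∀ (V : Type u) [Fintype V] (G : V → V → Prop), Fintype.card V = n →
      IsRobustExpander G ν τ δ → ∀ S : Finset V, #S ≤ ν / 4 * n →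
        ∃ T, IsPathCover G Sᶜ T ∧ #T ≤ ε * n := by
  obtain ⟨n₀, hn₀⟩ := eventually_atTop.1 (exists_isPathCover_of_isRobustExpander.{u}
    (τ := τ + ν / 4) (δ := δ - ν / 4) (half_pos hν) hε)
  filter_upwards [eventually_gt_atTop 0, eventually_ge_atTop (2 * n₀)]
    with n hn hn' V _ G hV hG S hS
  subst hV
  have : Nonempty V := Fintype.card_pos_iff.1 hn
  have hν' : ν ≤ 1 := by linarith [hG.nonneg, hG.add_le, hG.le_one]
  have hcard := card_subtype_notMem_add_card S
  have hlarge : n₀ ≤ Fintype.card {x // x ∉ S} := by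
    have hcast : (2 * n₀ : ℝ) ≤ Fintype.card V := by exact_mod_cast hn'
    refine Nat.cast_le (α := ℝ).1 ?_
    nlinarith
  obtain ⟨T, hT, hTcard⟩ := hn₀ _ hlarge _ _ rfl (hG.induce hν hS)
  have hS' : univ.map (.subtype (· ∉ S)) = Sᶜ := by ext; simp
  refine ⟨_, hS' ▸ hT.map (G' := G) (.subtype _) fun _ _ => id, ?_⟩
  rw [card_map]
  refine hTcard.trans ?_
  gcongr
  exact Fintype.card_subtype_le _

end PathCoversOfRobustExpanders

section Assembly

open Finset Filter
open scoped Classical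

universe u

theorem exists_injOn_mem {α β : Type*} [Inhabited β] {W : Finset α}
    {t : α → Finset β} (h : ∀ w ∈ W, #W ≤ #(t w)) :
    ∃ φ : α → β, Set.InjOn φ W ∧ ∀ w ∈ W, φ w ∈ t w := by
  obtain ⟨f, hf, hft⟩ := (all_card_le_biUnion_card_iff_exists_injective fun w : W => t w).1 <| by
    intro s
    obtain rfl | ⟨w, hw⟩ := s.eq_empty_or_nonempty
    · simp
    · exact (s.card_le_univ.trans (by simpa using h w w.2)).trans
        (card_le_card (subset_biUnion_of_mem (fun w : W => t w) hw))
  have hext (w : W) : Function.extend Subtype.val f default w = f w :=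
    Subtype.val_injective.extend_apply f _ w
  refine ⟨Function.extend Subtype.val f default, fun w hw w' hw' heq => ?_, fun w hw => ?_⟩
  · exact congr_arg Subtype.val (hf ((hext ⟨w, hw⟩).symm.trans (heq.trans (hext ⟨w', hw'⟩))))
  · exact hext ⟨w, hw⟩ ▸ hft ⟨w, hw⟩

variable {V : Type u} [Fintype V] {G : V → V → Prop} {ν τ δ : ℝ} {j : ℕ}

/-- Connectors taken from `R` join everything into a cycle, and the rest of `R` is absorbed
by `X`. -/
theorem HasConnectors.exists_isHamCycle {R X : Finset V} {B K : ℕ} (hR : HasConnectors G R B K)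
    (hXR : Disjoint X R) {a b : V} (hX : ∀ W ⊆ R, DiPath G a b (X ∪ W)) {T : Finset (Finset V)}
    (hT : IsPathCover G (X ∪ R)ᶜ T) (hne : T.Nonempty) (hB : #T * K + 2 * K ≤ B) :
    ∃ f, IsHamCycle G f := by
  have hTXR : Disjoint (T.biUnion id) (X ∪ R) := hT.biUnion_eq ▸ disjoint_compl_left
  rw [disjoint_union_right] at hTXR
  obtain ⟨c, d, C₀, hcd, hC₀, hcard₀⟩ := hR.exists_path hne hT.path hT.disjoint
    (fun P hP => hTXR.2.mono_left (subset_biUnion_of_mem id hP)) (by omega)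
  obtain ⟨C₁, hbc, hC₁, hC₁C₀, hcard₁⟩ := hR C₀ (by omega) b c
  obtain ⟨C₂, ⟨p, q, hpq, hdp, hqa⟩, hC₂, hC₂C, -⟩ := hR (C₀ ∪ C₁)
    ((card_union_le _ _).trans (by omega)) d a
  have hW : R \ (C₀ ∪ C₁ ∪ C₂) ⊆ R := sdiff_subset
  have hpath := ((hX _ hW).append_connector hbc hcd (by grind [disjoint_left])
    (by grind [disjoint_left]) (by grind [disjoint_left])).append hpq hdp
    (by grind [disjoint_left])
  refine DiPath.exists_isHamCycle (a := a) (b := q) ?_ hqa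
  convert hpath using 1
  ext z
  simp only [hT.biUnion_eq, mem_univ, mem_union, mem_compl, Finset.mem_sdiff, true_iff]
  tauto

theorem mul_le_mul_of_le_mul_of_mul_le {a b m n t : ℝ} (hm : 0 ≤ m) (hn : 0 ≤ n) (ha : a ≤ b * n)
    (ht : b * m ≤ t) : a * m ≤ t * n :=
  calc a * m ≤ b * n * m := by gcongr
    _ = b * m * n := by ring
    _ ≤ t * n := by gcongr

theorem HasConnectors.exists_absorber [Nonempty V] {B K m : ℕ} {A : Finset (List V)} {γ : ℝ}
    (hC : HasConnectors G univ B K) (hm : 2 * (4 * j + 2) + 2 * j * K + K ≤ m)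
    (hB : #A * m + K ≤ B) (hA : IsPacking ∅ A)
    (hAw : ∀ l ∈ A, ∃ v, l ∈ walks G alternating v (4 * j + 2) v)
    (hwA : ∀ v, γ * Fintype.card V ≤ #(A ∩ walks G alternating v (4 * j + 2) v)) :
    ∃ u v X, #X ≤ #A * m + K ∧ ∀ R, Disjoint X R → #R ≤ γ * Fintype.card V →
      ∀ W ⊆ R, DiPath G u v (X ∪ W) := by
  obtain ⟨u, v, X, habs, -, hX⟩ := hC.exists_isAbsorber hm hA hAw (by simpa using hB)
  refine ⟨u, v, X, hX, fun R hXR hR W hWR => ?_⟩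
  obtain ⟨φ, hφ, hφA⟩ := exists_injOn_mem (W := W)
    (t := fun w => A ∩ walks G alternating w (4 * j + 2) w) fun w _ => by
      have hWR' : (#W : ℝ) ≤ #R := by exact_mod_cast card_le_card hWR
      exact_mod_cast (hWR'.trans hR).trans (hwA w)
  exact habs W φ (hXR.mono_right hWR) hφ fun w hw => mem_inter.1 (hφA w hw)

theorem IsRobustExpander.exists_absorber {θ : ℝ} (hν : 0 < ν) (hj : 1 ≤ j * ν) (hθ : 0 < θ) :
    ∃ γ : ℝ, 0 < γ ∧ ∀ᶠ n : ℕ in atTop, ∀ (V : Type u) [Fintype V] (G : V → V → Prop),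
      Fintype.card V = n → IsRobustExpander G ν τ δ → ∃ u v X, #X ≤ θ * n ∧
        ∀ R, Disjoint X R → #R ≤ γ * n → ∀ W ⊆ R, DiPath G u v (X ∪ W) := by
  obtain ⟨K, hK⟩ : ∃ K, K = 4 * j + 2 := ⟨_, rfl⟩
  obtain ⟨m, hm⟩ : ∃ m, m = 2 * K + 2 * j * K + K := ⟨_, rfl⟩
  have hK0 : (0 : ℝ) < K := by rw [hK]; positivity
  have hKm : (K : ℝ) ≤ m := by exact_mod_cast hm ▸ Nat.le_add_left _ _
  have hj' : 1 ≤ ((4 * j + 1 : ℕ) : ℝ) * ν := by push_cast; nlinarith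
  have hc : 0 < ν ^ K / (4 * K) := by positivity
  obtain ⟨β, hβ, hβm⟩ := exists_pos_mul_lt (lt_min (half_pos hθ) hc) (m : ℝ)
  rw [mul_comm] at hβm
  obtain ⟨hβθ, hβc⟩ := lt_min_iff.1 hβm
  refine ⟨ν ^ K * β / 8, by positivity, ?_⟩
  filter_upwards [exists_isPacking 1 (pow_pos hν K) hβ (by omega)
    ((mul_le_mul_of_nonneg_left hKm hβ.le).trans hβc.le),
    eventually_le_mul_natCast (half_pos hθ) K, eventually_le_mul_natCast hc (2 * K),
    eventually_gt_atTop 0] with n hpack hnθ hnc hn V _ G hV hG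
  subst hV
  have : Nonempty V := Fintype.card_pos_iff.1 hn
  obtain ⟨A, hAw, hAcard, hA, hwA⟩ := hpack V rfl V (fun w => walks G alternating w K w) ∅
    (by simp) (fun w l hl => length_of_mem_walks hl)
    (fun w => by rw [← mul_pow, hK]; exact hG.card_walks_ge hν.le _ w w hj')
    (by rw [card_empty, Nat.cast_zero]; positivity)
  have hAm {t : ℝ} (ht : β * m < t) : #A * m ≤ t * Fintype.card V :=
    mul_le_mul_of_le_mul_of_mul_le (by positivity) (by positivity) hAcard ht.le
  have hC : HasConnectors G univ (#A * m + K) K := hK ▸ hG.hasConnectors hν hj' (by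
    rw [show 4 * j + 1 + 1 = K from hK.symm, show ν ^ K / (2 * K) = 2 * (ν ^ K / (4 * K)) by ring]
    push_cast
    linarith [hAm hβc])
  obtain ⟨u, v, X, hX, habs⟩ := hC.exists_absorber (j := j) (by omega) le_rfl hA
    (fun l hl => by simpa [hK] using hAw hl) (by simpa [hK] using hwA)
  refine ⟨u, v, X, ?_, by simpa [hK] using habs⟩
  have hX' : (#X : ℝ) ≤ #A * m + K := by exact_mod_cast hX
  linarith [hAm hβθ]

theorem IsRobustExpander.exists_reservoir {θ : ℝ} (hν : 0 < ν) (hj : 1 ≤ j * ν) (hθ : 0 < θ) :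
    ∃ γ : ℝ, 0 < γ ∧ ∀ᶠ n : ℕ in atTop, ∀ (V : Type u) [Fintype V] (G : V → V → Prop),
      Fintype.card V = n → IsRobustExpander G ν τ δ →
      ∀ F : Finset V, #F ≤ ν ^ (j + 1) / (4 * (j + 1 : ℕ)) * n →
        ∃ R, Disjoint F R ∧ #R ≤ θ * n ∧ ∀ B : ℕ, B < γ * n → HasConnectors G R B (j + 1) := by
  obtain ⟨K, hK⟩ : ∃ K, K = j + 1 := ⟨_, rfl⟩
  rw [← hK]
  have hK0 : (0 : ℝ) < K := by rw [hK]; positivity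
  have hc : 0 < ν ^ K / (4 * K) := by positivity
  obtain ⟨β, hβ, hβK⟩ := exists_pos_mul_lt (lt_min hθ hc) (K : ℝ)
  rw [mul_comm] at hβK
  obtain ⟨hβθ, hβc⟩ := lt_min_iff.1 hβK
  refine ⟨ν ^ K * β / 8, by positivity, ?_⟩
  filter_upwards [exists_isPacking 2 (pow_pos hν K) hβ (by omega) hβc.le]
    with n hpack V _ G hV hG F hF
  subst hV
  have hlen (i : V × V) : ∀ l ∈ walks G (fun _ => true) i.1 K i.2, l.length = K :=
    fun l hl => length_of_mem_walks hl
  obtain ⟨T, hTD, hTcard, hT, hTw⟩ := hpack V rfl (V × V)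
    (fun i => walks G (fun _ => true) i.1 K i.2) F (by rw [Fintype.card_prod, sq]) hlen
    (fun i => by rw [← mul_pow, hK]; exact hG.card_walks_ge hν.le _ _ _ hj) hF
  refine ⟨T.biUnion List.toFinset,
    (disjoint_biUnion_right _ _ _).2 fun l hl => (hT.isFresh l hl).2.symm, ?_, fun B hB => ?_⟩
  · have hR : #(T.biUnion List.toFinset) ≤ #T * K := card_biUnion_le_card_mul _ _ _ fun l hl => by
      obtain ⟨i, -, hi⟩ := mem_biUnion.1 (hTD hl)
      exact (List.toFinset_card_le l).trans (hlen i l hi).le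
    calc (#(T.biUnion List.toFinset) : ℝ) ≤ #T * K := by exact_mod_cast hR
      _ ≤ _ := mul_le_mul_of_le_mul_of_mul_le hK0.le (by positivity) hTcard hβθ.le
  · rw [hK]
    exact hT.hasConnectors fun u v => by
      simpa [hK] using (Nat.cast_lt (α := ℝ)).1 (hB.trans_le (hTw (u, v)))

theorem IsRobustExpander.compl_nonempty [Nonempty V] (hG : IsRobustExpander G ν τ δ) {S : Finset V}
    (hS : #S ≤ ν / 4 * Fintype.card V) : Sᶜ.Nonempty := by
  have hν : ν ≤ 1 := by linarith [hG.nonneg, hG.add_le, hG.le_one]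
  have hV : (0 : ℝ) < Fintype.card V := by exact_mod_cast Fintype.card_pos
  have hlt : (#S : ℝ) < Fintype.card V := by nlinarith
  refine card_pos.1 ?_
  rw [card_compl]
  exact Nat.sub_pos_of_lt (by exact_mod_cast hlt)

theorem IsRobustExpander.exists_isHamCycle (hν : 0 < ν) :
    ∀ᶠ n : ℕ in atTop, ∀ (V : Type u) [Fintype V] (G : V → V → Prop), Fintype.card V = n →
      IsRobustExpander G ν τ δ → ∃ f, IsHamCycle G f := by
  obtain ⟨j, hj⟩ := exists_nat_ge (1 / ν)
  rw [div_le_iff₀ hν] at hj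
  obtain ⟨K, hK⟩ : ∃ K, K = j + 1 := ⟨_, rfl⟩
  have hK0 : (0 : ℝ) < K := by rw [hK]; positivity
  have hc : 0 < ν ^ K / (4 * K) := by positivity
  have hν8 : 0 < ν / 8 := by positivity
  obtain ⟨γ, hγ, habsorber⟩ := IsRobustExpander.exists_absorber.{u} (τ := τ) (δ := δ) hν hj
    (lt_min hc hν8)
  obtain ⟨γ', hγ', hreservoir⟩ := IsRobustExpander.exists_reservoir.{u} (τ := τ) (δ := δ) hν hj
    (lt_min hγ hν8)
  filter_upwards [habsorber, hreservoir, eventually_gt_atTop 0,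
    exists_isPathCover_compl_of_isRobustExpander.{u} (τ := τ) (δ := δ) hν
      (show 0 < γ' / (4 * K) by positivity),
    eventually_le_mul_natCast (show 0 < γ' / 2 by positivity) (2 * K)]
    with n habsorber hreservoir hn hcover hnK V _ G hV hG
  obtain ⟨a, b, X, hX, habs⟩ := habsorber V G hV hG
  obtain ⟨R, hXR, hRcard, hR⟩ := hreservoir V G hV hG X
    (hX.trans (by rw [← hK]; gcongr; exact min_le_left _ _))
  obtain ⟨hXν, hRν⟩ : #X ≤ ν / 8 * n ∧ #R ≤ ν / 8 * n :=
    ⟨hX.trans (by gcongr; exact min_le_right _ _), hRcard.trans (by gcongr; exact min_le_right _ _)⟩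
  have hXRcard : (#(X ∪ R) : ℝ) ≤ ν / 4 * n := by
    have : (#(X ∪ R) : ℝ) ≤ #X + #R := by exact_mod_cast card_union_le _ _
    linarith
  obtain ⟨T, hT, hTcard⟩ := hcover V G hV hG (X ∪ R) hXRcard
  have : Nonempty V := Fintype.card_pos_iff.1 (hV ▸ hn)
  obtain ⟨x, hx⟩ := hG.compl_nonempty (hV ▸ hXRcard)
  have hne : T.Nonempty := (hT.exists_mem hx).imp fun P hP => hP.1
  refine (hR (#T * K + 2 * K) ?_).exists_isHamCycle hXR
    (habs R hXR (hRcard.trans (by gcongr; exact min_le_left _ _))) hT hne (hK ▸ le_rfl)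
  have hTK : #T * K ≤ γ' / 4 * n :=
    mul_le_mul_of_le_mul_of_mul_le hK0.le (by positivity) hTcard (by field_simp; rfl)
  have : (0 : ℝ) < γ' * n := by positivity
  push_cast at hnK ⊢
  linarith

end Assembly

section Ore

open Finset
open scoped Classical

variable {V : Type*} [Fintype V] {G : V → V → Prop} {α ν : ℝ}

/-- The number of edges from `A` to `B` in `G`, or in its reverse when `s = false`. -/
noncomputable def edgeCount (G : V → V → Prop) (s : Bool) (A B : Finset V) : ℝ :=
  ∑ x ∈ A, (#(B ∩ nhd G s x) : ℝ)

theorem edgeCount_comm (s : Bool) (A B : Finset V) :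
    edgeCount G s A B = edgeCount G (!s) B A := by
  have h := sum_card_bipartiteAbove_eq_sum_card_bipartiteBelow (s := A) (t := B) (dirEdge G s)
  have habove (x : V) : B.bipartiteAbove (dirEdge G s) x = B ∩ nhd G s x := by
    ext; simp [bipartiteAbove]
  have hbelow (y : V) : A.bipartiteBelow (dirEdge G s) y = A ∩ nhd G (!s) y := by
    ext; simp [bipartiteBelow, dirEdge_not]
  simp only [habove, hbelow] at h
  rw [edgeCount, edgeCount]
  exact_mod_cast h

theorem edgeCount_inter_add_sdiff (s : Bool) (A B C : Finset V) :
    edgeCount G s A (B ∩ C) + edgeCount G s A (B \ C) = edgeCount G s A B := by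
  rw [edgeCount, edgeCount, edgeCount, ← sum_add_distrib]
  refine sum_congr rfl fun x _ => ?_
  rw [inter_right_comm, sdiff_inter_right_comm, ← Nat.cast_add, card_inter_add_card_sdiff]

theorem edgeCount_mono {s : Bool} {A A' B B' : Finset V} (hA : A ⊆ A') (hB : B ⊆ B') :
    edgeCount G s A B ≤ edgeCount G s A' B' :=
  (sum_le_sum fun _ _ => by gcongr).trans
    (sum_le_sum_of_subset_of_nonneg hA fun _ _ _ => Nat.cast_nonneg _)

theorem edgeCount_le_mul (s : Bool) (A B : Finset V) : edgeCount G s A B ≤ #A * #B := by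
  rw [← nsmul_eq_mul]
  exact sum_le_card_nsmul _ _ _ fun x _ => by gcongr; exact inter_subset_left

theorem edgeCount_add_edgeCount_le (hG : IsOriented G) (s : Bool) (A B : Finset V) :
    edgeCount G s A B + edgeCount G (!s) A B ≤ #A * #B := by
  rw [edgeCount, edgeCount, ← sum_add_distrib, ← nsmul_eq_mul]
  refine sum_le_card_nsmul _ _ _ fun x _ => ?_
  have hdisj : Disjoint (B ∩ nhd G s x) (B ∩ nhd G (!s) x) := by
    refine (disjoint_left.2 fun y => ?_).mono inter_subset_right inter_subset_right
    cases s <;> simpa [dirEdge] using hG _ _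
  rw [← Nat.cast_add, ← card_union_of_disjoint hdisj]
  gcongr
  exact union_subset inter_subset_left inter_subset_left

theorem edgeCount_self_le (hG : IsOriented G) (s : Bool) (A : Finset V) :
    edgeCount G s A A ≤ #A * (#A / 2) := by
  have h := edgeCount_add_edgeCount_le hG s A A
  rw [← edgeCount_comm] at h
  linarith

theorem edgeCount_compl_robustNhd_le (hν : 0 ≤ ν) (s : Bool) (S : Finset V) :
    edgeCount G s S (robustNhd G s ν S)ᶜ ≤ ν * (Fintype.card V : ℝ) ^ 2 := by
  rw [edgeCount_comm]
  calc edgeCount G (!s) (robustNhd G s ν S)ᶜ S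
      ≤ #(robustNhd G s ν S)ᶜ • (ν * Fintype.card V) := sum_le_card_nsmul _ _ _ fun y hy => by
        rw [mem_compl, mem_robustNhd, not_le] at hy
        exact hy.le
    _ ≤ Fintype.card V * (ν * Fintype.card V) := by
        rw [nsmul_eq_mul]
        gcongr
        exact card_le_univ _
    _ = ν * (Fintype.card V : ℝ) ^ 2 := by ring

/-- Take `S ∩ R`, inside which at most half of the ordered pairs are edges, or, if that set is too
small, `S \ R`. -/
theorem exists_subset_edgeCount_univ_le (hG : IsOriented G) (s : Bool) {S R : Finset V} {t : ℝ}
    (ht : 0 ≤ t) (hS : 2 * t ≤ #S) : ∃ X ⊆ S, t ≤ #X ∧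
      edgeCount G s X univ ≤ #X * (#(S ∩ R) / 2 + #(R \ S) + t / 2) + edgeCount G s S Rᶜ := by
  have hsplit {X : Finset V} (hX : X ⊆ S) :
      edgeCount G s X univ ≤ edgeCount G s X (S ∩ R) + #X * #(R \ S) + edgeCount G s S Rᶜ := by
    rw [← edgeCount_inter_add_sdiff s X univ R, univ_inter, ← compl_eq_univ_sdiff,
      ← edgeCount_inter_add_sdiff s X R S, inter_comm R]
    gcongr
    · exact edgeCount_le_mul ..
    · exact edgeCount_mono hX subset_rfl
  have hcard : (#(S ∩ R) : ℝ) + #(S \ R) = #S := by exact_mod_cast card_inter_add_card_sdiff S R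
  by_cases hSR : t ≤ #(S ∩ R)
  · refine ⟨S ∩ R, inter_subset_left, hSR, (hsplit inter_subset_left).trans ?_⟩
    have := edgeCount_self_le hG s (S ∩ R)
    have : 0 ≤ #(S ∩ R) * (t / 2) := by positivity
    linarith
  · refine ⟨S \ R, sdiff_subset, by linarith, (hsplit sdiff_subset).trans ?_⟩
    have hX := edgeCount_le_mul (G := G) s (S \ R) (S ∩ R)
    have : (#(S \ R) * #(S ∩ R) : ℝ) ≤ #(S \ R) * (#(S ∩ R) / 2 + t / 2) := by gcongr; linarith
    linarith

/-- The degree condition of the theorem. -/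
def OreCondition (G : V → V → Prop) (α : ℝ) : Prop :=
  ∀ x y, x ≠ y → ¬ G x y → (3 / 4 + α) * (Fintype.card V : ℝ) ≤ outDeg G x + inDeg G y

namespace OreCondition

theorem mono {β : ℝ} (h : OreCondition G α) (hβ : β ≤ α) : OreCondition G β :=
  fun x y hxy hG => le_trans (by gcongr) (h x y hxy hG)

theorem le_card_nhd_add_card_nhd (h : OreCondition G α) {s : Bool} {x y : V} (hxy : x ≠ y)
    (hG : ¬ dirEdge G s x y) :
    (3 / 4 + α) * Fintype.card V ≤ #(nhd G s x) + #(nhd G (!s) y) := by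
  cases s
  · rw [← inDeg_eq_card_nhd, Bool.not_false, ← outDeg_eq_card_nhd, add_comm (inDeg G x : ℝ)]
    exact h y x hxy.symm hG
  · rw [← outDeg_eq_card_nhd, Bool.not_true, ← inDeg_eq_card_nhd]
    exact h x y hxy hG

theorem mul_card_sub_le (h : OreCondition G α) (hα : 0 ≤ α) (s : Bool) (x : V) (Y : Finset V) :
    (3 / 4 + α) * Fintype.card V * (#Y - #(Y ∩ nhd G s x) - 1) ≤
      #Y * #(nhd G s x) + edgeCount G (!s) Y univ := by
  have hcard : (#Y - #(Y ∩ nhd G s x) - 1 : ℝ) ≤ #((Y \ nhd G s x).erase x) := by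
    have hY : (#(Y ∩ nhd G s x) : ℝ) + #(Y \ nhd G s x) = #Y := by
      exact_mod_cast card_inter_add_card_sdiff Y _
    have herase : (#(Y \ nhd G s x) : ℝ) ≤ #((Y \ nhd G s x).erase x) + 1 := by
      exact_mod_cast Nat.sub_le_iff_le_add.1 pred_card_le_card_erase
    linarith
  calc (3 / 4 + α) * Fintype.card V * (#Y - #(Y ∩ nhd G s x) - 1)
      ≤ #((Y \ nhd G s x).erase x) • ((3 / 4 + α) * (Fintype.card V : ℝ)) := by
        rw [nsmul_eq_mul, mul_comm]
        gcongr
    _ ≤ ∑ y ∈ (Y \ nhd G s x).erase x, (#(nhd G s x) + #(nhd G (!s) y) : ℝ) :=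
        card_nsmul_le_sum _ _ _ fun y hy => by
          rw [mem_erase, Finset.mem_sdiff, mem_nhd] at hy
          exact h.le_card_nhd_add_card_nhd hy.1.symm hy.2.2
    _ ≤ ∑ y ∈ Y, (#(nhd G s x) + #(nhd G (!s) y) : ℝ) :=
        sum_le_sum_of_subset_of_nonneg ((erase_subset _ _).trans sdiff_subset)
          fun _ _ _ => by positivity
    _ = #Y * #(nhd G s x) + edgeCount G (!s) Y univ := by simp [sum_add_distrib, edgeCount]

theorem card_div_eight_le_card_nhd (h : OreCondition G α) (hG : IsOriented G) (hα : 0 ≤ α)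
    (hn : 24 ≤ Fintype.card V) (s : Bool) (x : V) :
    1 / 8 * (Fintype.card V : ℝ) ≤ #(nhd G s x) := by
  have hle := h.mul_card_sub_le hα s x univ
  have hedges := edgeCount_self_le hG (!s) univ
  rw [univ_inter, card_univ] at hle
  rw [card_univ] at hedges
  have hn' : (24 : ℝ) ≤ Fintype.card V := by exact_mod_cast hn
  by_contra! hlt
  have hlt' : 3 / 4 * (Fintype.card V - #(nhd G s x) - 1 : ℝ) ≤
      #(nhd G s x) + Fintype.card V / 2 := by
    refine le_of_mul_le_mul_left (a := (Fintype.card V : ℝ)) ?_ (by linarith)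
    calc Fintype.card V * (3 / 4 * (Fintype.card V - #(nhd G s x) - 1 : ℝ))
        ≤ Fintype.card V * ((3 / 4 + α) * (Fintype.card V - #(nhd G s x) - 1 : ℝ)) := by
          gcongr <;> linarith
      _ ≤ _ := by linarith
  linarith

theorem mul_card_mul_card_sub_le (h : OreCondition G α) (hα : 0 ≤ α) (s : Bool)
    (X Y : Finset V) :
    (3 / 4 + α) * Fintype.card V * (#X * #Y - edgeCount G s X Y - Fintype.card V) ≤
      #Y * edgeCount G s X univ + #X * edgeCount G (!s) Y univ := by
  calc (3 / 4 + α) * Fintype.card V * (#X * #Y - edgeCount G s X Y - Fintype.card V)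
      ≤ (3 / 4 + α) * Fintype.card V * (#X * #Y - edgeCount G s X Y - #X) := by
        gcongr
        exact card_le_univ X
    _ = ∑ x ∈ X, (3 / 4 + α) * Fintype.card V * (#Y - #(Y ∩ nhd G s x) - 1 : ℝ) := by
        simp [← mul_sum, edgeCount]
    _ ≤ ∑ x ∈ X, (#Y * #(nhd G s x) + edgeCount G (!s) Y univ) :=
        sum_le_sum fun x _ => h.mul_card_sub_le hα s x Y
    _ = #Y * edgeCount G s X univ + #X * edgeCount G (!s) Y univ := by
        simp [sum_add_distrib, ← mul_sum, edgeCount]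

end OreCondition

theorem mul_le_add_of_mul_mul_sub_le {n x y r κ ε η : ℝ} (hn : 0 < n) (hκ : κ ≤ 1) (hε : 0 < ε)
    (hε' : ε ≤ 1) (hη : 0 ≤ η) (hx : ε * n ≤ x) (hy : ε * n ≤ y)
    (h : κ * n * (x * y - η * n ^ 2) ≤ x * y * r + (x + y) * (η * n ^ 2)) :
    κ * n ≤ r + 3 * η / ε ^ 2 * n := by
  have hx0 : 0 < x := (by positivity : 0 < ε * n).trans_le hx
  have hy0 : 0 < y := (by positivity : 0 < ε * n).trans_le hy
  have hnx : n ≤ x / ε := by rwa [le_div_iff₀' hε]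
  have hny : n ≤ y / ε := by rwa [le_div_iff₀' hε]
  have hnn : n ^ 2 ≤ x * y / ε ^ 2 :=
    calc n ^ 2 = n * n := sq n
      _ ≤ x / ε * (y / ε) := by gcongr
      _ = _ := by field_simp
  have hdiv : x * y / ε ≤ x * y / ε ^ 2 := by
    gcongr
    exact pow_le_of_le_one hε.le hε' two_ne_zero
  have hxn : x * n ≤ x * y / ε ^ 2 :=
    calc x * n ≤ x * (y / ε) := by gcongr
      _ = x * y / ε := by ring
      _ ≤ x * y / ε ^ 2 := hdiv
  have hyn : y * n ≤ x * y / ε ^ 2 :=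
    calc y * n ≤ y * (x / ε) := by gcongr
      _ = x * y / ε := by ring
      _ ≤ x * y / ε ^ 2 := hdiv
  have hmul : x * y * (κ * n) ≤ x * y * (r + 3 * η / ε ^ 2 * n) :=
    calc x * y * (κ * n) ≤ x * y * r + η * n * (x * n + y * n + κ * n ^ 2) := by linarith
      _ ≤ x * y * r + η * n * (x * y / ε ^ 2 + x * y / ε ^ 2 + 1 * (x * y / ε ^ 2)) := by gcongr
      _ = x * y * (r + 3 * η / ε ^ 2 * n) := by ring
  exact le_of_mul_le_mul_left hmul (by positivity)

namespace OreCondition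

theorem le_of_edgeCount_le (h : OreCondition G α) (hα : 0 ≤ α) (hα' : α ≤ 1 / 4)
    (hn : 1 ≤ ν * Fintype.card V) (s : Bool) {X Y : Finset V} {ε r : ℝ} (hε : 0 < ε)
    (hε' : ε ≤ 1) (hX : ε * Fintype.card V ≤ #X) (hY : ε * Fintype.card V ≤ #Y)
    (hXY : edgeCount G s X Y ≤ ν * (Fintype.card V : ℝ) ^ 2)
    (hr : #Y * edgeCount G s X univ + #X * edgeCount G (!s) Y univ ≤
      #X * #Y * r + (#X + #Y) * (ν * (Fintype.card V : ℝ) ^ 2)) :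
    (3 / 4 + α) * Fintype.card V ≤ r + 6 * ν / ε ^ 2 * Fintype.card V := by
  set n := (Fintype.card V : ℝ) with hn_def
  have hn0 : 0 < n := (Nat.cast_nonneg _).lt_of_ne fun h0 => by
    rw [hn_def, ← h0, mul_zero] at hn
    exact hn.not_gt one_pos
  have hν : 0 < ν := pos_of_mul_pos_left (one_pos.trans_le hn) hn0.le
  have hnν : n ≤ ν * n ^ 2 := by nlinarith
  have hνn : 0 ≤ ν * n ^ 2 := by positivity
  have hmul : (3 / 4 + α) * n * (#X * #Y - 2 * ν * n ^ 2) ≤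
      #X * #Y * r + (#X + #Y) * (2 * ν * n ^ 2) :=
    calc (3 / 4 + α) * n * (#X * #Y - 2 * ν * n ^ 2)
        ≤ (3 / 4 + α) * n * (#X * #Y - edgeCount G s X Y - n) :=
          mul_le_mul_of_nonneg_left (by linarith) (by positivity)
      _ ≤ #X * #Y * r + (#X + #Y) * (ν * n ^ 2) := (h.mul_card_mul_card_sub_le hα s X Y).trans hr
      _ ≤ #X * #Y * r + (#X + #Y) * (2 * ν * n ^ 2) := by gcongr; linarith
  convert mul_le_add_of_mul_mul_sub_le hn0 (by linarith) hε hε' (by positivity) hX hY hmul using 4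
  ring

theorem card_le_of_edgeCount_self_le (h : OreCondition G α) (hG : IsOriented G) (hα : 0 ≤ α)
    (hα' : α ≤ 1 / 4) (hνα : 768 * ν ≤ α) (hn : 1 ≤ ν * Fintype.card V) {s : Bool} {C : Finset V}
    (hC : edgeCount G s C C ≤ ν * (Fintype.card V : ℝ) ^ 2) :
    #C ≤ (1 / 4 - α / 2) * Fintype.card V := by
  have : (0 : ℝ) ≤ Fintype.card V := Nat.cast_nonneg _
  have hedges : edgeCount G s C univ + edgeCount G (!s) C univ ≤
      #C * (Fintype.card V - #C) + 2 * (ν * (Fintype.card V : ℝ) ^ 2) := by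
    have hcross := edgeCount_add_edgeCount_le hG s C Cᶜ
    rw [card_compl, Nat.cast_sub (card_le_univ C)] at hcross
    have hC' : edgeCount G (!s) C C = edgeCount G s C C := (edgeCount_comm s C C).symm
    rw [← edgeCount_inter_add_sdiff s C univ C, ← edgeCount_inter_add_sdiff (!s) C univ C,
      univ_inter, ← compl_eq_univ_sdiff]
    linarith
  by_contra! hlt
  have hX : 1 / 8 * (Fintype.card V : ℝ) ≤ #C := by nlinarith
  have hle := h.le_of_edgeCount_le hα hα' hn s (ε := 1 / 8) (r := Fintype.card V - #C)
    (by norm_num) (by norm_num) hX hX hC (by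
      rw [← mul_add]
      calc #C * (edgeCount G s C univ + edgeCount G (!s) C univ)
          ≤ #C * (#C * (Fintype.card V - #C) + 2 * (ν * (Fintype.card V : ℝ) ^ 2)) := by gcongr
        _ = _ := by ring)
  have hνn : 768 * ν * (Fintype.card V : ℝ) ≤ α * Fintype.card V := by gcongr
  rw [show 6 * ν / (1 / 8) ^ 2 = 384 * ν by ring] at hle
  linarith

theorem le_of_edgeCount_compl_le (h : OreCondition G α) (hG : IsOriented G) (hα : 0 ≤ α)
    (hα' : α ≤ 1 / 4) (hn : 1 ≤ ν * Fintype.card V) {s : Bool} {S R : Finset V} {ε : ℝ}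
    (hε : 0 < ε) (hε' : ε ≤ 1) (hS : 2 * (ε * Fintype.card V) ≤ #S)
    (hR : 2 * (ε * Fintype.card V) ≤ #Rᶜ)
    (hSR : edgeCount G s S Rᶜ ≤ ν * (Fintype.card V : ℝ) ^ 2) :
    (3 / 4 + α) * Fintype.card V ≤ (#(S ∩ R) + #(S ∪ R)ᶜ) / 2 + 2 * #(R \ S) +
      ε * Fintype.card V + 6 * ν / ε ^ 2 * Fintype.card V := by
  set n := (Fintype.card V : ℝ)
  obtain ⟨X, hXS, hX, hXe⟩ := exists_subset_edgeCount_univ_le hG s (R := R) (by positivity) hS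
  obtain ⟨Y, hYR, hY, hYe⟩ :=
    exists_subset_edgeCount_univ_le hG (!s) (R := Sᶜ) (by positivity) hR
  have hdiff : Sᶜ \ Rᶜ = R \ S := by ext; simp [and_comm]
  rw [edgeCount_comm (!s) Rᶜ, compl_compl, Bool.not_not, hdiff, inter_comm, ← compl_union] at hYe
  refine h.le_of_edgeCount_le hα hα' hn s hε hε' hX hY ((edgeCount_mono hXS hYR).trans hSR) ?_
  calc #Y * edgeCount G s X univ + #X * edgeCount G (!s) Y univ
      ≤ #Y * (#X * (#(S ∩ R) / 2 + #(R \ S) + ε * n / 2) + ν * n ^ 2) +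
        #X * (#Y * (#(S ∪ R)ᶜ / 2 + #(R \ S) + ε * n / 2) + ν * n ^ 2) := by
        gcongr
        · exact hXe.trans (by gcongr)
        · exact hYe.trans (by gcongr)
    _ = _ := by ring

/-- If `#R < #S + ν n`, then the bound of `le_of_edgeCount_compl_le` is at most about
`n / 2 + #(S \ R)`, and `S \ R` spans few edges, hence has at most `(1 / 4 - α / 2) n` elements. -/
theorem card_add_mul_le_card_robustNhd (h : OreCondition G α) (hG : IsOriented G) (hα : 0 < α)
    (hα' : α ≤ 1 / 32) (hν : ν = α ^ 3 / 300) (hn : 1 ≤ ν * Fintype.card V) (s : Bool)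
    {S : Finset V} (hS : 1 / 16 * Fintype.card V ≤ (#S : ℝ))
    (hS' : #S ≤ (1 - 1 / 16) * (Fintype.card V : ℝ)) :
    #S + ν * Fintype.card V ≤ #(robustNhd G s ν S) := by
  set n := (Fintype.card V : ℝ)
  set R := robustNhd G s ν S
  have hν0 : 0 < ν := by rw [hν]; positivity
  have hν' : 768 * ν ≤ α :=
    calc 768 * ν = 768 / 300 * α * α ^ 2 := by rw [hν]; ring
      _ ≤ 768 / 300 * α * (1 / 32) ^ 2 := by gcongr
      _ ≤ α := by linarith
  have hn0 : 0 < n := pos_of_mul_pos_right (one_pos.trans_le hn) hν0.le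
  have hνn : 768 * ν * n ≤ α * n := by gcongr
  have hαn : α * n ≤ 1 / 32 * n := by gcongr
  have hSR : edgeCount G s S Rᶜ ≤ ν * n ^ 2 := edgeCount_compl_robustNhd_le hν0.le s S
  have hsdiff : #(S \ R) ≤ (1 / 4 - α / 2) * n :=
    h.card_le_of_edgeCount_self_le hG hα.le (by linarith) hν' hn
      ((edgeCount_mono sdiff_subset fun x hx => by simp_all).trans hSR)
  by_contra! hlt
  have hcompl : (#Rᶜ : ℝ) = n - #R := by rw [card_compl, Nat.cast_sub (card_le_univ R)]
  have hcard_S : (#(S ∩ R) : ℝ) + #(S \ R) = #S := by exact_mod_cast card_inter_add_card_sdiff S R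
  have hcard_R : (#(S ∩ R) : ℝ) + #(R \ S) = #R := by
    rw [inter_comm]; exact_mod_cast card_inter_add_card_sdiff R S
  have hcard_union : (#(S ∪ R)ᶜ : ℝ) = n - #S - #(R \ S) := by
    rw [card_compl, Nat.cast_sub (card_le_univ _), union_comm, ← card_sdiff_add_card R S]
    push_cast
    ring
  have hle := h.le_of_edgeCount_compl_le hG hα.le (by linarith) hn (ε := α / 2) (by positivity)
    (by linarith) (by linarith) (by linarith) hSR
  have hconst : 6 * ν / (α / 2) ^ 2 = 2 / 25 * α := by rw [hν]; field_simp; norm_num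
  rw [hconst] at hle
  linarith

theorem isRobustExpander (h : OreCondition G α) (hG : IsOriented G) (hα : 0 < α)
    (hα' : α ≤ 1 / 32) (hν : ν = α ^ 3 / 300) (hn : 1 ≤ ν * Fintype.card V) :
    IsRobustExpander G ν (1 / 16) (1 / 8) where
  nonneg := by norm_num
  add_le := by
    have : α ^ 3 ≤ (1 / 32) ^ 3 := by gcongr
    linarith
  degree := by
    refine h.card_div_eight_le_card_nhd hG hα.le ?_
    have : α ^ 3 ≤ (1 / 32) ^ 3 := by gcongr
    have : ν ≤ 1 / 24 := by linarith
    have : (24 : ℝ) ≤ Fintype.card V := by nlinarith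
    exact_mod_cast this
  expand s S hS hS' := h.card_add_mul_le_card_robustNhd hG hα hα' hν hn s hS hS'

end OreCondition
end Ore

/-- For every α > 0 there exists n₀ such that every oriented graph on n ≥ n₀ vertices
satisfying d⁺(x) + d⁻(y) ≥ (3/4 + α)n whenever there is no edge from x to y (x ≠ y)
contains a Hamilton cycle. -/
theorem oriented_hamilton_ore (α : ℝ) (hα : 0 < α) :
    ∃ n₀ : ℕ, ∀ (V : Type) [Fintype V] (G : V → V → Prop),
      IsOriented G →
      n₀ ≤ Fintype.card V →
      (∀ x y : V, x ≠ y → ¬ G x y →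
        (3 / 4 + α) * (Fintype.card V : ℝ) ≤ (outDeg G x : ℝ) + (inDeg G y : ℝ)) →
      ∃ f : ZMod (Fintype.card V) → V, IsHamCycle G f := by
  set β := min α (1 / 32)
  have hβ : 0 < β := lt_min hα (by norm_num)
  have hν : 0 < β ^ 3 / 300 := by positivity
  obtain ⟨n₀, hn₀⟩ := Filter.eventually_atTop.1
    ((IsRobustExpander.exists_isHamCycle hν).and (eventually_le_mul_natCast hν 1))
  refine ⟨n₀, fun V _ G hG hn h => ?_⟩
  obtain ⟨hham, hcard⟩ := hn₀ _ hn
  have hOre : OreCondition G β := OreCondition.mono h (min_le_left _ _)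
  exact hham V G rfl (hOre.isRobustExpander hG hβ (min_le_right _ _) rfl hcard)
end

section
/- Let G be a strongly connected digraph on n ≥ 2 vertices. If d⁺(x) + d⁻(y) ≥ n for every ordered pair of distinct vertices x, y for which there is no edge from x to y, then G has a Hamilton cycle. -/
/-- A digraph is strongly connected if there is a directed path between any two vertices. -/
def StronglyConnected {V : Type*} (G : V → V → Prop) : Prop :=
  ∀ x y : V, Relation.ReflTransGen G x y

/-!
The argument proves Meyniel's theorem, the version of Woodall's theorem whose hypothesis
`d(x) + d(y) ≥ 2n - 1` concerns total degrees and only pairs with no edge in either direction. For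
such a pair, Woodall's condition on `(x, y)` and `(y, x)` adds up to `d(x) + d(y) ≥ 2n`.

Suppose `S` is the vertex set of a cycle, maximal under inclusion, and `y ∉ S`. By strong
connectivity some walk leaves `S`, visits `y` and returns to `S`; choose it so that the stretch
(*gap*) of the cycle between its ends `a` and `b` is minimal, and let `P` be the complementary
stretch from `b` to `a`. By minimality, inside the gap no vertex `r` is joined to `y` in either
direction, not even through a vertex outside `S`. By maximality, `y` cannot be inserted into `P`, so
`y` has at most `|P| + 1` edges to `S`. Now insert vertices of the gap into `P` as long as possible.
The result `P'` cannot absorb the whole gap, since closing it up through `y` would give a larger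
cycle. A vertex `r` left over has at most `|P'| + 1` edges to `P'` and at most
`2(|S| - |P'| - 1)` to the rest of `S`, while outside `S` the vertices `y` and `r` together have at
most `2(n - |S| - 1)` edges, there being no path of length two between them. As `|P| ≤ |P'|`, this
adds up to `d(y) + d(r) ≤ 2n - 2`.
-/

/-- `PathThrough G u v T`: there is a directed walk from `u` to `v` which, after leaving `u`, visits
each vertex of `T` exactly once and no other vertex. Whether `u ∈ T` is left open, so that this
covers paths (with vertex set `insert u T`, if `u ∉ T`) as well as cycles (if `u = v ∈ T`), and
concatenation and splitting need no side condition on the endpoints. -/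
inductive PathThrough {V : Type*} [DecidableEq V] (G : V → V → Prop) : V → V → Finset V → Prop
  | refl (u : V) : PathThrough G u u ∅
  | head {u w v : V} {T : Finset V} :
      G u w → PathThrough G w v T → w ∉ T → PathThrough G u v (insert w T)

namespace PathThrough

variable {V : Type*} [DecidableEq V] {G : V → V → Prop} {u v w x : V} {T T' : Finset V}

theorem single (h : G u v) : PathThrough G u v {v} := by
  simpa using head h (refl v) (Finset.notMem_empty v)

theorem mem_of_ne (h : PathThrough G u v T) (huv : u ≠ v) : v ∈ T := by
  induction h with
  | refl u => exact absurd rfl huv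
  | @head u w v T _ _ _ ih =>
    by_cases hwv : w = v
    · simp [hwv]
    · exact Finset.mem_insert_of_mem (ih hwv)

theorem trans (h : PathThrough G u v T) (h' : PathThrough G v w T') (hd : Disjoint T T') :
    PathThrough G u w (T ∪ T') := by
  induction h with
  | refl u => simpa using h'
  | head huw _ hw ih =>
    rw [Finset.disjoint_insert_left] at hd
    rw [Finset.insert_union]
    exact head huw (ih h' hd.2) (by simp [hw, hd.1])

theorem tail (h : PathThrough G u v T) (hvw : G v w) (hw : w ∉ T) :
    PathThrough G u w (insert w T) := by
  rw [Finset.insert_eq, Finset.union_comm]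
  exact h.trans (single hvw) (Finset.disjoint_singleton_right.2 hw)

theorem exists_split (h : PathThrough G u v T) (hx : x ∈ T) :
    ∃ T' ⊆ T, x ∈ T' ∧ PathThrough G u x T' ∧ PathThrough G x v (T \ T') := by
  induction h with
  | refl u => simp at hx
  | @head u w v T huw hwv hw ih =>
    by_cases hxw : x = w
    · subst hxw
      refine ⟨{x}, by simp, by simp, single huw, ?_⟩
      rwa [Finset.sdiff_singleton_eq_erase, Finset.erase_insert hw]
    · obtain ⟨T', hT', hxT', hwx, hxv⟩ := ih (Finset.mem_of_mem_insert_of_ne hx hxw)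
      refine ⟨insert w T', Finset.insert_subset_insert w hT', Finset.mem_insert_of_mem hxT',
        head huw hwx fun hmem => hw (hT' hmem), ?_⟩
      rwa [Finset.insert_sdiff_insert, Finset.sdiff_insert_of_notMem hw]

theorem exists_nat_param (h : PathThrough G u v T) :
    ∃ g : ℕ → V, g 0 = u ∧ g T.card = v ∧ (∀ i < T.card, G (g i) (g (i + 1))) ∧
      ∀ x ∈ T, ∃ i < T.card, g (i + 1) = x := by
  induction h with
  | refl u => exact ⟨fun _ => u, rfl, rfl, by simp, by simp⟩
  | @head u w v T huw _ hw ih =>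
    obtain ⟨g, hstart, hend, hadj, hsurj⟩ := ih
    rw [Finset.card_insert_of_notMem hw]
    refine ⟨fun i => Nat.casesOn i u g, rfl, hend, ?_, ?_⟩
    · rintro (_ | i) hi
      · simpa [hstart] using huw
      · exact hadj i (by omega)
    · intro x hx
      rcases Finset.mem_insert.1 hx with rfl | hx
      · exact ⟨0, by omega, hstart⟩
      · obtain ⟨i, hi, rfl⟩ := hsurj x hx
        exact ⟨i + 1, by omega, rfl⟩

end PathThrough

/-- `CycleThrough G S`: there is a directed cycle in `G` with vertex set exactly `S`. -/
def CycleThrough {V : Type*} [DecidableEq V] (G : V → V → Prop) (S : Finset V) : Prop :=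
  ∃ u ∈ S, PathThrough G u u S

namespace CycleThrough

variable {V : Type*} [DecidableEq V] {G : V → V → Prop} {S : Finset V}

theorem pathThrough_self {a : V} (h : CycleThrough G S) (ha : a ∈ S) : PathThrough G a a S := by
  obtain ⟨u, -, hu⟩ := h
  obtain ⟨T, hT, -, hua, hau⟩ := hu.exists_split ha
  simpa [Finset.union_eq_left.2 hT] using hau.trans hua Finset.sdiff_disjoint

theorem exists_isHamCycle [Fintype V] (h : CycleThrough G Finset.univ) :
    ∃ f : ZMod (Fintype.card V) → V, IsHamCycle G f := by
  obtain ⟨u, -, hu⟩ := h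
  obtain ⟨g, hstart, hend, hadj, hsurj⟩ := hu.exists_nat_param
  rw [Finset.card_univ] at hend hadj hsurj
  have : Nonempty V := ⟨u⟩
  let f : ZMod (Fintype.card V) → V := fun i => g i.val
  have hfg : ∀ k ≤ Fintype.card V, f k = g k := by
    intro k hk
    rcases hk.lt_or_eq with hlt | rfl
    · simp [f, ZMod.val_cast_of_lt hlt]
    · simp [f, hstart, hend]
  refine ⟨f, (Fintype.bijective_iff_surjective_and_card f).2 ⟨fun x => ?_, ZMod.card _⟩,
    fun i => ?_⟩
  · obtain ⟨i, hi, rfl⟩ := hsurj x (Finset.mem_univ x)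
    exact ⟨(i + 1 : ℕ), hfg _ hi⟩
  · have hi : i.val < Fintype.card V := ZMod.val_lt i
    have hsucc : f (i + 1) = g (i.val + 1) := by
      rw [← hfg _ hi, Nat.cast_succ, ZMod.natCast_zmod_val]
    rw [hsucc]
    exact hadj i.val hi

end CycleThrough

/-- `ReachesAvoiding G S x y`: there is a directed walk from `x` to `y` all of whose vertices after
the first one lie outside `S`. -/
def ReachesAvoiding {V : Type*} (G : V → V → Prop) (S : Finset V) : V → V → Prop :=
  Relation.ReflTransGen fun u v => G u v ∧ v ∉ S

/-- `ReturnsAvoiding G S x y`: there is a nonempty directed walk from `x` to `y` all of whose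
vertices strictly between its ends lie outside `S`. -/
def ReturnsAvoiding {V : Type*} (G : V → V → Prop) (S : Finset V) (x y : V) : Prop :=
  ∃ p, ReachesAvoiding G S x p ∧ G p y

section Avoiding

variable {V : Type*} {G : V → V → Prop} {S : Finset V} {x y z : V}

theorem ReachesAvoiding.trans (h : ReachesAvoiding G S x y) (h' : ReachesAvoiding G S y z) :
    ReachesAvoiding G S x z :=
  Relation.ReflTransGen.trans h h'

theorem ReachesAvoiding.notMem (h : ReachesAvoiding G S x y) (hx : x ∉ S) : y ∉ S := by
  rcases Relation.ReflTransGen.cases_tail h with rfl | ⟨_, _, _, hy⟩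
  exacts [hx, hy]

theorem ReachesAvoiding.exists_pathThrough [DecidableEq V] (h : ReachesAvoiding G S x y) :
    ∃ T, PathThrough G x y T ∧ Disjoint T S := by
  induction h with
  | refl => exact ⟨∅, .refl x, Finset.disjoint_empty_left S⟩
  | @tail v w _ hvw ih =>
    obtain ⟨T, hT, hTS⟩ := ih
    by_cases hw : w ∈ T
    · obtain ⟨T', hT', -, hxw, -⟩ := hT.exists_split hw
      exact ⟨T', hxw, Finset.disjoint_of_subset_left hT' hTS⟩
    · exact ⟨insert w T, hT.tail hvw.1 hw, Finset.disjoint_insert_left.2 ⟨hvw.2, hTS⟩⟩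

theorem ReachesAvoiding.exists_of_reflTransGen (hx : x ∈ S) (h : Relation.ReflTransGen G x y) :
    ∃ a ∈ S, ReachesAvoiding G S a y := by
  induction h with
  | refl => exact ⟨x, hx, .refl⟩
  | @tail v w _ hvw ih =>
    by_cases hw : w ∈ S
    · exact ⟨w, hw, .refl⟩
    · obtain ⟨a, ha, hav⟩ := ih
      exact ⟨a, ha, hav.tail ⟨hvw, hw⟩⟩

theorem ReturnsAvoiding.exists_of_reflTransGen (hx : x ∉ S) (hy : y ∈ S)
    (h : Relation.ReflTransGen G x y) : ∃ b ∈ S, ReturnsAvoiding G S x b := by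
  by_contra! hno
  have hreach : ReachesAvoiding G S x y := by
    clear hy
    induction h with
    | refl => exact .refl
    | tail _ hvw ih => exact ih.tail ⟨hvw, fun hw => hno _ hw ⟨_, ih, hvw⟩⟩
  exact hreach.notMem hx hy

end Avoiding

theorem StronglyConnected.exists_cycleThrough {V : Type*} [DecidableEq V] [Nontrivial V]
    {G : V → V → Prop} (h : StronglyConnected G) : ∃ S, CycleThrough G S := by
  obtain ⟨x, y, hxy⟩ := exists_pair_ne V
  obtain rfl | ⟨z, hxz, -⟩ := Relation.ReflTransGen.cases_head (h x y)
  · exact absurd rfl hxy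
  obtain ⟨a, ha, hax⟩ :=
    ReachesAvoiding.exists_of_reflTransGen (Finset.mem_singleton_self z) (h z x)
  obtain rfl : a = z := Finset.mem_singleton.1 ha
  obtain ⟨T, hT, hTa⟩ := hax.exists_pathThrough
  exact ⟨insert a T, a, Finset.mem_insert_self a T,
    hT.tail hxz (Finset.disjoint_singleton_right.1 hTa)⟩

/-- The number of edges, in either direction, between the vertex `x` and the set `X`. -/
def degreeOn {V : Type*} (G : V → V → Prop) [DecidableRel G] (X : Finset V) (x : V) : ℕ :=
  (X.filter (G x)).card + (X.filter (G · x)).card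

section DegreeOn

variable {V : Type*} {G : V → V → Prop} [DecidableRel G] {X Y : Finset V} {x y : V}

theorem degreeOn_univ [Fintype V] : degreeOn G Finset.univ x = outDeg G x + inDeg G x := by
  simp only [degreeOn, outDeg, inDeg, Nat.card_eq_fintype_card, Fintype.card_subtype]

theorem degreeOn_union [DecidableEq V] (h : Disjoint X Y) :
    degreeOn G (X ∪ Y) x = degreeOn G X x + degreeOn G Y x := by
  simp only [degreeOn, Finset.filter_union,
    Finset.card_union_of_disjoint (Finset.disjoint_filter_filter h)]
  ring

theorem degreeOn_sdiff_add_degreeOn [DecidableEq V] (h : X ⊆ Y) :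
    degreeOn G (Y \ X) x + degreeOn G X x = degreeOn G Y x := by
  rw [← degreeOn_union Finset.sdiff_disjoint, Finset.sdiff_union_of_subset h]

theorem degreeOn_eq_zero (h : ∀ z ∈ X, ¬ G x z ∧ ¬ G z x) : degreeOn G X x = 0 := by
  rw [degreeOn, Finset.filter_false_of_mem fun z hz => (h z hz).1,
    Finset.filter_false_of_mem fun z hz => (h z hz).2, Finset.card_empty]

theorem degreeOn_add_two_le [Std.Irrefl G] (hx : x ∈ X) : degreeOn G X x + 2 ≤ 2 * X.card := by
  have hout : (X.filter (G x)).card < X.card :=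
    Finset.card_lt_card (Finset.filter_ssubset.2 ⟨x, hx, irrefl x⟩)
  have hin : (X.filter (G · x)).card < X.card :=
    Finset.card_lt_card (Finset.filter_ssubset.2 ⟨x, hx, irrefl x⟩)
  rw [degreeOn]
  omega

theorem degreeOn_add_degreeOn_add_two_le [Std.Irrefl G] (hx : x ∈ X) (hxy : ¬ G x y)
    (hyx : ¬ G y x) (hpath : ∀ z ∈ X, G x z → ¬ G z y) (hpath' : ∀ z ∈ X, G y z → ¬ G z x) :
    degreeOn G X x + degreeOn G X y + 2 ≤ 2 * X.card := by
  classical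
  have hlt : ∀ {u v : V}, ¬ G u x → ¬ G x v → (∀ z ∈ X, G u z → ¬ G z v) →
      (X.filter (G u)).card + (X.filter (G · v)).card < X.card := by
    intro u v hux hxv huv
    rw [← Finset.card_union_of_disjoint (Finset.disjoint_filter.2 huv), ← Finset.filter_or]
    exact Finset.card_lt_card (Finset.filter_ssubset.2 ⟨x, hx, by simp [hux, hxv]⟩)
  have hxy_lt := hlt (irrefl x) hxy hpath
  have hyx_lt := hlt hyx (irrefl x) hpath'
  rw [degreeOn, degreeOn]
  omega

variable [DecidableEq V] {u v : V} {T : Finset V}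

/- If `x` fits nowhere in the path, then for each of its `|T|` edges `(w, w')` at most one of
`(w, x)` and `(x, w')` is an edge of `G`; only the possible edge `(v, x)` remains to be counted. -/
theorem PathThrough.insert_or_card_filter_le (h : PathThrough G u v T) (hx : x ∉ T) :
    PathThrough G u v (insert x T) ∨
      (T.filter (G x)).card + ((insert u T).filter (G · x)).card ≤ T.card + 1 := by
  induction h with
  | refl u => exact .inr (by simpa using Finset.card_filter_le {u} (G · x))
  | @head u w v T huw hwv hw ih =>
    obtain ⟨hxw, hxT⟩ : x ≠ w ∧ x ∉ T := by simpa using hx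
    rcases ih hxT with hins | hcard
    · rw [Finset.insert_comm]
      exact .inl (.head huw hins (by simp [hw, hxw.symm]))
    by_cases hfit : G u x ∧ G x w
    · exact .inl (.head hfit.1 (.head hfit.2 hwv hw) hx)
    · right
      have hout : ((insert w T).filter (G x)).card ≤
          (T.filter (G x)).card + if G x w then 1 else 0 := by
        rw [Finset.filter_insert]
        split_ifs
        exacts [Finset.card_insert_le _ _, le_rfl]
      have hin : ((insert u (insert w T)).filter (G · x)).card ≤
          ((insert w T).filter (G · x)).card + if G u x then 1 else 0 := by
        rw [Finset.filter_insert]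
        split_ifs
        exacts [Finset.card_insert_le _ _, le_rfl]
      rw [Finset.card_insert_of_notMem hw]
      split_ifs at hout hin <;> first | omega | tauto

theorem PathThrough.insert_or_degreeOn_le (h : PathThrough G u v T) (hx : x ∉ T) :
    PathThrough G u v (insert x T) ∨ degreeOn G (insert u T) x ≤ T.card + 2 := by
  refine (h.insert_or_card_filter_le hx).imp_right fun hcard => ?_
  have hout : ((insert u T).filter (G x)).card ≤ (T.filter (G x)).card + 1 := by
    rw [Finset.filter_insert]
    split_ifs
    exacts [Finset.card_insert_le _ _, Nat.le_succ _]
  rw [degreeOn]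
  omega

theorem PathThrough.exists_extension_degreeOn_le (h : PathThrough G u v T) (hT : T ⊆ X) :
    ∃ P, T ⊆ P ∧ P ⊆ X ∧ PathThrough G u v P ∧
      ∀ x ∈ X \ P, degreeOn G (insert u P) x ≤ P.card + 2 := by
  have hfin : {P | PathThrough G u v P ∧ P ⊆ X}.Finite :=
    X.powerset.finite_toSet.subset fun P hP => Finset.mem_coe.2 (Finset.mem_powerset.2 hP.2)
  obtain ⟨P, hTP, hP⟩ := hfin.exists_le_maximal ⟨h, hT⟩
  refine ⟨P, hTP, hP.prop.2, hP.prop.1, fun x hx => ?_⟩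
  obtain ⟨hxX, hxP⟩ := Finset.mem_sdiff.1 hx
  exact (hP.prop.1.insert_or_degreeOn_le hxP).resolve_left fun hins =>
    hP.not_prop_of_gt (Finset.ssubset_insert hxP) ⟨hins, Finset.insert_subset hxX hP.prop.2⟩

end DegreeOn

/-- A bypass, through the vertex `y`, of a cycle with vertex set `S`: the cycle leads from `a` to
`b` through `L` and back to `a` through `S \ L`, while outside `S` one can also go from `a` to `y`
and from `y` to `b`. The set `L` is the gap of the bypass, together with its end `b`; for `a = b` it
is the whole cycle. -/
structure IsBypass {V : Type*} [DecidableEq V] (G : V → V → Prop) (S : Finset V) (y a b : V)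
    (L : Finset V) : Prop where
  subset : L ⊆ S
  mem : b ∈ L
  gap : PathThrough G a b L
  rest : PathThrough G b a (S \ L)
  leaves : ReachesAvoiding G S a y
  returns : ReturnsAvoiding G S y b

namespace IsBypass

variable {V : Type*} [DecidableEq V] {G : V → V → Prop} {S L : Finset V} {y a b r : V}

theorem exists_ssubset_of_reachesAvoiding (h : IsBypass G S y a b L) (hr : r ∈ L) (hrb : r ≠ b)
    (hry : ReachesAvoiding G S r y) : ∃ L' ⊂ L, IsBypass G S y r b L' := by
  obtain ⟨T, hTL, hrT, hfirst, hlast⟩ := h.gap.exists_split hr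
  refine ⟨L \ T, Finset.sdiff_ssubset hTL ⟨r, hrT⟩, Finset.sdiff_subset.trans h.subset,
    hlast.mem_of_ne hrb, hlast, ?_, hry, h.returns⟩
  have hbr := h.rest.trans hfirst (Finset.disjoint_of_subset_right hTL Finset.sdiff_disjoint)
  rwa [← Finset.sdiff_sdiff_eq_sdiff_union (hTL.trans h.subset)] at hbr

theorem exists_ssubset_of_returnsAvoiding (h : IsBypass G S y a b L) (hr : r ∈ L) (hrb : r ≠ b)
    (hyr : ReturnsAvoiding G S y r) : ∃ L' ⊂ L, IsBypass G S y a r L' := by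
  obtain ⟨T, hTL, hrT, hfirst, hlast⟩ := h.gap.exists_split hr
  have hbT : b ∉ T := (Finset.mem_sdiff.1 (hlast.mem_of_ne hrb)).2
  refine ⟨T, Finset.ssubset_iff_of_subset hTL |>.2 ⟨b, h.mem, hbT⟩, hTL.trans h.subset, hrT, hfirst,
    ?_, h.leaves, hyr⟩
  have hra := hlast.trans h.rest (Finset.disjoint_of_subset_left Finset.sdiff_subset
    Finset.disjoint_sdiff)
  rwa [Finset.union_comm, Finset.sdiff_union_sdiff_cancel h.subset hTL] at hra

theorem exists_of_stronglyConnected (hsc : StronglyConnected G) (hS : CycleThrough G S)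
    (hy : y ∉ S) : ∃ L a b, IsBypass G S y a b L := by
  have ⟨c, hc, _⟩ := hS
  obtain ⟨a, ha, hay⟩ := ReachesAvoiding.exists_of_reflTransGen hc (hsc c y)
  obtain ⟨b, hb, hyb⟩ := ReturnsAvoiding.exists_of_reflTransGen hy hc (hsc y c)
  obtain ⟨L, hLS, hbL, hab, hba⟩ := (hS.pathThrough_self ha).exists_split hb
  exact ⟨L, a, b, hLS, hbL, hab, hba, hay, hyb⟩

theorem left_mem (h : IsBypass G S y a b L) : a ∈ S := by
  by_cases hba : b = a
  · exact hba ▸ h.subset h.mem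
  · exact Finset.sdiff_subset (h.rest.mem_of_ne hba)

theorem exists_detour (h : IsBypass G S y a b L) (hy : y ∉ S) :
    ∃ T, T.Nonempty ∧ Disjoint T S ∧ PathThrough G a b (insert b T) := by
  obtain ⟨p, hyp, hpb⟩ := h.returns
  obtain ⟨T, hT, hTS⟩ := (h.leaves.trans hyp).exists_pathThrough
  have hap : a ≠ p := fun hap => hyp.notMem hy (hap ▸ h.left_mem)
  exact ⟨T, ⟨p, hT.mem_of_ne hap⟩, hTS,
    hT.tail hpb (Finset.disjoint_right.1 hTS (h.subset h.mem))⟩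

theorem not_pathThrough_erase (h : IsBypass G S y a b L) (hS : Maximal (CycleThrough G) S)
    (hy : y ∉ S) : ¬ PathThrough G b a (S.erase b) := by
  intro hba
  obtain ⟨T, ⟨t, ht⟩, hTS, hab⟩ := h.exists_detour hy
  have hb : b ∈ S := h.subset h.mem
  have hdisj : Disjoint (S.erase b) (insert b T) := Finset.disjoint_insert_right.2
    ⟨Finset.notMem_erase b S, Finset.disjoint_of_subset_left (Finset.erase_subset b S) hTS.symm⟩
  have hcycle : CycleThrough G (S ∪ T) := by
    refine ⟨b, Finset.mem_union_left T hb, ?_⟩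
    have hbb := hba.trans hab hdisj
    rwa [Finset.union_insert, ← Finset.insert_union, Finset.insert_erase hb] at hbb
  have hTsub : T ⊆ S :=
    Finset.subset_union_right.trans (hS.le_of_ge hcycle Finset.subset_union_left)
  exact Finset.disjoint_left.1 hTS ht (hTsub ht)

theorem not_pathThrough_insert (h : IsBypass G S y a b L) (hS : Maximal (CycleThrough G) S)
    (hy : y ∉ S) : ¬ PathThrough G b a (insert y (S \ L)) := by
  intro hba
  have hdisj : Disjoint (insert y (S \ L)) L :=
    Finset.disjoint_insert_left.2 ⟨fun hyL => hy (h.subset hyL), Finset.sdiff_disjoint⟩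
  have hcycle : CycleThrough G (insert y S) := by
    refine ⟨b, Finset.mem_insert_of_mem (h.subset h.mem), ?_⟩
    have hbb := hba.trans h.gap hdisj
    rwa [Finset.insert_union, Finset.sdiff_union_of_subset h.subset] at hbb
  exact hS.not_prop_of_gt (Finset.ssubset_insert hy) hcycle

variable [DecidableRel G]

theorem degreeOn_le (h : IsBypass G S y a b L) (hS : Maximal (CycleThrough G) S) (hy : y ∉ S)
    (hgap : ∀ s ∈ L.erase b, ¬ G y s ∧ ¬ G s y) : degreeOn G S y ≤ (S \ L).card + 2 := by
  have hrest : degreeOn G (insert b (S \ L)) y ≤ (S \ L).card + 2 :=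
    (h.rest.insert_or_degreeOn_le fun hyS => hy (Finset.sdiff_subset hyS)).resolve_left
      (h.not_pathThrough_insert hS hy)
  have hsplit : S \ L.erase b = insert b (S \ L) := Finset.sdiff_erase (h.subset h.mem)
  rwa [← degreeOn_sdiff_add_degreeOn ((Finset.erase_subset b L).trans h.subset), hsplit,
    degreeOn_eq_zero hgap, add_zero]

theorem exists_degreeOn_add_le [Std.Irrefl G] (h : IsBypass G S y a b L)
    (hS : Maximal (CycleThrough G) S) (hy : y ∉ S) :
    ∃ r ∈ L.erase b, degreeOn G S r + (S \ L).card + 2 ≤ 2 * S.card := by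
  have hb : b ∈ S := h.subset h.mem
  have hbSL : b ∉ S \ L := fun hb' => (Finset.mem_sdiff.1 hb').2 h.mem
  obtain ⟨P, hSLP, hPS, hP, hdeg⟩ := h.rest.exists_extension_degreeOn_le
    (Finset.subset_erase.2 ⟨Finset.sdiff_subset, hbSL⟩)
  have hPne : P ≠ S.erase b := fun hPeq => h.not_pathThrough_erase hS hy (hPeq ▸ hP)
  obtain ⟨r, hrS, hrP⟩ := Finset.exists_of_ssubset (hPS.ssubset_of_ne hPne)
  obtain ⟨hrb, hrS'⟩ := Finset.mem_erase.1 hrS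
  have hrL : r ∈ L := by
    by_contra hrL
    exact hrP (hSLP (Finset.mem_sdiff.2 ⟨hrS', hrL⟩))
  refine ⟨r, Finset.mem_erase.2 ⟨hrb, hrL⟩, ?_⟩
  have hbP : b ∉ P := fun hbP => Finset.notMem_erase b S (hPS hbP)
  have hbPS : insert b P ⊆ S := Finset.insert_subset hb (hPS.trans (Finset.erase_subset b S))
  have hon : degreeOn G (insert b P) r ≤ P.card + 2 := hdeg r (Finset.mem_sdiff.2 ⟨hrS, hrP⟩)
  have hoff : degreeOn G (S \ insert b P) r + 2 ≤ 2 * (S \ insert b P).card :=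
    degreeOn_add_two_le (by simp [hrS', hrb, hrP])
  have hsplit := degreeOn_sdiff_add_degreeOn (G := G) (x := r) hbPS
  have hcard := Finset.card_sdiff_add_card_eq_card hbPS
  rw [Finset.card_insert_of_notMem hbP] at hcard
  have hle := Finset.card_le_card hSLP
  omega

end IsBypass

theorem StronglyConnected.exists_not_adj_degreeOn_add_le {V : Type*} [Fintype V] [DecidableEq V]
    {G : V → V → Prop} [DecidableRel G] [Std.Irrefl G] (hsc : StronglyConnected G) {S : Finset V}
    (hS : Maximal (CycleThrough G) S) (hne : S ≠ Finset.univ) :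
    ∃ x y, x ≠ y ∧ ¬ G x y ∧ ¬ G y x ∧
      degreeOn G Finset.univ x + degreeOn G Finset.univ y + 2 ≤ 2 * Fintype.card V := by
  obtain ⟨y, hy⟩ : ∃ y, y ∉ S := by simpa [Finset.eq_univ_iff_forall] using hne
  obtain ⟨L, hmin⟩ := Set.toFinite {L | ∃ a b, IsBypass G S y a b L} |>.exists_minimal
    (IsBypass.exists_of_stronglyConnected hsc hS.prop hy)
  obtain ⟨a, b, h⟩ := hmin.prop
  have hfrom : ∀ s ∈ L.erase b, ¬ ReachesAvoiding G S s y := by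
    intro s hs hsy
    obtain ⟨hsb, hsL⟩ := Finset.mem_erase.1 hs
    obtain ⟨L', hlt, hL'⟩ := h.exists_ssubset_of_reachesAvoiding hsL hsb hsy
    exact hmin.not_prop_of_lt hlt ⟨s, b, hL'⟩
  have hto : ∀ s ∈ L.erase b, ¬ ReturnsAvoiding G S y s := by
    intro s hs hys
    obtain ⟨hsb, hsL⟩ := Finset.mem_erase.1 hs
    obtain ⟨L', hlt, hL'⟩ := h.exists_ssubset_of_returnsAvoiding hsL hsb hys
    exact hmin.not_prop_of_lt hlt ⟨a, s, hL'⟩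
  have hnadj : ∀ s ∈ L.erase b, ¬ G y s ∧ ¬ G s y := fun s hs =>
    ⟨fun hys => hto s hs ⟨y, .refl, hys⟩, fun hsy => hfrom s hs (.single ⟨hsy, hy⟩)⟩
  obtain ⟨r, hr, hdeg_r⟩ := h.exists_degreeOn_add_le hS hy
  have hdeg_y := h.degreeOn_le hS hy hnadj
  have hdeg_compl : degreeOn G Sᶜ y + degreeOn G Sᶜ r + 2 ≤ 2 * Sᶜ.card :=
    degreeOn_add_degreeOn_add_two_le (Finset.mem_compl.2 hy) (hnadj r hr).1 (hnadj r hr).2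
      (fun z hz hyz hzr => hto r hr ⟨z, .single ⟨hyz, Finset.mem_compl.1 hz⟩, hzr⟩)
      fun z hz hrz hzy => hfrom r hr (.head ⟨hrz, Finset.mem_compl.1 hz⟩ (.single ⟨hzy, hy⟩))
  have hrS : r ∈ S := h.subset (Finset.mem_of_mem_erase hr)
  refine ⟨y, r, fun hyr => hy (hyr ▸ hrS), (hnadj r hr).1, (hnadj r hr).2, ?_⟩
  rw [← Finset.union_compl S, degreeOn_union disjoint_compl_right,
    degreeOn_union disjoint_compl_right]
  have hcard := Finset.card_add_card_compl S
  omega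

/-- Meyniel's theorem. -/
theorem woodall_general {V : Type*} [Fintype V] [Nontrivial V] {G : V → V → Prop} [Std.Irrefl G]
    (hsc : StronglyConnected G)
    (hdeg : ∀ x y : V, x ≠ y → ¬ G x y → ¬ G y x →
      2 * Fintype.card V ≤ (outDeg G x + inDeg G x) + (outDeg G y + inDeg G y) + 1) :
    ∃ f : ZMod (Fintype.card V) → V, IsHamCycle G f := by
  classical
  obtain ⟨C, hC⟩ := hsc.exists_cycleThrough
  obtain ⟨S, -, hS⟩ := Finite.exists_le_maximal hC
  by_cases hne : S = Finset.univ
  · exact CycleThrough.exists_isHamCycle (hne ▸ hS.prop)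
  · obtain ⟨x, y, hxy, hnxy, hnyx, hle⟩ := hsc.exists_not_adj_degreeOn_add_le hS hne
    have hge := hdeg x y hxy hnxy hnyx
    rw [degreeOn_univ, degreeOn_univ] at hle
    omega

/-- Woodall's theorem: a strongly connected digraph on n ≥ 2 vertices in which
d⁺(x) + d⁻(y) ≥ n for every ordered pair of distinct vertices x, y with no edge from x to y
has a Hamilton cycle. -/
theorem woodall (V : Type) [Fintype V] (G : V → V → Prop)
    (hirr : Irreflexive G)
    (hn : 2 ≤ Fintype.card V)
    (hsc : StronglyConnected G)
    (hdeg : ∀ x y : V, x ≠ y → ¬ G x y → Fintype.card V ≤ outDeg G x + inDeg G y) :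
    ∃ f : ZMod (Fintype.card V) → V, IsHamCycle G f := by
  have : Nontrivial V := Fintype.one_lt_card_iff_nontrivial.1 hn
  have : Std.Irrefl G := ⟨hirr⟩
  exact woodall_general hsc fun x y hxy hnxy hnyx => by
    linarith [hdeg x y hxy hnxy, hdeg y x hxy.symm hnyx]
end

section
/- Let G be a strongly connected digraph on n ≥ 2 vertices. If d(x) + d(y) ≥ 2n − 1 for every pair of distinct non-adjacent vertices x, y in G, then G has a Hamilton cycle. -/
/-- The total degree of a vertex. -/
noncomputable def totalDeg {V : Type*} (G : V → V → Prop) (x : V) : ℕ :=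
  outDeg G x + inDeg G x

/-!
Suppose a longest directed cycle `C` misses a vertex. By strong connectivity some walk leaves `C` at
`a`, continues through a vertex `y` off `C` and returns to `C` at `b`. Among all such bypasses of
`C` choose one for which the gap, that is the segment of `C` strictly between `a` and `b`, is
shortest. Insert vertices of the gap into the rest of `C`, a path from `b` to `a`, for as long as
possible. If the whole gap were absorbed, the bypass would close up the resulting path to a cycle
longer than `C`, so some gap vertex `w` is left over. Shortness of the gap forbids edges between `y`
and the gap, and also paths of length two between `y` and `w` through a vertex off `C`. Since a
vertex that cannot be inserted into a path on `k` vertices has at most `k + 1` edges to and from it,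
counting edges gives `d(y) + d(w) ≤ 2n - 2` for the non-adjacent vertices `y` and `w`.
-/

namespace Meyniel

variable {V : Type*} {G : V → V → Prop}

/-- `P` lists the vertices of a directed path from `a` to `b` in order, both ends included. -/
structure IsDipath (G : V → V → Prop) (a b : V) (P : List V) : Prop where
  nodup : P.Nodup
  isChain : P.IsChain G
  head?_eq : P.head? = some a
  getLast?_eq : P.getLast? = some b

namespace IsDipath

variable {a b c x : V} {P P₁ P₂ : List V}

lemma ne_nil (hP : IsDipath G a b P) : P ≠ [] :=
  List.isSome_head?.1 (by simp [hP.head?_eq])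

lemma singleton (G : V → V → Prop) (a : V) : IsDipath G a a [a] := by
  constructor <;> simp

lemma cons (hP : IsDipath G a b P) (hxa : G x a) (hx : x ∉ P) : IsDipath G x b (x :: P) where
  nodup := List.nodup_cons.2 ⟨hx, hP.nodup⟩
  isChain := hP.isChain.cons (by simpa [hP.head?_eq])
  head?_eq := rfl
  getLast?_eq := by simp [List.getLast?_cons, hP.getLast?_eq]

lemma of_append_cons (hP : IsDipath G a b (P₁ ++ c :: P₂)) : IsDipath G c b (c :: P₂) where
  nodup := hP.nodup.of_append_right
  isChain := (List.isChain_append.1 hP.isChain).2.1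
  head?_eq := rfl
  getLast?_eq := by simpa using hP.getLast?_eq

lemma insert {u v w : V} (hP : IsDipath G a b (P₁ ++ u :: v :: P₂)) (huw : G u w) (hwv : G w v)
    (hw : w ∉ P₁ ++ u :: v :: P₂) : IsDipath G a b (P₁ ++ u :: w :: v :: P₂) where
  nodup := by
    have hnodup := hP.nodup
    simp only [List.nodup_append, List.nodup_cons, List.mem_append, List.mem_cons] at hnodup hw ⊢
    grind
  isChain := by
    have hchain := hP.isChain
    simp only [List.isChain_append_cons_cons] at hchain
    simp [hchain, huw, hwv]
  head?_eq := by simpa using hP.head?_eq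
  getLast?_eq := by simpa using hP.getLast?_eq

end IsDipath

/-- `ReachesOutside G S b y`: there is a walk from `y` to `b` with at least one edge, all of whose
vertices except possibly `b` lie outside `S`. -/
inductive ReachesOutside (G : V → V → Prop) (S : Set V) (b : V) : V → Prop
  | edge {y : V} : y ∉ S → G y b → ReachesOutside G S b y
  | step {y z : V} : y ∉ S → G y z → ReachesOutside G S b z → ReachesOutside G S b y

namespace ReachesOutside

variable {S T : Set V} {b y : V}

lemma notMem (h : ReachesOutside G S b y) : y ∉ S := by
  cases h <;> assumption

lemma mono (hTS : T ⊆ S) (h : ReachesOutside G S b y) : ReachesOutside G T b y := by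
  induction h with
  | edge hy hyb => exact .edge (mt (@hTS _) hy) hyb
  | step hy hyz _ ih => exact .step (mt (@hTS _) hy) hyz ih

lemma exists_isDipath (h : ReachesOutside G S b y) :
    ∃ z P, IsDipath G y z P ∧ (∀ x ∈ P, x ∉ S) ∧ G z b := by
  induction h with
  | @edge y hy hyb => exact ⟨y, [y], .singleton G y, by simpa using hy, hyb⟩
  | @step y x hy hyx _ ih =>
    obtain ⟨z, P, hP, hPS, hzb⟩ := ih
    by_cases hyP : y ∈ P
    · obtain ⟨P₁, P₂, rfl⟩ := List.append_of_mem hyP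
      exact ⟨z, y :: P₂, hP.of_append_cons, fun v hv => hPS v (List.mem_append_right _ hv), hzb⟩
    · exact ⟨z, y :: P, hP.cons hyx hyP, List.forall_mem_cons.2 ⟨hy, hPS⟩, hzb⟩

end ReachesOutside

lemma exists_rel_mem_notMem {S : Set V} {a z : V} (h : Relation.ReflTransGen G a z) (ha : a ∈ S)
    (hz : z ∉ S) : ∃ x ∈ S, ∃ y ∉ S, G x y := by
  induction h with
  | refl => exact absurd ha hz
  | @tail x y _ hxy ih =>
    by_cases hx : x ∈ S
    · exact ⟨x, hx, y, hz, hxy⟩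
    · exact ih hx

lemma exists_reachesOutside {S : Set V} {a y : V} (h : Relation.ReflTransGen G y a) (ha : a ∈ S)
    (hy : y ∉ S) : ∃ b ∈ S, ReachesOutside G S b y := by
  induction h using Relation.ReflTransGen.head_induction_on with
  | refl => exact absurd ha hy
  | @head y x hyx _ ih =>
    by_cases hx : x ∈ S
    · exact ⟨x, hx, .edge hy hyx⟩
    · obtain ⟨b, hb, hxb⟩ := ih hx
      exact ⟨b, hb, .step hy hyx hxb⟩

lemma exists_ear (hsc : StronglyConnected G) {S : Set V} {v z : V} (hv : v ∈ S) (hz : z ∉ S) :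
    ∃ a ∈ S, ∃ b ∈ S, ∃ y, G a y ∧ ReachesOutside G S b y := by
  obtain ⟨a, ha, y, hy, hay⟩ := exists_rel_mem_notMem (hsc v z) hv hz
  obtain ⟨b, hb, hyb⟩ := exists_reachesOutside (hsc y a) ha hy
  exact ⟨a, ha, b, hb, y, hay, hyb⟩

/-- `C` is a directed cycle of `G`. The empty cycle is allowed, and a one-vertex cycle is a loop. -/
structure IsDicycle (G : V → V → Prop) (C : Cycle V) : Prop where
  nodup : C.Nodup
  chain : C.Chain G

lemma cycle_chain_coe_iff {l : List V} :
    (l : Cycle V).Chain G ↔ l.IsChain G ∧ ∀ x ∈ l.getLast?, ∀ y ∈ l.head?, G x y := by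
  rcases eq_or_ne l [] with rfl | hl
  · simp
  · rw [Cycle.chain_ne_nil G hl, List.isChain_cons, List.getLast?_eq_some_getLast hl]
    simp [and_comm]

lemma cycle_coe_append_comm (l₁ l₂ : List V) : (↑(l₁ ++ l₂) : Cycle V) = ↑(l₂ ++ l₁) :=
  Cycle.coe_eq_coe.2 List.isRotated_append

lemma IsDicycle.isDipath {M Q : List V} {a b : V} (h : IsDicycle G (M ++ Q : List V))
    (hb : Q.head? = some b) (ha : Q.getLast? = some a) : IsDipath G b a Q where
  nodup := (Cycle.nodup_coe_iff.1 h.nodup).of_append_right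
  isChain := (List.isChain_append.1 (cycle_chain_coe_iff.1 h.chain).1).2.1
  head?_eq := hb
  getLast?_eq := ha

lemma rel_getElem_succ_mod_of_chain {l : List V} (h : (l : Cycle V).Chain G) {i : ℕ}
    (hi : i < l.length) : G l[i] (l[(i + 1) % l.length]'(Nat.mod_lt _ (by omega))) := by
  obtain ⟨hchain, hclose⟩ := cycle_chain_coe_iff.1 h
  rcases Nat.lt_or_ge (i + 1) l.length with hlt | hge
  · simpa only [Nat.mod_eq_of_lt hlt] using List.isChain_iff_getElem.1 hchain i hlt
  · obtain rfl : i = l.length - 1 := by omega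
    have hmod : (l.length - 1 + 1) % l.length = 0 := by
      rw [Nat.sub_add_cancel (by omega), Nat.mod_self]
    simp only [hmod]
    exact hclose _ (by simp [List.getLast?_eq_getElem?]) _ (by simp [List.head?_eq_getElem?])

lemma IsDicycle.exists_isHamCycle [Fintype V] [Nontrivial V] {C : Cycle V} (hC : IsDicycle G C)
    (hall : ∀ v, v ∈ C) : ∃ f : ZMod (Fintype.card V) → V, IsHamCycle G f := by
  classical
  obtain ⟨l, rfl⟩ := Quotient.exists_rep C
  have hl : l.Nodup := Cycle.nodup_coe_iff.1 hC.nodup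
  have hlen : l.length = Fintype.card V := by
    rw [← List.toFinset_card_of_nodup hl, ← Finset.card_univ]
    congr
    ext v
    simpa using hall v
  have : NeZero (Fintype.card V) := ⟨Fintype.card_ne_zero⟩
  have : Fact (1 < Fintype.card V) := ⟨Fintype.one_lt_card⟩
  have hlt (i : ZMod (Fintype.card V)) : i.val < l.length := i.val_lt.trans_eq hlen.symm
  refine ⟨fun i => l[i.val]'(hlt i), ?_, fun i => ?_⟩
  · refine (Fintype.bijective_iff_injective_and_card _).2 ⟨fun i j hij => ?_, ZMod.card _⟩
    exact ZMod.val_injective _ (hl.getElem_inj_iff.1 hij)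
  · have hval : (i + 1).val = (i.val + 1) % l.length := by
      rw [ZMod.val_add, ZMod.val_one, hlen]
    simpa only [hval] using rel_getElem_succ_mod_of_chain hC.chain (hlt i)

lemma IsDipath.isDicycle_append {P Q : List V} {a b y z : V} (hP : IsDipath G y z P)
    (hQ : IsDipath G b a Q) (hPQ : P.Disjoint Q) (hzb : G z b) (hay : G a y) :
    IsDicycle G (P ++ Q : List V) where
  nodup := Cycle.nodup_coe_iff.2 (hP.nodup.append hQ.nodup hPQ)
  chain := by
    rw [cycle_chain_coe_iff, List.isChain_append, List.head?_append_of_ne_nil _ hP.ne_nil,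
      List.getLast?_append_of_ne_nil _ hQ.ne_nil]
    simp [hP.isChain, hQ.isChain, hP.head?_eq, hP.getLast?_eq, hQ.head?_eq, hQ.getLast?_eq,
      hzb, hay]

lemma IsDipath.exists_isDicycle_length_lt {Q : List V} {a b y : V} (hQ : IsDipath G b a Q)
    (hay : G a y) (hyb : ReachesOutside G {v | v ∈ Q} b y) :
    ∃ C, IsDicycle G C ∧ Q.length < C.length := by
  obtain ⟨z, P, hP, hPQ, hzb⟩ := hyb.exists_isDipath
  refine ⟨_, hP.isDicycle_append hQ hPQ hzb hay, ?_⟩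
  simpa using List.length_pos_iff.2 hP.ne_nil

/-- `C` is a directed cycle of `G` of maximum length. -/
structure IsLongestDicycle (G : V → V → Prop) (C : Cycle V) : Prop extends IsDicycle G C where
  length_le : ∀ C', IsDicycle G C' → C'.length ≤ C.length

lemma exists_isLongestDicycle [Finite V] (G : V → V → Prop) : ∃ C, IsLongestDicycle G C := by
  classical
  have := Fintype.ofFinite V
  have hnodup : {C : Cycle V | C.Nodup}.Finite :=
    Set.finite_coe_iff.1 (Finite.of_fintype {C : Cycle V // C.Nodup})
  have hfin : {C | IsDicycle G C}.Finite := hnodup.subset fun _ h => h.nodup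
  obtain ⟨C, hC, hmax⟩ :=
    Set.exists_max_image _ Cycle.length hfin ⟨Cycle.nil, Cycle.nodup_nil, .nil G⟩
  exact ⟨C, hC, hmax⟩

/-- `w` cannot be inserted between two consecutive vertices of `P`. -/
def InsertionFree (G : V → V → Prop) (w : V) (P : List V) : Prop :=
  P.IsChain fun u v => ¬ (G u w ∧ G w v)

namespace IsLongestDicycle

variable {C : Cycle V}

lemma exists_mem [Nontrivial V] (hC : IsLongestDicycle G C) (hsc : StronglyConnected G) :
    ∃ v, v ∈ C := by
  obtain ⟨v, z, hvz⟩ := exists_pair_ne V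
  obtain ⟨_, rfl, _, rfl, y, hvy, hyv⟩ := exists_ear hsc (Set.mem_singleton v) hvz.symm
  obtain ⟨C', hC', hlt⟩ := (IsDipath.singleton G _).exists_isDicycle_length_lt hvy
    (hyv.mono (by simp))
  have hpos : 0 < C.length := (Nat.zero_le _).trans_lt (hlt.trans_le (hC.length_le C' hC'))
  induction C with
  | nil => simp at hpos
  | cons v l => exact ⟨v, by simp⟩

lemma insertionFree {M Q : List V} {y : V} (hC : IsLongestDicycle G (M ++ Q : List V))
    (hy : y ∉ M ++ Q) : InsertionFree G y Q := by
  rw [InsertionFree, List.isChain_iff_forall_rel_of_append_cons_cons]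
  rintro u v Q₁ Q₂ rfl ⟨huy, hyv⟩
  have hrot : (↑(M ++ (Q₁ ++ u :: v :: Q₂)) : Cycle V) = ↑((v :: Q₂) ++ (M ++ Q₁ ++ [u])) := by
    simpa using cycle_coe_append_comm (M ++ Q₁ ++ [u]) (v :: Q₂)
  have hpath : IsDipath G v u ((v :: Q₂) ++ (M ++ Q₁ ++ [u])) :=
    IsDicycle.isDipath (M := []) (hrot ▸ hC.toIsDicycle) rfl
      (by rw [← List.append_assoc, List.getLast?_concat])
  obtain ⟨C', hC', hlt⟩ := hpath.exists_isDicycle_length_lt huy (.edge (by simp_all) hyv)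
  have hle := hC.length_le C' hC'
  rw [hrot, Cycle.length_coe] at hle
  exact hlt.not_ge hle

end IsLongestDicycle

/-- A bypass of the cycle `C`: an edge from a vertex `start` of `C` to a vertex `first` off `C`,
followed by a walk off `C` that returns to `C` at `finish`. The cycle is recorded as the path `rest`
from `finish` to `start`, followed by the vertices of `gap`, which the bypass avoids; `start` and
`finish` may coincide. -/
structure Bypass (G : V → V → Prop) (C : Cycle V) where
  gap : List V
  rest : List V
  start : V
  finish : V
  first : V
  coe_eq : (↑(gap ++ rest) : Cycle V) = C
  head?_rest : rest.head? = some finish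
  getLast?_rest : rest.getLast? = some start
  rel_first : G start first
  reaches : ReachesOutside G {v | v ∈ C} finish first

lemma nonempty_bypass (hsc : StronglyConnected G) {C : Cycle V} {v z : V} (hv : v ∈ C)
    (hz : z ∉ C) : Nonempty (Bypass G C) := by
  obtain ⟨a, ha, b, hb, y, hay, hyb⟩ := exists_ear (S := {v | v ∈ C}) hsc hv hz
  obtain ⟨l, rfl⟩ := Quotient.exists_rep C
  obtain ⟨l₁, l₂, rfl⟩ := List.append_of_mem (show a ∈ l from ha)
  have hrot : (↑(l₂ ++ (l₁ ++ [a])) : Cycle V) = ↑(l₁ ++ a :: l₂) := by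
    simpa using cycle_coe_append_comm l₂ (l₁ ++ [a])
  have hbmem : b ∈ l₂ ++ (l₁ ++ [a]) := by
    rw [← Cycle.mem_coe_iff, hrot]
    exact hb
  obtain ⟨M, N, hMN⟩ := List.append_of_mem hbmem
  have hlast : (b :: N).getLast? = some a := by
    simpa using (congrArg List.getLast? hMN).symm
  exact ⟨⟨M, b :: N, a, b, y, by rw [← hMN]; exact hrot, rfl, hlast, hay, hyb⟩⟩

namespace Bypass

variable {C : Cycle V} (B : Bypass G C)

lemma mem_iff {v : V} : v ∈ C ↔ v ∈ B.gap ++ B.rest := by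
  rw [← Cycle.mem_coe_iff, B.coe_eq]

lemma first_notMem : B.first ∉ C := B.reaches.notMem

lemma isDipath_rest (hC : IsDicycle G C) : IsDipath G B.finish B.start B.rest :=
  IsDicycle.isDipath (by rwa [B.coe_eq]) B.head?_rest B.getLast?_rest

lemma nodup (hC : IsDicycle G C) : (B.gap ++ B.rest).Nodup :=
  Cycle.nodup_coe_iff.1 (B.coe_eq.symm ▸ hC.nodup)

/-- `B` has the shortest gap among all bypasses of the same cycle. -/
def IsShortest : Prop := ∀ B' : Bypass G C, B.gap.length ≤ B'.gap.length

variable {B}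

namespace IsShortest

variable {c : V}

lemma not_reachesOutside_gap (hB : B.IsShortest) (hc : c ∈ B.gap) :
    ¬ ReachesOutside G {v | v ∈ C} c B.first := by
  intro hreach
  obtain ⟨M₁, M₂, hgap⟩ := List.append_of_mem hc
  have hle := hB
    { B with
      gap := M₁
      rest := c :: (M₂ ++ B.rest)
      finish := c
      coe_eq := by simp [← B.coe_eq, hgap]
      head?_rest := rfl
      getLast?_rest := by simp [List.getLast?_cons, List.getLast?_append, B.getLast?_rest]
      reaches := hreach }
  simp [hgap] at hle

lemma not_reachesOutside_finish (hB : B.IsShortest) (hc : c ∈ B.gap) {x : V} (hcx : G c x) :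
    ¬ ReachesOutside G {v | v ∈ C} B.finish x := by
  intro hreach
  obtain ⟨M₁, M₂, hgap⟩ := List.append_of_mem hc
  have hle := hB
    { B with
      gap := M₂
      rest := B.rest ++ (M₁ ++ [c])
      start := c
      first := x
      coe_eq := by
        simpa [← B.coe_eq, hgap] using cycle_coe_append_comm (M₂ ++ B.rest) (M₁ ++ [c])
      head?_rest := by simp [List.head?_append, B.head?_rest]
      getLast?_rest := by simp
      rel_first := hcx
      reaches := hreach }
  simp only [hgap, List.length_append, List.length_cons] at hle
  omega

lemma not_rel_first_gap (hB : B.IsShortest) (hc : c ∈ B.gap) :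
    ¬ G B.first c ∧ ¬ G c B.first :=
  ⟨fun h => hB.not_reachesOutside_gap hc (.edge B.first_notMem h),
    fun h => hB.not_reachesOutside_finish hc h B.reaches⟩

lemma not_rel_rel_first_gap (hB : B.IsShortest) (hc : c ∈ B.gap) {z : V} (hz : z ∉ C) :
    ¬ (G B.first z ∧ G z c) ∧ ¬ (G c z ∧ G z B.first) :=
  ⟨fun h => hB.not_reachesOutside_gap hc (.step B.first_notMem h.1 (.edge hz h.2)),
    fun h => hB.not_reachesOutside_finish hc h.1 (.step hz h.2 B.reaches)⟩

end IsShortest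

end Bypass

lemma IsDipath.exists_maximal_insertion [Finite V] {Q : List V} {a b : V} (hQ : IsDipath G b a Q)
    (M : List V) :
    ∃ R, IsDipath G b a R ∧ Q ⊆ R ∧ R ⊆ M ++ Q ∧ ∀ w ∈ M, w ∉ R → InsertionFree G w R := by
  classical
  have := Fintype.ofFinite V
  have hnodup : {R : List V | R.Nodup}.Finite :=
    Set.finite_coe_iff.1 (Finite.of_fintype {R : List V // R.Nodup})
  have hfin : {R | IsDipath G b a R ∧ Q ⊆ R ∧ R ⊆ M ++ Q}.Finite :=
    hnodup.subset fun _ h => h.1.nodup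
  obtain ⟨R, ⟨hR, hQR, hRM⟩, hmax⟩ := Set.exists_max_image _ List.length hfin
    ⟨Q, hQ, List.Subset.refl _, List.subset_append_right _ _⟩
  refine ⟨R, hR, hQR, hRM, fun w hw hwR => ?_⟩
  rw [InsertionFree, List.isChain_iff_forall_rel_of_append_cons_cons]
  rintro u v R₁ R₂ rfl ⟨huw, hwv⟩
  have hmem (x : V) : x ∈ R₁ ++ u :: w :: v :: R₂ ↔ x = w ∨ x ∈ R₁ ++ u :: v :: R₂ := by
    simp only [List.mem_append, List.mem_cons]
    tauto
  have hle := hmax (R₁ ++ u :: w :: v :: R₂)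
    ⟨hR.insert huw hwv hwR, fun x hx => (hmem x).2 (.inr (hQR hx)),
      fun x hx => ((hmem x).1 hx).elim (· ▸ List.mem_append_left _ hw) (@hRM x)⟩
  simp at hle

lemma Bypass.exists_isDipath_insertionFree [Finite V] {C : Cycle V} (hC : IsLongestDicycle G C)
    (B : Bypass G C) :
    ∃ R, IsDipath G B.finish B.start R ∧ B.rest ⊆ R ∧ R ⊆ B.gap ++ B.rest ∧
      ∃ w ∈ B.gap, w ∉ R ∧ InsertionFree G w R := by
  have hrest := B.isDipath_rest hC.toIsDicycle
  obtain ⟨R, hR, hrestR, hRC, hins⟩ := hrest.exists_maximal_insertion B.gap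
  refine ⟨R, hR, hrestR, hRC, ?_⟩
  by_contra! hno
  have hgapR : B.gap ⊆ R := fun w hw => by_contra fun hwR => hno w hw hwR (hins w hw hwR)
  obtain ⟨C', hC', hlt⟩ := hR.exists_isDicycle_length_lt B.rel_first
    (B.reaches.mono fun v hv => B.mem_iff.2 (hRC hv))
  have hlen : C.length ≤ R.length := by
    rw [← B.coe_eq]
    exact ((B.nodup hC.toIsDicycle).subperm (List.append_subset.2 ⟨hgapR, hrestR⟩)).length_le
  exact (hlen.trans_lt hlt).not_ge (hC.length_le C' hC')

section Degrees

open Classical in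
/-- The number of edges between `x` and `v`, in either direction. -/
noncomputable def edgeCount (G : V → V → Prop) (x v : V) : ℕ :=
  (if G x v then 1 else 0) + (if G v x then 1 else 0)

lemma edgeCount_le_two (x v : V) : edgeCount G x v ≤ 2 := by
  unfold edgeCount
  split_ifs <;> omega

lemma edgeCount_eq_zero {x v : V} (hxv : ¬ G x v) (hvx : ¬ G v x) : edgeCount G x v = 0 := by
  simp [edgeCount, hxv, hvx]

lemma edgeCount_self [Std.Irrefl G] (x : V) : edgeCount G x x = 0 :=
  edgeCount_eq_zero (irrefl x) (irrefl x)

lemma edgeCount_add_edgeCount_le_two {x y z : V} (hxzy : ¬ (G x z ∧ G z y))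
    (hyzx : ¬ (G y z ∧ G z x)) : edgeCount G x z + edgeCount G y z ≤ 2 := by
  unfold edgeCount
  split_ifs <;> first | omega | tauto

lemma totalDeg_eq_sum [Fintype V] (x : V) : totalDeg G x = ∑ v, edgeCount G x v := by
  classical
  simp only [totalDeg, outDeg, inDeg, edgeCount, Finset.sum_add_distrib, Nat.card_eq_fintype_card,
    Fintype.card_subtype, Finset.sum_boole, Nat.cast_id]

open Classical in
/-- The extra term accounts for the edge from `w` to the first vertex of the path, which is not
paired with an edge into `w`. -/
lemma InsertionFree.sum_map_edgeCount_cons_le {w : V} : ∀ {a : V} {P : List V},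
    InsertionFree G w (a :: P) →
      ((a :: P).map (edgeCount G w)).sum ≤ (a :: P).length + if G w a then 1 else 0
  | a, [], _ => by
    simp only [edgeCount, List.map_cons, List.map_nil, List.sum_cons, List.sum_nil,
      List.length_cons, List.length_nil]
    split_ifs <;> omega
  | a, b :: P, h => by
    obtain ⟨hab, hP⟩ := List.isChain_cons_cons.1 h
    have ih := InsertionFree.sum_map_edgeCount_cons_le hP
    have hpair : (if G a w then 1 else 0) + (if G w b then 1 else 0) ≤ 1 := by
      split_ifs <;> first | omega | tauto
    rw [List.map_cons, List.sum_cons, List.length_cons, edgeCount]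
    omega

lemma InsertionFree.sum_edgeCount_le [DecidableEq V] {w : V} {P : List V}
    (h : InsertionFree G w P) (hP : P.Nodup) :
    ∑ v ∈ P.toFinset, edgeCount G w v ≤ P.length + 1 := by
  rw [List.sum_toFinset _ hP]
  cases P with
  | nil => simp
  | cons a P =>
    refine h.sum_map_edgeCount_cons_le.trans ?_
    split_ifs <;> omega

lemma InsertionFree.sum_edgeCount_append_le [DecidableEq V] {y : V} {M Q : List V}
    (h : InsertionFree G y Q) (hMQ : (M ++ Q).Nodup) (hM : ∀ c ∈ M, ¬ G y c ∧ ¬ G c y) :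
    ∑ v ∈ (M ++ Q).toFinset, edgeCount G y v ≤ Q.length + 1 := by
  have hQsub : Q.toFinset ⊆ (M ++ Q).toFinset := by
    simp [List.toFinset_append, Finset.subset_union_right]
  rw [← Finset.sum_subset hQsub]
  · exact h.sum_edgeCount_le hMQ.of_append_right
  · intro v hv hvQ
    have hvM : v ∈ M := by simp_all
    exact edgeCount_eq_zero (hM v hvM).1 (hM v hvM).2

lemma InsertionFree.sum_edgeCount_add_length_le [Std.Irrefl G] {w : V} {R : List V}
    (h : InsertionFree G w R) (hR : R.Nodup) {S : Finset V} (hRS : ∀ v ∈ R, v ∈ S) (hwS : w ∈ S)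
    (hwR : w ∉ R) : ∑ v ∈ S, edgeCount G w v + R.length + 1 ≤ 2 * S.card := by
  classical
  have hsub : R.toFinset ⊆ S.erase w := fun v hv =>
    have hvR := List.mem_toFinset.1 hv
    Finset.mem_erase.2 ⟨ne_of_mem_of_not_mem hvR hwR, hRS v hvR⟩
  have hsplit : ∑ v ∈ S, edgeCount G w v =
      ∑ v ∈ S.erase w \ R.toFinset, edgeCount G w v + ∑ v ∈ R.toFinset, edgeCount G w v := by
    rw [Finset.sum_sdiff hsub, Finset.sum_erase _ (edgeCount_self w)]
  have hoff : ∑ v ∈ S.erase w \ R.toFinset, edgeCount G w v ≤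
      (S.erase w \ R.toFinset).card * 2 :=
    Finset.sum_le_card_nsmul _ _ 2 fun v _ => edgeCount_le_two w v
  have hon := h.sum_edgeCount_le hR
  have hcard := Finset.card_sdiff_add_card_eq_card hsub
  have hcard_erase := Finset.card_erase_add_one hwS
  rw [List.toFinset_card_of_nodup hR] at hcard
  omega

lemma sum_edgeCount_add_edgeCount_add_two_le [Std.Irrefl G] {T : Finset V} {y w : V} (hy : y ∈ T)
    (hyw : ¬ G y w) (hwy : ¬ G w y)
    (hpath : ∀ z ∈ T, ¬ (G y z ∧ G z w) ∧ ¬ (G w z ∧ G z y)) :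
    ∑ z ∈ T, (edgeCount G y z + edgeCount G w z) + 2 ≤ 2 * T.card := by
  classical
  have hy0 : edgeCount G y y + edgeCount G w y = 0 := by
    rw [edgeCount_self, edgeCount_eq_zero hwy hyw]
  have hle : ∑ z ∈ T.erase y, (edgeCount G y z + edgeCount G w z) ≤ (T.erase y).card * 2 :=
    Finset.sum_le_card_nsmul _ _ 2 fun z hz =>
      have hz := hpath z (Finset.mem_of_mem_erase hz)
      edgeCount_add_edgeCount_le_two hz.1 hz.2
  rw [Finset.sum_erase (a := y) _ hy0] at hle
  have hcard := Finset.card_erase_add_one hy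
  omega

end Degrees

lemma Bypass.IsShortest.totalDeg_add_totalDeg_le [Fintype V] [Std.Irrefl G] {C : Cycle V}
    (hC : IsLongestDicycle G C) {B : Bypass G C} (hB : B.IsShortest) {R : List V}
    (hR : R.Nodup) (hrest : B.rest ⊆ R) (hRC : R ⊆ B.gap ++ B.rest) {w : V} (hw : w ∈ B.gap)
    (hwR : w ∉ R) (hins : InsertionFree G w R) :
    totalDeg G B.first + totalDeg G w + 2 ≤ 2 * Fintype.card V := by
  classical
  have hnodup := B.nodup hC.toIsDicycle
  have hfirst : B.first ∉ B.gap ++ B.rest := mt B.mem_iff.2 B.first_notMem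
  have hinsFirst : InsertionFree G B.first B.rest :=
    IsLongestDicycle.insertionFree (by rwa [B.coe_eq]) hfirst
  obtain ⟨hfw, hwf⟩ := hB.not_rel_first_gap hw
  set S := (B.gap ++ B.rest).toFinset with hS
  have hfirstS : ∑ v ∈ S, edgeCount G B.first v ≤ B.rest.length + 1 :=
    hinsFirst.sum_edgeCount_append_le hnodup fun c hc => hB.not_rel_first_gap hc
  have hwS : ∑ v ∈ S, edgeCount G w v + R.length + 1 ≤ 2 * S.card :=
    hins.sum_edgeCount_add_length_le hR (fun v hv => List.mem_toFinset.2 (hRC hv))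
      (by simp [hS, hw]) hwR
  have hcompl : ∑ z ∈ Sᶜ, (edgeCount G B.first z + edgeCount G w z) + 2 ≤ 2 * Sᶜ.card :=
    sum_edgeCount_add_edgeCount_add_two_le (by simpa [hS] using hfirst) hfw hwf fun z hz =>
      hB.not_rel_rel_first_gap hw (mt B.mem_iff.1 (by simpa [hS] using hz))
  have hlen : B.rest.length ≤ R.length := (hnodup.of_append_right.subperm hrest).length_le
  have hcard := Finset.card_add_card_compl S
  rw [totalDeg_eq_sum, totalDeg_eq_sum, ← Finset.sum_add_distrib, ← Finset.sum_add_sum_compl S,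
    Finset.sum_add_distrib]
  omega

lemma IsLongestDicycle.exists_nonadjacent_totalDeg_le [Fintype V] [Nontrivial V] [Std.Irrefl G]
    (hsc : StronglyConnected G) {C : Cycle V} (hC : IsLongestDicycle G C) {z : V} (hz : z ∉ C) :
    ∃ x y, x ≠ y ∧ ¬ G x y ∧ ¬ G y x ∧
      totalDeg G x + totalDeg G y + 2 ≤ 2 * Fintype.card V := by
  obtain ⟨v, hv⟩ := hC.exists_mem hsc
  have := nonempty_bypass hsc hv hz
  obtain ⟨B, hB⟩ : ∃ B : Bypass G C, B.IsShortest :=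
    ⟨_, fun B' => Function.argmin_le (fun B : Bypass G C => B.gap.length) B'⟩
  obtain ⟨R, hR, hrest, hRC, w, hw, hwR, hins⟩ := B.exists_isDipath_insertionFree hC
  have hne : B.first ≠ w := fun h =>
    B.first_notMem (h ▸ B.mem_iff.2 (List.mem_append_left _ hw))
  obtain ⟨hfw, hwf⟩ := hB.not_rel_first_gap hw
  exact ⟨B.first, w, hne, hfw, hwf,
    hB.totalDeg_add_totalDeg_le hC hR.nodup hrest hRC hw hwR hins⟩

end Meyniel

/-- Meyniel's theorem: a strongly connected digraph on n ≥ 2 vertices in which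
d(x) + d(y) ≥ 2n − 1 for every pair of distinct non-adjacent vertices x, y
has a Hamilton cycle. -/
theorem meyniel (V : Type) [Fintype V] (G : V → V → Prop)
    (hirr : Irreflexive G)
    (hn : 2 ≤ Fintype.card V)
    (hsc : StronglyConnected G)
    (hdeg : ∀ x y : V, x ≠ y → ¬ G x y → ¬ G y x →
      2 * Fintype.card V - 1 ≤ totalDeg G x + totalDeg G y) :
    ∃ f : ZMod (Fintype.card V) → V, IsHamCycle G f := by
  have : Std.Irrefl G := ⟨hirr⟩
  have : Nontrivial V := Fintype.one_lt_card_iff_nontrivial.1 hn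
  obtain ⟨C, hC⟩ := Meyniel.exists_isLongestDicycle G
  refine hC.exists_isHamCycle ?_
  by_contra! hz
  obtain ⟨z, hz⟩ := hz
  obtain ⟨x, y, hxy, hGxy, hGyx, hle⟩ := hC.exists_nonadjacent_totalDeg_le hsc hz
  have hge := hdeg x y hxy hGxy hGyx
  omega
end
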